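/- arXiv:1702.05242 — 7 statements merged into one kernel-verified Lean document; each statement's English description precedes it below -/
import Mathlib

section
/- Let p be a prime, let P be a finite p-group, and let G be a finite group of automorphisms of P (i.e. G is a subgroup of Aut(P)) whose order is not divisible by p. If p ≥ (|G| - 1)/2 (equivalently |G| ≤ 2p + 1), then G has a regular orbit on P, i.e. there exists x ∈ P whose stabilizer in G is trivial. -/
namespace RegOrb

/-- fixed subgroup -/
def C {P : Type*} [Group P] (g : MulAut P) : Subgroup P :=
  MonoidHom.eqLocus g.toMonoidHom (MonoidHom.id P)

theorem mem_C {P : Type*} [Group P] (g : MulAut P) (x : P) : x ∈ C g ↔ g x = x := Iff.rfl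

theorem sub_of_index {P : Type*} [Group P] {p : ℕ} (hp : p.Prime) {H K : Subgroup P}
    (hH : H.index = p) (hHK : H ≤ K) (hn : ¬ K ≤ H) : K = ⊤ := by
  have h := Subgroup.relIndex_mul_index hHK
  rw [hH] at h
  have hd : K.index ∣ p := ⟨_, by rw [mul_comm]; exact h.symm⟩
  rcases (Nat.dvd_prime hp).1 hd with h1 | h1
  · exact Subgroup.index_eq_one.1 h1
  · exfalso
    rw [h1] at h
    have : H.relIndex K = 1 := by
      have := hp.pos
      nlinarith
    exact hn (Subgroup.relIndex_eq_one.1 this)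

theorem unip {P : Type*} [Group P] [Finite P] {p : ℕ} (hp : p.Prime) (hP : IsPGroup p P)
    (g : MulAut P) (hg : ¬ p ∣ orderOf g) (D : Subgroup P) (h1 : ∀ d ∈ D, g d = d)
    (h2 : ∀ x, x⁻¹ * g x ∈ D) : g = 1 := by
  have := Fact.mk hp
  obtain ⟨n, hn⟩ := IsPGroup.iff_card.1 hP
  have key : ∀ (k : ℕ) (x : P), (g ^ k) x = x * (x⁻¹ * g x) ^ k := by
    intro k x
    induction k with
    | zero => simp
    | succ k ih =>
      rw [pow_succ', MulAut.mul_apply, ih, map_mul, map_pow, h1 _ (h2 x), pow_succ']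
      simp only [mul_assoc, mul_inv_cancel_left]
  have h : g ^ (p ^ n) = 1 := by
    ext x
    rw [key, ← hn, pow_card_eq_one']
    simp
  have h3 := orderOf_dvd_of_pow_eq_one h
  have h4 : Nat.Coprime (orderOf g) (p ^ n) :=
    Nat.Coprime.pow_right _ ((Nat.Prime.coprime_iff_not_dvd hp).2 hg).symm
  have := Nat.Coprime.eq_one_of_dvd h4 h3
  exact orderOf_eq_one_iff.1 this

theorem normal_of {P : Type*} [Group P] [Finite P] {p : ℕ} (hp : p.Prime) (hP : IsPGroup p P)
    {H : Subgroup P} (hH : H.index = p) : H.Normal := by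
  have := Fact.mk hp
  obtain ⟨n, hn⟩ := IsPGroup.iff_card.1 hP
  apply Subgroup.normal_of_index_eq_minFac_card
  rw [hH, hn]
  rcases Nat.eq_zero_or_pos n with h | h
  · exfalso
    subst h
    have := H.index_dvd_card
    rw [hn, hH] at this
    exact hp.one_lt.ne' (by simpa using this)
  · rw [Nat.pow_minFac h.ne', hp.minFac_eq]

theorem inverts {P : Type*} [Group P] [Finite P] {p : ℕ} (hp : p.Prime) (hP : IsPGroup p P)
    (t : MulAut P) (hg : ¬ p ∣ orderOf t) (ht : t ≠ 1) (ht2 : t * t = 1)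
    (hi : (C t).index = p) (x : P) : t x * x ∈ C t := by
  by_contra hy
  have := Fact.mk hp
  have := normal_of hp hP hi
  have hc : Nat.card (P ⧸ C t) = p := hi
  have hcomm : ∀ a b : P ⧸ C t, a * b = b * a := by
    have := isCyclic_of_prime_card hc
    exact fun a b => IsMulCommutative.is_comm.comm a b
  have htt : ∀ x, t (t x) = x := fun x => by
    rw [← MulAut.mul_apply, ht2]; rfl
  let K : Subgroup P := MonoidHom.eqLocus (QuotientGroup.mk' (C t))
    ((QuotientGroup.mk' (C t)).comp t.toMonoidHom)
  have hK : ∀ z, z ∈ K ↔ z⁻¹ * t z ∈ C t := fun z => by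
    rw [← QuotientGroup.eq]; exact Iff.rfl
  have hle : C t ≤ K := fun z hz => by
    rw [hK, (mem_C t z).1 hz]; simp [one_mem]
  have hyK : t x * x ∈ K := by
    rw [hK, ← QuotientGroup.eq, map_mul, htt, QuotientGroup.mk_mul, QuotientGroup.mk_mul]
    exact hcomm _ _
  have htop := sub_of_index hp hi hle (fun h => hy (h hyK))
  apply ht
  refine unip hp hP t hg (C t) (fun d hd => hd) (fun z => ?_)
  rw [← hK, htop]; trivial

theorem triv_quot {P : Type*} [Group P] [Finite P] {p : ℕ} (hp : p.Prime) (hP : IsPGroup p P)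
    (t t' : MulAut P) (ht2 : t * t = 1) (ht2' : t' * t' = 1)
    (D : Subgroup P) (hD : D.index = p) (hmem : ∀ d, d ∈ D ↔ t d = t' d)
    (hn : ¬ C t ≤ D) (x : P) : x⁻¹ * t x ∈ D := by
  have := normal_of hp hP hD
  have htt : ∀ x, t (t x) = x := fun x => by
    rw [← MulAut.mul_apply, ht2]; rfl
  have htt' : ∀ x, t' (t' x) = x := fun x => by
    rw [← MulAut.mul_apply, ht2']; rfl
  let K : Subgroup P := MonoidHom.eqLocus (QuotientGroup.mk' D)
    ((QuotientGroup.mk' D).comp t.toMonoidHom)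
  have hK : ∀ z, z ∈ K ↔ z⁻¹ * t z ∈ D := fun z => by
    rw [← QuotientGroup.eq]; exact Iff.rfl
  have h1 : D ≤ K := fun d hd => by
    rw [hK]
    refine mul_mem (inv_mem hd) ?_
    rw [hmem, htt, (hmem d).1 hd, htt']
  have h2 : C t ≤ K := fun z hz => by
    rw [hK, (mem_C t z).1 hz]; simp [one_mem]
  have htop := sub_of_index hp hD h1 (fun h => hn (h2.trans h))
  rw [← hK, htop]; trivial

theorem prod_index {P : Type*} [Group P] [Finite P] {p : ℕ} (hp : p.Prime) (hP : IsPGroup p P)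
    (t t' : MulAut P) (hg : ¬ p ∣ orderOf t) (hg' : ¬ p ∣ orderOf t')
    (hgg : ¬ p ∣ orderOf (t * t')) (ht : t ≠ 1) (ht' : t' ≠ 1) (hne : t ≠ t')
    (ht2 : t * t = 1) (ht2' : t' * t' = 1)
    (hi : (C t).index = p) (hi' : (C t').index = p) : (C (t * t')).index ≠ p := by
  intro hD
  have htt : ∀ x, t (t x) = x := fun x => by
    rw [← MulAut.mul_apply, ht2]; rfl
  have htt' : ∀ x, t' (t' x) = x := fun x => by
    rw [← MulAut.mul_apply, ht2']; rfl
  have hmem : ∀ d, d ∈ C (t * t') ↔ t d = t' d := fun d => by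
    rw [mem_C, MulAut.mul_apply]
    constructor
    · intro h
      rw [← htt (t' d), h]
    · intro h
      rw [← h, htt]
  have hmem' : ∀ d, d ∈ C (t * t') ↔ t' d = t d := fun d => by rw [hmem, eq_comm]
  have hfin : t * t' = 1 → False := fun h => by
    apply hne
    rw [← mul_one t, ← ht2', ← mul_assoc, h, one_mul]
  have := normal_of hp hP hD
  have top_contra : ∀ H : Subgroup P, H.index = p → H ≠ ⊤ := by
    rintro H h rfl
    rw [Subgroup.index_top] at h
    exact hp.one_lt.ne h
  have eq_of_le : ∀ H K : Subgroup P, H.index = p → K.index = p → H ≤ K → H = K := by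
    intro H K h1 h2 h3
    by_contra h
    exact top_contra K h2 (sub_of_index hp h1 h3 (fun h4 => h (le_antisymm h3 h4)))
  have case1 : C t = C (t * t') → C t' = C (t * t') → False := by
    intro e e'
    apply hfin
    refine unip hp hP _ hgg (C (t * t')) (fun d hd => hd) (fun x => ?_)
    have a := inverts hp hP t hg ht ht2 hi (t' x)
    have b := inverts hp hP t' hg' ht' ht2' hi' x
    rw [e] at a
    rw [e'] at b
    rw [← QuotientGroup.eq]
    rw [← QuotientGroup.eq_one_iff] at a b
    rw [QuotientGroup.mk_mul] at a b
    rw [MulAut.mul_apply, mul_eq_one_iff_eq_inv.1 a, mul_eq_one_iff_inv_eq.1 b]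
  by_cases hl : C t ≤ C (t * t')
  · have e := eq_of_le _ _ hi hD hl
    refine case1 e (eq_of_le _ _ hD hi' (fun x hx => ?_)).symm
    have := (hmem x).1 hx
    rw [← e] at hx
    rw [mem_C, ← this, (mem_C t x).1 hx]
  by_cases hl' : C t' ≤ C (t * t')
  · have e := eq_of_le _ _ hi' hD hl'
    refine case1 (eq_of_le _ _ hD hi (fun x hx => ?_)).symm e
    have := (hmem x).1 hx
    rw [← e] at hx
    rw [mem_C, this, (mem_C t' x).1 hx]
  · apply hfin
    refine unip hp hP _ hgg (C (t * t')) (fun d hd => hd) (fun x => ?_)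
    have a := triv_quot hp hP t t' ht2 ht2' _ hD hmem hl (t' x)
    have b := triv_quot hp hP t' t ht2' ht2 _ hD hmem' hl' x
    have := mul_mem b a
    rw [MulAut.mul_apply]
    simpa [mul_assoc] using this

theorem index_bounds {P : Type*} [Group P] [Finite P] {p : ℕ} (hp : p.Prime)
    (hP : IsPGroup p P) (g : MulAut P) (hg : g ≠ 1) :
    p * Nat.card (C g) ≤ Nat.card P ∧
      ((C g).index ≠ p → p * p * Nat.card (C g) ≤ Nat.card P) := by
  have := Fact.mk hp
  obtain ⟨n, hn⟩ := IsPGroup.iff_card.1 hP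
  have hd := (C g).index_dvd_card
  rw [hn] at hd
  obtain ⟨k, -, hk⟩ := (Nat.dvd_prime_pow hp).1 hd
  have hm := (C g).card_mul_index
  have hk0 : k ≠ 0 := by
    rintro rfl
    rw [pow_zero, Subgroup.index_eq_one] at hk
    apply hg
    ext x
    have : x ∈ C g := by rw [hk]; trivial
    exact this
  rw [← hm, hk]
  constructor
  · rw [mul_comm]
    exact Nat.mul_le_mul_left _ (Nat.le_self_pow hk0 p)
  · intro h
    have hk1 : k ≠ 1 := by
      rintro rfl
      exact h (pow_one p)
    rw [mul_comm, ← pow_two]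
    exact Nat.mul_le_mul_left _ (Nat.pow_le_pow_right hp.pos (by omega))

open Finset in
theorem main {P : Type*} [Group P] [Finite P] {p : ℕ} (hp : p.Prime)
    (hP : IsPGroup p P) (G : Subgroup (MulAut P)) (hcop : ¬ p ∣ Nat.card G)
    (hle : Nat.card G ≤ 2 * p + 1) (hno : ∀ x : P, ∃ g : G, g ≠ 1 ∧ g.1 x = x) : False := by
  classical
  have : Fintype P := Fintype.ofFinite P
  have : Fintype G := Fintype.ofFinite G
  have hord : ∀ g : G, ¬ p ∣ orderOf g.1 := fun g h => hcop (h.trans (by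
    rw [Subgroup.orderOf_coe]; exact orderOf_dvd_natCard g))
  have hcard : Nat.card G = Fintype.card G := Nat.card_eq_fintype_card
  set A : Finset G := univ.erase 1 with hA
  have hAc : #A + 1 = Nat.card G := by
    rw [hA, card_erase_add_one (mem_univ _), hcard, card_univ]
  let f : G → ℕ := fun g => Nat.card (C g.1)
  let W : G → ℕ := fun g => if g * g = 1 then 2 else 1
  have hW1 : ∀ g, 1 ≤ W g := fun g => by dsimp only [W]; split_ifs <;> omega
  have hW2 : ∀ g, W g ≤ 2 := fun g => by dsimp only [W]; split_ifs <;> omega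
  set N := Nat.card P with hN
  have hN0 : 0 < N := Nat.card_pos
  let s : P → ℕ := fun x => ∑ g ∈ A, if g.1 x = x then W g else 0
  have hs : ∀ x, 2 ≤ s x := by
    intro x
    obtain ⟨g, hg1, hgx⟩ := hno x
    have hgA : g ∈ A := by simp [hA, hg1]
    by_cases h2 : g * g = 1
    · have := single_le_sum (f := fun g : G => if g.1 x = x then W g else 0)
        (fun i _ => Nat.zero_le _) hgA
      simp only [hgx, if_true] at this
      have hw : W g = 2 := by simp only [W, h2, if_true]
      rw [hw] at this
      exact this
    · have hne : g ≠ g⁻¹ := fun h => h2 (by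
        nth_rewrite 2 [h]; exact mul_inv_cancel g)
      have hgA' : g⁻¹ ∈ A := by simp [hA, hg1]
      have hgx' : (g⁻¹).1 x = x := by
        have : (g⁻¹).1 (g.1 x) = x := by
          rw [← MulAut.mul_apply, ← Subgroup.coe_mul, inv_mul_cancel]; rfl
        rwa [hgx] at this
      have hsub : ({g, g⁻¹} : Finset G) ⊆ A := by
        intro z hz
        rcases mem_insert.1 hz with rfl | hz
        · exact hgA
        · rw [mem_singleton.1 hz]; exact hgA'
      have := sum_le_sum_of_subset (f := fun g : G => if g.1 x = x then W g else 0) hsub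
      rw [sum_pair hne, if_pos hgx, if_pos hgx'] at this
      have a := hW1 g
      have b := hW1 g⁻¹
      exact le_trans (by omega) this
  have hdc : ∑ x, s x = ∑ g ∈ A, W g * f g := by
    dsimp only [s]
    rw [sum_comm]
    refine sum_congr rfl fun g _ => ?_
    rw [← sum_filter, sum_const, smul_eq_mul, mul_comm]
    congr 1
    dsimp only [f]
    rw [Nat.card_eq_fintype_card, Fintype.card_subtype]
    rfl
  have hN' : N = #(univ : Finset P) := by rw [hN, Nat.card_eq_fintype_card, card_univ]
  have hE1 : 2 * N ≤ ∑ g ∈ A, W g * f g := by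
    rw [← hdc, hN', mul_comm, ← smul_eq_mul]
    exact card_nsmul_le_sum _ _ _ (fun x _ => hs x)
  have hE2 : 2 * N + Nat.card G ≤ (∑ g ∈ A, W g * f g) + 3 := by
    rw [← hdc, ← add_sum_erase univ s (mem_univ 1)]
    have h1 : #A ≤ s 1 := by
      dsimp only [s]
      rw [card_eq_sum_ones]
      refine sum_le_sum fun g _ => ?_
      rw [if_pos (map_one _)]
      exact hW1 g
    have h2 : #(univ.erase (1 : P)) • 2 ≤ ∑ x ∈ univ.erase (1 : P), s x :=
      card_nsmul_le_sum _ _ _ (fun x _ => hs x)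
    have h3 := card_erase_add_one (mem_univ (1 : P))
    rw [smul_eq_mul] at h2
    omega
  have hb : ∀ g ∈ A, p * f g ≤ N ∧ ((C g.1).index ≠ p → p * p * f g ≤ N) := by
    intro g hg
    refine index_bounds hp hP g.1 (fun h => ?_)
    exact (mem_erase.1 hg).1 (Subtype.ext h)
  have hp2 := hp.two_le
  set T : Finset G := A.filter (fun g => g * g = 1 ∧ (C g.1).index = p) with hT
  have hb0 : ∀ g ∈ A, g ∉ T → p * (W g * f g) ≤ N := by
    intro g hg hgT
    obtain ⟨h1, h2⟩ := hb g hg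
    by_cases h : g * g = 1
    · have hi : (C g.1).index ≠ p := fun hi => hgT (mem_filter.2 ⟨hg, h, hi⟩)
      refine le_trans ?_ (h2 hi)
      rw [mul_assoc]
      exact Nat.mul_le_mul_left _ (Nat.mul_le_mul_right _ ((hW2 g).trans hp2))
    · have : W g = 1 := by simp only [W, h, if_false]
      rw [this, one_mul]
      exact h1
  rcases T.eq_empty_or_nonempty with hTe | ⟨t, htT⟩
  · have h1 : p * ∑ g ∈ A, W g * f g ≤ #A * N := by
      rw [mul_sum, ← smul_eq_mul]
      refine sum_le_card_nsmul _ _ _ fun g hg => hb0 g hg ?_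
      rw [hTe]; simp
    have h2 : 2 * p ≤ #A := by
      have := Nat.mul_le_mul_left p hE1
      by_contra hlt
      push Not at hlt
      nlinarith
    have h3 : #A = 2 * p := by omega
    have h4 : p * ∑ g ∈ A, W g * f g ≤ p * (2 * N) := by
      rw [h3] at h1; linarith
    have := Nat.le_of_mul_le_mul_left h4 hp.pos
    omega
  · obtain ⟨htA, ht2, hti⟩ := mem_filter.1 htT
    have ht1 : t ≠ 1 := (mem_erase.1 htA).1
    have heven : 2 ∣ Nat.card G := by
      rw [← orderOf_eq_prime (p := 2) (by rw [pow_two]; exact ht2) ht1]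
      exact orderOf_dvd_natCard t
    obtain ⟨m, hm⟩ := heven
    have hmp : m ≠ p := by
      rintro rfl
      exact hcop ⟨2, by rw [hm, mul_comm]⟩
    let S : Finset G := (T.erase t).image (fun g => t * g)
    have hSc : #S + 1 = #T := by
      rw [card_image_of_injective _ (mul_right_injective t), card_erase_add_one htT]
    have hSi : ∀ g ∈ S, g ∈ A ∧ (C g.1).index ≠ p := by
      intro g hg
      obtain ⟨u, hu, rfl⟩ := mem_image.1 hg
      obtain ⟨hut, huT⟩ := mem_erase.1 hu
      obtain ⟨huA, hu2, hui⟩ := mem_filter.1 huT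
      have hu1 : u ≠ 1 := (mem_erase.1 huA).1
      constructor
      · refine mem_erase.2 ⟨fun h => hut ?_, mem_univ _⟩
        exact mul_left_cancel (h.trans ht2.symm)
      · exact prod_index hp hP t.1 u.1 (hord t) (hord u) (hord (t * u))
          (fun h => ht1 (Subtype.ext h)) (fun h => hu1 (Subtype.ext h))
          (fun h => hut (Subtype.ext h).symm)
          (congrArg Subtype.val ht2) (congrArg Subtype.val hu2) hti hui
    have hdisj : Disjoint T S := by
      rw [disjoint_left]
      intro g hgT hgS
      exact (hSi g hgS).2 (mem_filter.1 hgT).2.2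
    have hTS : T ∪ S ⊆ A := union_subset (filter_subset _ _) (fun g hg => (hSi g hg).1)
    have hc1 : #(A \ (T ∪ S)) + (#T + #S) = #A := by
      rw [← card_union_of_disjoint hdisj]
      exact card_sdiff_add_card_eq_card hTS
    have hsum := sum_sdiff (f := fun g => W g * f g) hTS
    rw [sum_union hdisj] at hsum
    have b1 : p * ∑ g ∈ T, W g * f g ≤ #T * (2 * N) := by
      rw [mul_sum, ← smul_eq_mul]
      refine sum_le_card_nsmul _ _ _ fun g hg => ?_
      have h1 := (hb g (mem_filter.1 hg).1).1
      have h2 := hW2 g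
      calc p * (W g * f g) = W g * (p * f g) := by ring
        _ ≤ 2 * N := Nat.mul_le_mul h2 h1
    have b2 : p * p * ∑ g ∈ S, W g * f g ≤ #S * (2 * N) := by
      rw [mul_sum, ← smul_eq_mul]
      refine sum_le_card_nsmul _ _ _ fun g hg => ?_
      have h1 := (hb g (hSi g hg).1).2 (hSi g hg).2
      have h2 := hW2 g
      calc p * p * (W g * f g) = W g * (p * p * f g) := by ring
        _ ≤ 2 * N := Nat.mul_le_mul h2 h1
    have b3 : p * ∑ g ∈ A \ (T ∪ S), W g * f g ≤ #(A \ (T ∪ S)) * N := by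
      rw [mul_sum, ← smul_eq_mul]
      refine sum_le_card_nsmul _ _ _ fun g hg => ?_
      obtain ⟨h1, h2⟩ := mem_sdiff.1 hg
      exact hb0 g h1 (fun h => h2 (mem_union_left _ h))
    rw [← hsum] at hE1
    generalize (∑ g ∈ T, W g * f g) = x at *
    generalize (∑ g ∈ S, W g * f g) = y at *
    generalize (∑ g ∈ A \ (T ∪ S), W g * f g) = z at *
    generalize #(A \ (T ∪ S)) = c at *
    generalize #T = r at *
    generalize #S = q at *
    have e1 : p * p * (2 * N) ≤ p * (c * N + r * (2 * N)) + q * (2 * N) := by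
      calc p * p * (2 * N) ≤ p * p * (z + (x + y)) := Nat.mul_le_mul_left _ hE1
        _ = p * (p * z + p * x) + p * p * y := by ring
        _ ≤ _ := Nat.add_le_add (Nat.mul_le_mul_left _ (Nat.add_le_add b3 b1)) b2
    have e2 : p * p * 2 ≤ p * (c + r * 2) + q * 2 := by
      refine Nat.le_of_mul_le_mul_right ?_ hN0
      calc _ = p * p * (2 * N) := by ring
        _ ≤ _ := e1
        _ = _ := by ring
    have e3 : c + r * 2 + 2 ≤ 2 * p := by omega
    have e4 : q + 1 < p := by omega
    have e5 := Nat.mul_le_mul_left p e3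
    nlinarith

end RegOrb

/-- A finite coprime automorphism group `G ≤ Aut(P)` of a finite `p`-group `P` with
`|G| ≤ 2p + 1` (equivalently `p ≥ (|G| - 1)/2`) has a regular orbit on `P`:
there is `x ∈ P` whose stabilizer in `G` is trivial. -/
theorem regular_orbit_of_le_two_mul_add_one
    (p : ℕ) (hp : p.Prime) (P : Type*) [Group P] [Finite P] (hP : IsPGroup p P)
    (G : Subgroup (MulAut P)) (hcop : ¬ p ∣ Nat.card G)
    (hle : Nat.card G ≤ 2 * p + 1) :
    ∃ x : P, ∀ g ∈ G, g x = x → g = 1 := by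
  by_contra hcon
  push Not at hcon
  refine RegOrb.main hp hP G hcop hle (fun x => ?_)
  obtain ⟨g, hg, hx, h1⟩ := hcon x
  exact ⟨⟨g, hg⟩, fun h => h1 (congrArg Subtype.val h), hx⟩
end

section
/- Let p be a prime, let P be a finite p-group, and let G ≤ Aut(P) be a group of automorphisms with p ∤ |G| and |G| ≤ 2p + 9. Then one of the following holds: (i) G has a regular orbit on P; (ii) G is isomorphic to the dihedral group D_{2p+2} of order 2p + 2; (iii) p = 5 and G is isomorphic to the central product D_8 ∗ C_4, i.e. the nonabelian group of order 16 with cyclic center of order 4 and exponent 4. -/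
namespace RegOrb
section
open Classical
open Module Finset

variable {p : ℕ} [hp : Fact p.Prime] {V : Type*} [AddCommGroup V] [Module (ZMod p) V]
  {G : Type*} [Group G] (ρ : G →* (V →ₗ[ZMod p] V))

lemma rho_mul (g h : G) (v : V) : ρ (g * h) v = ρ g (ρ h v) := by
  rw [map_mul]; rfl

lemma rho_one (v : V) : ρ 1 v = v := by
  rw [map_one]; rfl

lemma rho_inv_rho (g : G) (v : V) : ρ g⁻¹ (ρ g v) = v := by
  rw [← rho_mul, inv_mul_cancel, rho_one]

lemma rho_rho_inv (g : G) (v : V) : ρ g (ρ g⁻¹ v) = v := by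
  rw [← rho_mul, mul_inv_cancel, rho_one]

lemma eq_one_of_rho {ρ : G →* (V →ₗ[ZMod p] V)} (hinj : Function.Injective ρ) {g : G}
    (h : ∀ v, ρ g v = v) : g = 1 := by
  apply hinj
  ext v
  rw [h, rho_one]

/-- coprime automorphisms are semisimple at the eigenvalue one -/
lemma semis [Finite G] (hc : ¬ p ∣ Nat.card G) (g : G) (u : V)
    (h : ρ g (ρ g u - u) = ρ g u - u) : ρ g u = u := by
  have key : ∀ j : ℕ, ρ (g ^ j) u = u + (j : ZMod p) • (ρ g u - u) := by
    intro j
    induction j with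
    | zero => simp
    | succ j ih =>
      rw [pow_succ', rho_mul, ih, map_add, map_smul, h]
      push_cast
      rw [add_smul, one_smul]
      abel
  have h1 := key (Nat.card G)
  rw [pow_card_eq_one', rho_one] at h1
  have h2 : ((Nat.card G : ℕ) : ZMod p) • (ρ g u - u) = 0 := by
    have := h1.symm
    simpa using this
  rcases smul_eq_zero.mp h2 with h3 | h3
  · exact absurd ((ZMod.natCast_eq_zero_iff _ _).mp h3) hc
  · exact sub_eq_zero.mp h3

lemma eq_one_of_sq [Finite G] {ρ : G →* (V →ₗ[ZMod p] V)} (hinj : Function.Injective ρ)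
    (hc : ¬ p ∣ Nat.card G) (g : G)
    (h : ∀ u, ρ g (ρ g u - u) = ρ g u - u) : g = 1 :=
  eq_one_of_rho hinj fun v => semis ρ hc g v (h v)

/-- abelian groups have regular orbits -/
lemma abelian_reg [Finite G] {ρ : G →* (V →ₗ[ZMod p] V)} (hinj : Function.Injective ρ)
    (hc : ¬ p ∣ Nat.card G) (hab : ∀ a b : G, a * b = b * a) :
    ∃ v : V, ∀ g, ρ g v = v → g = 1 := by
  obtain ⟨v, hv⟩ : ∃ v : V, ∀ w : V, Set.ncard {g | ρ g v = v} ≤ Set.ncard {g | ρ g w = w} := by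
    obtain ⟨v, hv⟩ := WellFounded.has_min (measure (fun v : V => Set.ncard {g | ρ g v = v})).wf
      Set.univ ⟨0, trivial⟩
    exact ⟨v, fun w => not_lt.mp (hv.2 w trivial)⟩
  refine ⟨v, fun g hg => ?_⟩
  apply eq_one_of_rho hinj
  by_contra hne
  push Not at hne
  obtain ⟨u, hu⟩ := hne
  set w := ρ g u - u with hw
  have hw0 : w ≠ 0 := sub_ne_zero.mpr hu
  have hgw : ρ g w ≠ w := fun h => hu (semis ρ hc g u h)
  have hcomm : ∀ (h k : G) (x : V), ρ h (ρ k x) = ρ k (ρ h x) := by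
    intro h k x
    rw [← rho_mul, hab, rho_mul]
  have hsub : {h | ρ h (v + w) = v + w} ⊂ {h | ρ h v = v} := by
    have hle : ∀ h, ρ h (v + w) = v + w → ρ h v = v ∧ ρ h w = w := by
      intro h hh
      rw [map_add] at hh
      -- x = ρ h v - v is fixed by g and is in the range of g - 1
      have e1 : ρ h v - v = ρ g (u - ρ h u) - (u - ρ h u) := by
        have : ρ h v - v = w - ρ h w := by
          rw [sub_eq_sub_iff_add_eq_add, hh, add_comm]
        rw [this, hw, map_sub, map_sub, hcomm g h]
        abel
      have e2 : ρ g (ρ h v - v) = ρ h v - v := by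
        rw [map_sub, hcomm g h, hg]
      rw [e1] at e2
      have e3 := semis ρ hc g _ e2
      rw [e3, sub_self] at e1
      have e4 := sub_eq_zero.mp e1
      refine ⟨e4, ?_⟩
      rw [e4] at hh
      exact add_left_cancel hh
    refine ⟨fun h hh => (hle h hh).1, fun hh => ?_⟩
    have := hh (show g ∈ {h | ρ h v = v} from hg)
    exact hgw (hle g this).2
  exact absurd (hv (v + w)) (not_le.mpr (Set.ncard_lt_ncard hsub (Set.toFinite _)))

/-- fixed space -/
def Fx (g : G) : Submodule (ZMod p) V := LinearMap.ker (ρ g - 1)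

lemma mem_Fx {g : G} {v : V} : v ∈ Fx ρ g ↔ ρ g v = v := by
  simp [Fx, sub_eq_zero]

lemma Fx_inv (g : G) : Fx ρ g⁻¹ = Fx ρ g := by
  ext v
  rw [mem_Fx, mem_Fx]
  constructor
  · intro h
    have := rho_rho_inv ρ g v
    rwa [h] at this
  · intro h
    have := rho_inv_rho ρ g v
    rwa [h] at this

/-- reflections -/
def IsRefl (g : G) : Prop := g ≠ 1 ∧ finrank (ZMod p) V ≤ finrank (ZMod p) (Fx ρ g) + 1

lemma refl_form [Finite V] {g : G} (hg : IsRefl ρ g) :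
    ∃ (f : V →ₗ[ZMod p] ZMod p) (a : V), ∀ v, ρ g v = v + f v • a := by
  have h1 := LinearMap.finrank_range_add_finrank_ker (ρ g - 1)
  have h2 := hg.2
  unfold Fx at h2
  have h3 : finrank (ZMod p) (LinearMap.range (ρ g - 1)) ≤ 1 := by omega
  obtain ⟨a, ha⟩ := finrank_le_one_iff.mp h3
  by_cases ha0 : a = 0
  · refine ⟨0, 0, fun v => ?_⟩
    obtain ⟨c, hc⟩ := ha ⟨(ρ g - 1) v, LinearMap.mem_range_self _ _⟩
    rw [ha0, smul_zero] at hc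
    have := congrArg Subtype.val hc
    simp at this
    simp [← sub_eq_zero, ← this]
  · have ha' : (a : V) ≠ 0 := fun h => ha0 (Subtype.ext h)
    obtain ⟨φ, hφ⟩ := Module.Projective.exists_dual_ne_zero (ZMod p) ha'
    refine ⟨(φ a)⁻¹ • (φ.comp (ρ g - 1)), a, fun v => ?_⟩
    obtain ⟨c, hc⟩ := ha ⟨(ρ g - 1) v, LinearMap.mem_range_self _ _⟩
    have h4 := congrArg Subtype.val hc
    simp at h4
    have h5 : φ (ρ g v - v) = c * φ a := by rw [← h4]; simp
    have h6 : ρ g v = v + c • (a : V) := by rw [h4]; abel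
    rw [h6]
    congr 2
    simp only [LinearMap.smul_apply, LinearMap.comp_apply, LinearMap.sub_apply, Module.End.one_apply,
      smul_eq_mul, h5]
    field_simp

lemma card_Fx_refl [Finite V] {ρ : G →* (V →ₗ[ZMod p] V)} (hinj : Function.Injective ρ) {g : G}
    (hg : g ≠ 1) : Nat.card (Fx ρ g) * p ≤ Nat.card V := by
  have hne : Fx ρ g ≠ ⊤ := by
    intro h
    apply hg
    apply eq_one_of_rho hinj
    intro v
    rw [← mem_Fx, h]
    trivial
  have h1 := Submodule.finrank_lt (lt_top_iff_ne_top.mpr hne).ne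
  rw [Module.natCard_eq_pow_finrank (K := ZMod p), Module.natCard_eq_pow_finrank (K := ZMod p) (V := V),
    Nat.card_zmod, ← pow_succ]
  exact Nat.pow_le_pow_right hp.out.pos h1

lemma card_Fx_nonrefl [Finite V] {g : G} (hg : g ≠ 1) (hr : ¬ IsRefl ρ g) :
    Nat.card (Fx ρ g) * p ^ 2 ≤ Nat.card V := by
  have h1 : finrank (ZMod p) (Fx ρ g) + 2 ≤ finrank (ZMod p) V := by
    by_contra h
    exact hr ⟨hg, by omega⟩
  rw [Module.natCard_eq_pow_finrank (K := ZMod p), Module.natCard_eq_pow_finrank (K := ZMod p) (V := V),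
    Nat.card_zmod, ← pow_add]
  exact Nat.pow_le_pow_right hp.out.pos h1

end
end RegOrb


namespace RegOrb
section
open Classical
open Module Finset

variable {p : ℕ} [hp : Fact p.Prime] {V : Type*} [AddCommGroup V] [Module (ZMod p) V]
  {G : Type*} [Group G] (ρ : G →* (V →ₗ[ZMod p] V))

lemma slice_le [Fintype V] (U : Submodule (ZMod p) V) (f : V →ₗ[ZMod p] ZMod p) :
    #{v : V | f v = 1 ∧ v ∈ U} * p ≤ Nat.card U := by
  by_cases hU : ∃ u ∈ U, f u = 1
  · obtain ⟨u, hu, hfu⟩ := hU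
    have h1 : #{v : V | f v = 1 ∧ v ∈ U} * p =
        #(({v : V | f v = 1 ∧ v ∈ U} : Finset V) ×ˢ (univ : Finset (ZMod p))) := by
      rw [card_product, card_univ, ZMod.card]
    have h2 : Nat.card U = #{v : V | v ∈ U} := by
      rw [Nat.card_eq_fintype_card, Fintype.card_subtype]
    rw [h1, h2]
    apply card_le_card_of_injOn (fun x => x.1 + x.2 • u)
    · rintro ⟨v, c⟩ hx
      simp only [coe_product, Set.mem_prod, mem_coe, mem_filter_univ] at hx ⊢
      exact U.add_mem hx.1.2 (U.smul_mem _ hu)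
    · rintro ⟨v, c⟩ hx ⟨v', c'⟩ hx' h
      simp only [coe_product, Set.mem_prod, mem_coe, mem_filter_univ] at hx hx' h
      have h3 := congrArg f h
      simp only [map_add, map_smul, hfu, hx.1.1, hx'.1.1, smul_eq_mul, mul_one] at h3
      have h4 : c = c' := add_left_cancel h3
      subst h4
      rw [add_right_cancel h]
  · have : ({v : V | f v = 1 ∧ v ∈ U} : Finset V) = ∅ := by
      ext v
      simp only [mem_filter_univ, notMem_empty, iff_false]
      exact fun h => hU ⟨v, h.2, h.1⟩
    rw [this]
    simp

lemma slice_ge [Fintype V] (f : V →ₗ[ZMod p] ZMod p) (u : V) (hfu : f u = 1) :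
    Nat.card V ≤ #{v : V | f v = 1} * p := by
  have h1 : #{v : V | f v = 1} * p =
        #(({v : V | f v = 1} : Finset V) ×ˢ (univ : Finset (ZMod p))) := by
      rw [card_product, card_univ, ZMod.card]
  rw [h1, Nat.card_eq_fintype_card, ← card_univ]
  apply card_le_card_of_injOn (fun v => (v - (f v - 1) • u, f v))
  · intro v _
    simp [hfu]
  · intro v _ v' _ h
    simp only [Prod.mk.injEq] at h
    rw [h.2] at h
    exact sub_left_injective h.1

/-- the set of fixed spaces -/
noncomputable def FS [Fintype G] : Finset (Submodule (ZMod p) V) :=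
  ({g : G | g ≠ 1} : Finset G).image (Fx ρ)

noncomputable def HS [Fintype G] : Finset (Submodule (ZMod p) V) :=
  ({g : G | IsRefl ρ g} : Finset G).image (Fx ρ)

lemma HS_sub [Fintype G] : HS ρ ⊆ FS ρ := by
  apply image_subset_image
  intro g
  simp only [mem_filter_univ]
  exact fun h => h.1

lemma cover_pos [Fintype G] [Fintype V] {ρ : G →* (V →ₗ[ZMod p] V)} (hinj : Function.Injective ρ)
    (hno : ∀ v : V, ∃ g, ρ g v = v ∧ g ≠ 1) (hk : 0 < #(HS ρ)) :
    p ^ 2 + p + #(HS ρ) ≤ #(HS ρ) * p + #(FS ρ) := by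
  obtain ⟨H1, hH1⟩ := card_pos.mp hk
  have hH1' := hH1
  simp only [HS, mem_image, mem_filter_univ] at hH1'
  obtain ⟨r, hr, rfl⟩ := hH1'
  obtain ⟨f, a, hfa⟩ := refl_form ρ hr
  have hfne : ∃ u, f u = 1 := by
    by_contra hn
    push Not at hn
    have hf0 : ∀ v, f v = 0 := by
      intro v
      by_contra h
      apply hn ((f v)⁻¹ • v)
      simp [h]
    apply hr.1
    apply eq_one_of_rho hinj
    intro v
    rw [hfa, hf0]
    simp
  obtain ⟨u, hu⟩ := hfne
  have hA := slice_ge f u hu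
  set A := #{v : V | f v = 1} with hAdef
  have hApos : 0 < A := card_pos.mpr ⟨u, by simp [hu]⟩
  -- covering
  have hcov : ({v : V | f v = 1} : Finset V) ⊆
      ((FS ρ).erase (Fx ρ r)).biUnion (fun U => {v : V | f v = 1 ∧ v ∈ U}) := by
    intro v hv
    simp only [mem_filter_univ] at hv
    obtain ⟨g, hg, hg1⟩ := hno v
    simp only [mem_biUnion, mem_erase, mem_filter_univ]
    refine ⟨Fx ρ g, ⟨?_, ?_⟩, hv, (mem_Fx ρ).mpr hg⟩
    · intro h
      have h1 : v ∈ Fx ρ r := by rw [← h]; exact (mem_Fx ρ).mpr hg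
      rw [mem_Fx, hfa, hv, one_smul] at h1
      have ha : a = 0 := by simpa using h1
      apply hr.1
      apply eq_one_of_rho hinj
      intro v
      rw [hfa, ha]
      simp
    · exact mem_image.mpr ⟨g, by simpa using hg1, rfl⟩
  have hsum := (card_le_card hcov).trans card_biUnion_le
  rw [← hAdef] at hsum
  have hsplit : (FS ρ).erase (Fx ρ r) = (HS ρ).erase (Fx ρ r) ∪ (FS ρ \ HS ρ) := by
    ext U
    simp only [mem_erase, mem_union, mem_sdiff]
    constructor
    · rintro ⟨h1, h2⟩
      by_cases h : U ∈ HS ρ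
      · exact Or.inl ⟨h1, h⟩
      · exact Or.inr ⟨h2, h⟩
    · rintro (⟨h1, h2⟩ | ⟨h1, h2⟩)
      · exact ⟨h1, HS_sub ρ h2⟩
      · exact ⟨fun h => h2 (h ▸ hH1), h1⟩
  have hdisj : Disjoint ((HS ρ).erase (Fx ρ r)) (FS ρ \ HS ρ) :=
    disjoint_of_subset_left (erase_subset _ _) disjoint_sdiff
  rw [hsplit, sum_union hdisj] at hsum
  have b1 : ∀ U ∈ (HS ρ).erase (Fx ρ r), #{v : V | f v = 1 ∧ v ∈ U} * p ≤ A := by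
    intro U hU
    obtain ⟨g, hg, rfl⟩ := mem_image.mp (mem_of_mem_erase hU)
    simp only [mem_filter_univ] at hg
    have h1 := slice_le (Fx ρ g) f
    have h2 := card_Fx_refl hinj hg.1
    have h3 := h2.trans hA
    have h4 := Nat.le_of_mul_le_mul_right h3 hp.out.pos
    exact h1.trans h4
  have b2 : ∀ U ∈ FS ρ \ HS ρ, #{v : V | f v = 1 ∧ v ∈ U} * p ^ 2 ≤ A := by
    intro U hU
    obtain ⟨h0, h0'⟩ := mem_sdiff.mp hU
    obtain ⟨g, hg, rfl⟩ := mem_image.mp h0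
    simp only [mem_filter_univ] at hg
    have hnr : ¬ IsRefl ρ g := fun h => h0' (mem_image.mpr ⟨g, by simpa using h, rfl⟩)
    have h1 := slice_le (Fx ρ g) f
    have h2 := card_Fx_nonrefl ρ hg hnr
    have h3 := h2.trans hA
    rw [pow_two, ← mul_assoc] at h3
    have h4 := Nat.le_of_mul_le_mul_right h3 hp.out.pos
    calc _ = #{v : V | f v = 1 ∧ v ∈ Fx ρ g} * p * p := by ring
      _ ≤ _ := (Nat.mul_le_mul_right p h1).trans h4
  have s1 : (∑ U ∈ (HS ρ).erase (Fx ρ r), #{v : V | f v = 1 ∧ v ∈ U}) * p ≤ (#(HS ρ) - 1) * A := by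
    rw [sum_mul, ← card_erase_of_mem hH1, ← smul_eq_mul]
    exact sum_le_card_nsmul _ _ _ b1
  have s2 : (∑ U ∈ FS ρ \ HS ρ, #{v : V | f v = 1 ∧ v ∈ U}) * p ^ 2 ≤ (#(FS ρ) - #(HS ρ)) * A := by
    rw [sum_mul, ← card_sdiff_of_subset (HS_sub ρ), ← smul_eq_mul]
    exact sum_le_card_nsmul _ _ _ b2
  have hk2 := card_le_card (HS_sub ρ)
  obtain ⟨k, hk'⟩ : ∃ k, #(HS ρ) = k + 1 := ⟨#(HS ρ) - 1, by omega⟩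
  obtain ⟨c, hc'⟩ : ∃ c, #(FS ρ) = k + 1 + c := ⟨#(FS ρ) - (k + 1), by omega⟩
  rw [hk'] at s1 s2
  rw [hc'] at s2
  simp only [Nat.add_sub_cancel, Nat.add_sub_cancel_left] at s1 s2
  have fin : A * p ^ 2 ≤ A * (k * p + c) := by
    calc A * p ^ 2 ≤ _ := Nat.mul_le_mul_right _ hsum
      _ = (∑ U ∈ (HS ρ).erase (Fx ρ r), #{v : V | f v = 1 ∧ v ∈ U}) * p * p
          + (∑ U ∈ FS ρ \ HS ρ, #{v : V | f v = 1 ∧ v ∈ U}) * p ^ 2 := by ring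
      _ ≤ k * A * p + c * A := Nat.add_le_add (Nat.mul_le_mul_right _ s1) s2
      _ = _ := by ring
  have := Nat.le_of_mul_le_mul_left fin hApos
  rw [hk', hc']
  linarith [this]

lemma cover_zero [Fintype G] [Fintype V] {ρ : G →* (V →ₗ[ZMod p] V)}
    (hno : ∀ v : V, ∃ g, ρ g v = v ∧ g ≠ 1) (hk : #(HS ρ) = 0) :
    p ^ 2 ≤ #(FS ρ) := by
  have hcov : (univ : Finset V) ⊆ (FS ρ).biUnion (fun U => {v : V | v ∈ U}) := by
    intro v _
    obtain ⟨g, hg, hg1⟩ := hno v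
    simp only [mem_biUnion, mem_filter_univ]
    exact ⟨Fx ρ g, mem_image.mpr ⟨g, by simpa using hg1, rfl⟩, (mem_Fx ρ).mpr hg⟩
  have hsum := (card_le_card hcov).trans card_biUnion_le
  have b : ∀ U ∈ FS ρ, #{v : V | v ∈ U} * p ^ 2 ≤ Nat.card V := by
    intro U hU
    obtain ⟨g, hg, rfl⟩ := mem_image.mp hU
    simp only [mem_filter_univ] at hg
    have hnr : ¬ IsRefl ρ g := fun h => by
      have : Fx ρ g ∈ HS ρ := mem_image.mpr ⟨g, by simpa using h, rfl⟩
      rw [card_eq_zero.mp hk] at this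
      simp at this
    have h2 := card_Fx_nonrefl ρ hg hnr
    rwa [Nat.card_eq_fintype_card, Fintype.card_subtype] at h2
  have s : (∑ U ∈ FS ρ, #{v : V | v ∈ U}) * p ^ 2 ≤ #(FS ρ) * Nat.card V := by
    rw [sum_mul, ← smul_eq_mul]
    exact sum_le_card_nsmul _ _ _ b
  rw [card_univ, ← Nat.card_eq_fintype_card] at hsum
  have : Nat.card V * p ^ 2 ≤ Nat.card V * #(FS ρ) := by
    calc _ ≤ _ := Nat.mul_le_mul_right _ hsum
      _ ≤ _ := s
      _ = _ := by ring
  exact Nat.le_of_mul_le_mul_left this (Nat.card_pos)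

/-- bound for the number of fixed spaces by the number of involutions -/
lemma FS_le [Fintype G] : 2 * #(FS ρ) + 1 ≤ Nat.card G + #{g : G | g ≠ 1 ∧ g * g = 1} := by
  have hs : ({g : G | g ≠ 1} : Finset G) = ({g : G | g ≠ 1 ∧ g * g = 1} : Finset G) ∪
      ({g : G | g * g ≠ 1} : Finset G) := by
    ext g
    simp only [mem_filter_univ, mem_union]
    constructor
    · intro h
      by_cases h2 : g * g = 1
      · exact Or.inl ⟨h, h2⟩
      · exact Or.inr h2
    · rintro (h | h)
      · exact h.1
      · rintro rfl
        simp at h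
  have hd : Disjoint ({g : G | g ≠ 1 ∧ g * g = 1} : Finset G) ({g : G | g * g ≠ 1} : Finset G) := by
    rw [disjoint_left]
    intro g
    simp only [mem_filter_univ]
    exact fun h h' => h' h.2
  have hc : #({g : G | g ≠ 1} : Finset G) + 1 = Nat.card G := by
    rw [filter_ne', card_erase_of_mem (mem_univ _), card_univ, Nat.card_eq_fintype_card]
    have : 0 < Fintype.card G := Fintype.card_pos
    omega
  rw [hs, card_union_of_disjoint hd] at hc
  have h1 : #(FS ρ) ≤ #{g : G | g ≠ 1 ∧ g * g = 1} +
      #(({g : G | g * g ≠ 1} : Finset G).image (Fx ρ)) := by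
    unfold FS
    rw [hs, image_union]
    exact (card_union_le _ _).trans (Nat.add_le_add_right card_image_le _)
  have h2 : 2 * #(({g : G | g * g ≠ 1} : Finset G).image (Fx ρ)) ≤ #({g : G | g * g ≠ 1} : Finset G) := by
    apply mul_card_image_le_card
    intro U hU
    obtain ⟨g, hg, rfl⟩ := mem_image.mp hU
    simp only [mem_filter_univ] at hg
    have hne : g ≠ g⁻¹ := fun h => hg (by nth_rewrite 2 [h]; simp)
    rw [← card_pair hne]
    apply card_le_card
    intro x hx
    simp only [mem_insert, mem_singleton] at hx
    simp only [mem_filter, mem_univ, true_and]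
    rcases hx with rfl | rfl
    · exact ⟨hg, rfl⟩
    · refine ⟨?_, Fx_inv ρ g⟩
      rw [← mul_inv_rev, ne_eq, inv_eq_one]
      exact hg
  omega

end
end RegOrb


namespace RegOrb
section
open Classical
open Finset

variable {G : Type*} [Group G]

lemma top_of_half [Finite G] (K : Subgroup G) (h : Nat.card G < 2 * Nat.card K) : K = ⊤ := by
  apply Subgroup.eq_top_of_card_eq
  obtain ⟨c, hc⟩ := Subgroup.card_subgroup_dvd_card K
  have hpos : 0 < Nat.card K := Nat.card_pos
  have hG : 0 < Nat.card G := Nat.card_pos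
  have : c < 2 := by
    by_contra hh
    push Not at hh
    have := Nat.mul_le_mul_left (Nat.card K) hh
    omega
  interval_cases c
  · omega
  · omega

lemma comm_of_prime {q : ℕ} (hq : q.Prime) (h : Nat.card G = q) (a b : G) : a * b = b * a := by
  have := Fact.mk hq
  have := isCyclic_of_prime_card h
  exact (IsCyclic.isMulCommutative (α := G)).is_comm.comm a b

lemma comm_of_center_quot [Finite G] {q : ℕ} (hq : q.Prime)
    (h : Nat.card (G ⧸ Subgroup.center G) = q) (a b : G) : a * b = b * a := by
  have := Fact.mk hq
  have := isCyclic_of_prime_card h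
  exact (MonoidHom.isMulCommutative_of_isCyclic_of_ker_le_center
    (QuotientGroup.mk' (Subgroup.center G)) (by simp)).is_comm.comm a b

/-- elements inverted by an endomorphism -/
lemma inv_count [Fintype G] (σ : G →* G) (x : G) (hx : σ x = x⁻¹) :
    2 * #{n : G | σ n = n⁻¹} ≤ Nat.card G + Nat.card (Subgroup.centralizer {x}) := by
  set I : Finset G := {n : G | σ n = n⁻¹} with hI
  have h1 := card_union_add_card_inter I (I.image (fun y => x⁻¹ * y))
  rw [card_image_of_injective _ (mul_right_injective _)] at h1
  have h2 : #(I ∪ I.image (fun y => x⁻¹ * y)) ≤ Nat.card G := by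
    rw [Nat.card_eq_fintype_card]
    exact card_le_univ _
  have h3 : #(I ∩ I.image (fun y => x⁻¹ * y)) ≤ Nat.card (Subgroup.centralizer {x}) := by
    rw [Nat.card_eq_fintype_card, Fintype.card_subtype]
    apply card_le_card
    intro y hy
    simp only [mem_inter, mem_image, hI, mem_filter_univ] at hy
    obtain ⟨hy, z, hz, rfl⟩ := hy
    simp only [mem_filter_univ]
    rw [Subgroup.mem_centralizer_singleton_iff]
    rw [map_mul, map_inv, hx, hz] at hy
    simp only [inv_inv, mul_inv_rev] at hy
    have h5 : x * z⁻¹ = z⁻¹ * x := hy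
    have h6 : z * x = x * z := by
      calc z * x = z * (x * z⁻¹) * z := by group
        _ = z * (z⁻¹ * x) * z := by rw [h5]
        _ = x * z := by group
    calc x⁻¹ * z * x = x⁻¹ * (z * x) := by group
      _ = x * (x⁻¹ * z) := by rw [h6]; group
  omega

lemma inv_abelian [Fintype G] (σ : G →* G)
    (h1 : Nat.card G < 2 * #{n : G | σ n = n⁻¹})
    (h2 : ∀ C : Subgroup G, 2 * #{n : G | σ n = n⁻¹} ≤ Nat.card G + Nat.card C → C = ⊤) :
    ∀ a b : G, a * b = b * a := by
  have hI : ∀ x : G, σ x = x⁻¹ → x ∈ Subgroup.center G := by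
    intro x hx
    have h3 := h2 _ (inv_count σ x hx)
    rw [Subgroup.mem_center_iff]
    intro g
    have : g ∈ Subgroup.centralizer {x} := by rw [h3]; trivial
    exact Subgroup.mem_centralizer_singleton_iff.mp this
  have h4 : #{n : G | σ n = n⁻¹} ≤ Nat.card (Subgroup.center G) := by
    rw [Nat.card_eq_fintype_card, Fintype.card_subtype]
    apply card_le_card
    intro y hy
    simp only [mem_filter_univ] at hy ⊢
    exact hI y hy
  have h5 := top_of_half (Subgroup.center G) (by omega)
  intro a b
  have : b ∈ Subgroup.center G := by rw [h5]; trivial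
  exact Subgroup.mem_center_iff.mp this a

lemma inv_abelian' [Fintype G] (σ : G →* G)
    (h : 3 * Nat.card G < 4 * #{n : G | σ n = n⁻¹}) :
    ∀ a b : G, a * b = b * a := by
  apply inv_abelian σ (by omega)
  intro C hC
  apply top_of_half
  omega

lemma invol_abelian [Fintype G]
    (h : 3 * Nat.card G < 4 * (#{n : G | n ≠ 1 ∧ n * n = 1} + 1)) :
    ∀ a b : G, a * b = b * a := by
  apply inv_abelian' (MonoidHom.id G)
  have : insert (1 : G) ({n : G | n ≠ 1 ∧ n * n = 1} : Finset G) ⊆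
      ({n : G | MonoidHom.id G n = n⁻¹} : Finset G) := by
    intro x
    simp only [mem_insert, mem_filter_univ, MonoidHom.id_apply]
    rintro (rfl | ⟨_, h⟩)
    · simp
    · exact eq_inv_of_mul_eq_one_left h
  have h2 := card_le_card this
  rw [card_insert_of_notMem (by simp)] at h2
  omega

/-- involutions avoid a subgroup of odd order -/
lemma invol_le [Fintype G] (K : Subgroup G) (hK : Odd (Nat.card K)) :
    #{n : G | n ≠ 1 ∧ n * n = 1} + Nat.card K ≤ Nat.card G := by
  have h1 : Nat.card K = #{n : G | n ∈ K} := by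
    rw [Nat.card_eq_fintype_card, Fintype.card_subtype]
  rw [h1, Nat.card_eq_fintype_card, ← card_union_of_disjoint]
  · exact card_le_univ _
  · rw [disjoint_left]
    intro x hx hx'
    simp only [mem_filter_univ] at hx hx'
    have h2 : (⟨x, hx'⟩ : K) ^ Nat.card K = 1 := pow_card_eq_one'
    have h3 : x ^ Nat.card K = 1 := congrArg Subtype.val h2
    obtain ⟨j, hj⟩ := hK
    rw [hj, pow_succ, pow_mul, pow_two, hx.2, one_pow, one_mul] at h3
    exact hx.1 h3

lemma ten_abelian [Fintype G] (hc : Nat.card G = 10) (σ : G →* G)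
    (h1 : 7 ≤ #{n : G | σ n = n⁻¹}) : ∀ a b : G, a * b = b * a := by
  by_contra hna
  have hcen : Nat.card (Subgroup.center G) = 1 := by
    have h2 := Subgroup.card_subgroup_dvd_card (Subgroup.center G)
    have h3 := Subgroup.card_eq_card_quotient_mul_card_subgroup (Subgroup.center G)
    rw [hc] at h2 h3
    have h4 : Nat.card (Subgroup.center G) ∈ Nat.divisors 10 := Nat.mem_divisors.mpr ⟨h2, by norm_num⟩
    have h5 : Nat.divisors 10 = {1, 2, 5, 10} := by decide
    rw [h5] at h4
    simp only [mem_insert, mem_singleton] at h4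
    rcases h4 with h | h | h | h
    · exact h
    · exact absurd (comm_of_center_quot (q := 5) (by norm_num) (by rw [h] at h3; omega)) hna
    · exact absurd (comm_of_center_quot (q := 2) (by norm_num) (by rw [h] at h3; omega)) hna
    · have h6 := Subgroup.eq_top_of_card_eq _ (h.trans hc.symm)
      exfalso
      apply hna
      intro a b
      have : b ∈ Subgroup.center G := by rw [h6]; trivial
      exact Subgroup.mem_center_iff.mp this a
  have hbot := Subgroup.eq_bot_of_card_eq _ hcen
  have key : ∀ x : G, σ x = x⁻¹ → x ≠ 1 → Nat.card (Subgroup.centralizer {x}) = 5 := by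
    intro x hx hx1
    have h2 := inv_count σ x hx
    have h3 := Subgroup.card_subgroup_dvd_card (Subgroup.centralizer {x})
    rw [hc] at h2 h3
    have h4 : Nat.card (Subgroup.centralizer {x}) ∈ Nat.divisors 10 := Nat.mem_divisors.mpr ⟨h3, by norm_num⟩
    have h5 : Nat.divisors 10 = {1, 2, 5, 10} := by decide
    rw [h5] at h4
    simp only [mem_insert, mem_singleton] at h4
    rcases h4 with h | h | h | h
    · omega
    · omega
    · exact h
    · exfalso
      have h6 := Subgroup.eq_top_of_card_eq _ (h.trans hc.symm)
      apply hx1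
      have : x ∈ Subgroup.center G := by
        rw [Subgroup.mem_center_iff]
        intro g
        have : g ∈ Subgroup.centralizer {x} := by rw [h6]; trivial
        exact Subgroup.mem_centralizer_singleton_iff.mp this
      rw [hbot] at this
      simpa using this
  obtain ⟨x, hx, hx1⟩ : ∃ x : G, σ x = x⁻¹ ∧ x ≠ 1 := by
    by_contra hh
    push Not at hh
    have : ({n : G | σ n = n⁻¹} : Finset G) ⊆ {1} := by
      intro x hx
      simp only [mem_filter_univ] at hx
      simpa using hh x hx
    have := card_le_card this
    simp at this
    omega
  have cx := key x hx hx1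
  obtain ⟨y, hy, hyx⟩ : ∃ y : G, σ y = y⁻¹ ∧ y ∉ Subgroup.centralizer {x} := by
    by_contra hh
    push Not at hh
    rw [Nat.card_eq_fintype_card, Fintype.card_subtype] at cx
    have : ({n : G | σ n = n⁻¹} : Finset G) ⊆ ({n : G | n ∈ Subgroup.centralizer {x}} : Finset G) := by
      intro z hz
      simp only [mem_filter_univ] at hz ⊢
      exact hh z hz
    have := card_le_card this
    omega
  have hy1 : y ≠ 1 := by
    rintro rfl
    exact hyx (one_mem _)
  have cy := key y hy hy1
  have iy : (Subgroup.centralizer {y}).index = 2 := by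
    have := Subgroup.index_mul_card (Subgroup.centralizer {y})
    rw [hc, cy] at this
    omega
  have h7 := Subgroup.sq_mem_of_index_two iy x
  rw [Subgroup.mem_centralizer_singleton_iff] at h7
  have hx5 : x ^ 5 = 1 := by
    have hxm : x ∈ Subgroup.centralizer {x} := by
      rw [Subgroup.mem_centralizer_singleton_iff]
    have h2 : (⟨x, hxm⟩ : Subgroup.centralizer {x}) ^ Nat.card (Subgroup.centralizer {x}) = 1 :=
      pow_card_eq_one'
    rw [cx] at h2
    simpa using congrArg Subtype.val h2
  apply hyx
  rw [Subgroup.mem_centralizer_singleton_iff]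
  have h8 : Commute (x ^ 2) y := h7
  have h9 : Commute ((x ^ 2) ^ 3) y := h8.pow_left 3
  rw [← pow_mul, show 2 * 3 = 5 + 1 by norm_num, pow_succ, hx5, one_mul] at h9
  exact h9.symm

/-- recognition of dihedral groups -/
lemma dihedral_of [Finite G] (n : ℕ) [NeZero n] (hn : Nat.card G = 2 * n) (c t : G)
    (hc : orderOf c = n) (ht : t * t = 1) (htc : t ∉ Subgroup.zpowers c)
    (hinv : t * c * t = c⁻¹) : Nonempty (G ≃* DihedralGroup n) := by
  have hcn : c ^ (n : ℤ) = 1 := by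
    rw [zpow_natCast, ← hc, pow_orderOf_eq_one]
  let φ : Multiplicative (ZMod n) →* G :=
    AddMonoidHom.toMultiplicativeLeft (ZMod.lift n ⟨zmultiplesHom (Additive G) (Additive.ofMul c), by
      simp only [zmultiplesHom_apply]
      rw [← ofMul_zpow, hcn]; rfl⟩)
  have hφ : ∀ k : ℤ, φ (Multiplicative.ofAdd (k : ZMod n)) = c ^ k := by
    intro k
    change Additive.toMul (ZMod.lift n _ (k : ZMod n)) = _
    rw [ZMod.lift_coe]
    simp
  have htφ : ∀ i : ZMod n, t * φ (Multiplicative.ofAdd i) = φ (Multiplicative.ofAdd (-i)) * t := by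
    intro i
    obtain ⟨k, rfl⟩ := ZMod.intCast_surjective i
    rw [← Int.cast_neg, hφ, hφ]
    have ht' : t⁻¹ = t := inv_eq_of_mul_eq_one_left ht
    have h1 : (t * c * t⁻¹) ^ k = t * c ^ k * t⁻¹ := by rw [conj_zpow]
    rw [ht', hinv, inv_zpow'] at h1
    rw [h1, mul_assoc _ t t, ht, mul_one]
  have hadd : ∀ i j : ZMod n, φ (Multiplicative.ofAdd (i + j)) =
      φ (Multiplicative.ofAdd i) * φ (Multiplicative.ofAdd j) := by
    intro i j
    rw [ofAdd_add, map_mul]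
  let F : DihedralGroup n →* G :=
    { toFun := fun x => match x with
        | DihedralGroup.r i => φ (Multiplicative.ofAdd i)
        | DihedralGroup.sr i => t * φ (Multiplicative.ofAdd i)
      map_one' := by
        change φ (Multiplicative.ofAdd 0) = 1
        simp
      map_mul' := by
        rintro (i | i) (j | j)
        · change φ (Multiplicative.ofAdd (i + j)) = _
          exact hadd i j
        · change t * φ (Multiplicative.ofAdd (j - i)) = φ (Multiplicative.ofAdd i) * (t * φ (Multiplicative.ofAdd j))
          have h1 := htφ (-i)
          rw [neg_neg] at h1
          rw [← mul_assoc, ← h1, mul_assoc, ← hadd]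
          congr 3
          ring
        · change t * φ (Multiplicative.ofAdd (i + j)) = t * φ (Multiplicative.ofAdd i) * φ (Multiplicative.ofAdd j)
          rw [hadd, mul_assoc]
        · change φ (Multiplicative.ofAdd (j - i)) = t * φ (Multiplicative.ofAdd i) * (t * φ (Multiplicative.ofAdd j))
          rw [htφ i, mul_assoc, ← mul_assoc t t, ht, one_mul, ← hadd]
          congr 2
          ring }
  have hinjF : Function.Injective F := by
    rw [injective_iff_map_eq_one]
    rintro (i | i) h
    · change φ (Multiplicative.ofAdd i) = 1 at h
      obtain ⟨k, rfl⟩ := ZMod.intCast_surjective i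
      rw [hφ, ← orderOf_dvd_iff_zpow_eq_one, hc] at h
      rw [(ZMod.intCast_zmod_eq_zero_iff_dvd k n).mpr h]
      rfl
    · change t * φ (Multiplicative.ofAdd i) = 1 at h
      exfalso
      obtain ⟨k, rfl⟩ := ZMod.intCast_surjective i
      rw [hφ] at h
      apply htc
      rw [eq_inv_of_mul_eq_one_left h]
      exact inv_mem (Subgroup.zpow_mem_zpowers c k)
  have hbij : Function.Bijective F := by
    have : Fintype G := Fintype.ofFinite G
    rw [Fintype.bijective_iff_injective_and_card]
    refine ⟨hinjF, ?_⟩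
    rw [DihedralGroup.card, ← Nat.card_eq_fintype_card, hn]
  exact ⟨(MulEquiv.ofBijective F hbij).symm⟩

end
end RegOrb


namespace RegOrb

lemma zmod3 : ∀ x : ZMod 3, x ≠ 1 → x ≠ 0 → x = -1 := by decide

section
open Classical
open Module Finset

variable {p : ℕ} [hp : Fact p.Prime] {V : Type*} [AddCommGroup V] [Module (ZMod p) V]
  {G : Type*} [Group G] (ρ : G →* (V →ₗ[ZMod p] V))

noncomputable def dt : G →* ZMod p := LinearMap.det.comp ρ

lemma refl_det [Finite G] [Finite V] {ρ : G →* (V →ₗ[ZMod p] V)} (hinj : Function.Injective ρ)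
    (hc : ¬ p ∣ Nat.card G) {r : G} (hr : IsRefl ρ r) : dt ρ r ≠ 1 := by
  intro h
  obtain ⟨f, a, hfa⟩ := refl_form ρ hr
  have h1 : ρ r = LinearMap.transvection f a := by
    ext v
    rw [hfa, LinearMap.transvection.apply]
  have h2 : dt ρ r = 1 + f a := by
    change LinearMap.det (ρ r) = _
    rw [h1, LinearMap.transvection.det]
  rw [h] at h2
  have h3 : f a = 0 := by simpa using h2
  apply hr.1
  apply eq_one_of_sq hinj hc
  intro u
  rw [hfa u]
  simp [hfa, h3]

lemma Fx_mul_le (g h : G) : Fx ρ g ⊓ Fx ρ h ≤ Fx ρ (g * h) := by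
  intro v hv
  obtain ⟨h1, h2⟩ := Submodule.mem_inf.mp hv
  rw [mem_Fx] at *
  rw [rho_mul, h2, h1]

lemma refl_unique [Finite G] [Finite V] {ρ : G →* (V →ₗ[ZMod p] V)} (hinj : Function.Injective ρ)
    (hc : ¬ p ∣ Nat.card G) {r r' : G} (hr : IsRefl ρ r) (hF : Fx ρ r = Fx ρ r')
    (hd : dt ρ r = dt ρ r') : r = r' := by
  by_contra hne
  have h1 : Fx ρ r ≤ Fx ρ (r⁻¹ * r') := by
    refine le_trans ?_ (Fx_mul_le ρ _ _)
    rw [Fx_inv, ← hF, inf_idem]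
  have h2 : IsRefl ρ (r⁻¹ * r') := by
    refine ⟨fun h => hne ?_, ?_⟩
    · exact inv_mul_eq_one.mp h
    · exact hr.2.trans (Nat.add_le_add_right (Submodule.finrank_mono h1) 1)
  apply refl_det hinj hc h2
  rw [map_mul, ← hd, ← map_mul, inv_mul_cancel, map_one]

lemma Fx_pow_le (g : G) (j : ℕ) : Fx ρ g ≤ Fx ρ (g ^ j) := by
  induction j with
  | zero =>
    intro v _
    rw [mem_Fx, pow_zero, rho_one]
  | succ j ih =>
    rw [pow_succ]
    exact le_trans (le_inf ih le_rfl) (Fx_mul_le ρ _ _)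

lemma Fx_conj (g h : G) : Fx ρ (h * g * h⁻¹) = (Fx ρ g).comap (ρ h⁻¹) := by
  ext v
  rw [Submodule.mem_comap, mem_Fx, mem_Fx, rho_mul, rho_mul]
  constructor
  · intro h1
    have := congrArg (ρ h⁻¹) h1
    rwa [rho_inv_rho] at this
  · intro h1
    rw [h1, rho_rho_inv]

lemma refl_conj [Finite V] {r : G} (hr : IsRefl ρ r) (h : G) : IsRefl ρ (h * r * h⁻¹) := by
  refine ⟨fun h1 => hr.1 (conj_eq_one_iff.mp h1), ?_⟩
  have : finrank (ZMod p) (Fx ρ r) ≤ finrank (ZMod p) (Fx ρ (h * r * h⁻¹)) := by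
    have h1 : (Fx ρ r).map (ρ h) ≤ Fx ρ (h * r * h⁻¹) := by
      rintro _ ⟨v, hv, rfl⟩
      rw [Fx_conj, Submodule.mem_comap, rho_inv_rho]
      exact hv
    have hi : Function.Injective (ρ h) := Function.LeftInverse.injective (g := ρ h⁻¹) (rho_inv_rho ρ h)
    rw [LinearEquiv.finrank_eq (Submodule.equivMapOfInjective (ρ h) hi (Fx ρ r))]
    exact Submodule.finrank_mono h1
  exact hr.2.trans (Nat.add_le_add_right this 1)

lemma FS_le_prime [Fintype G] (K : Subgroup G) {q : ℕ} (hq : q.Prime) (hK : Nat.card K = q) :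
    #(FS ρ) + q ≤ 1 + Nat.card G := by
  have hsub : FS ρ ⊆ (({g : G | g ∈ K ∧ g ≠ 1} : Finset G).image (Fx ρ)) ∪
      (({g : G | g ∉ K} : Finset G).image (Fx ρ)) := by
    intro U hU
    obtain ⟨g, hg, rfl⟩ := mem_image.mp hU
    simp only [mem_filter_univ] at hg
    rw [mem_union]
    by_cases hgK : g ∈ K
    · exact Or.inl (mem_image_of_mem _ (by simp [hgK, hg]))
    · exact Or.inr (mem_image_of_mem _ (by simp [hgK]))
  have h1 : #(({g : G | g ∈ K ∧ g ≠ 1} : Finset G).image (Fx ρ)) ≤ 1 := by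
    rw [card_le_one]
    have hle : ∀ a b : G, a ∈ K → a ≠ 1 → b ∈ K → Fx ρ a ≤ Fx ρ b := by
      intro a b ha ha1 hb
      have hz : Subgroup.zpowers (⟨a, ha⟩ : K) = ⊤ := by
        haveI := Fact.mk hq
        apply zpowers_eq_top_of_prime_card hK
        intro h
        exact ha1 (congrArg Subtype.val h)
      have hb' : (⟨b, hb⟩ : K) ∈ Subgroup.zpowers (⟨a, ha⟩ : K) := by rw [hz]; trivial
      rw [← mem_powers_iff_mem_zpowers] at hb'
      obtain ⟨j, hj⟩ := hb'
      have : a ^ j = b := congrArg Subtype.val hj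
      rw [← this]
      exact Fx_pow_le ρ a j
    intro U hU W hW
    obtain ⟨g, hg, rfl⟩ := mem_image.mp hU
    obtain ⟨g', hg', rfl⟩ := mem_image.mp hW
    simp only [mem_filter_univ] at hg hg'
    exact le_antisymm (hle _ _ hg.1 hg.2 hg'.1) (hle _ _ hg'.1 hg'.2 hg.1)
  have h2 : #({g : G | g ∉ K} : Finset G) + q = Nat.card G := by
    rw [← hK, Nat.card_eq_fintype_card (α := K), Fintype.card_subtype, Nat.card_eq_fintype_card,
      ← card_univ, add_comm]
    exact card_filter_add_card_filter_not (fun g => g ∈ K)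
  have h3 := (card_le_card hsub).trans (card_union_le _ _)
  have h4 : #(({g : G | g ∉ K} : Finset G).image (Fx ρ)) ≤ #({g : G | g ∉ K} : Finset G) := card_image_le
  omega

lemma fourteen [Fintype G] [Fintype V] {ρ : G →* (V →ₗ[ZMod p] V)} (hinj : Function.Injective ρ)
    (hc : ¬ p ∣ Nat.card G) (hp3 : p = 3) (h14 : Nat.card G = 14)
    (hpos : 0 < #(HS ρ)) (hlt : #(HS ρ) ≤ 2) : ∀ a b : G, a * b = b * a := by
  obtain ⟨U, hU⟩ := card_pos.mp hpos
  obtain ⟨r, hr, rfl⟩ := mem_image.mp hU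
  simp only [mem_filter_univ] at hr
  have hsq : ∀ g : G, dt ρ g ≠ 1 → dt ρ g = -1 := by
    intro g hg
    have hg0 : dt ρ g ≠ 0 := by
      intro h0
      have : dt ρ (g * g⁻¹) = 0 := by rw [map_mul, h0, zero_mul]
      rw [mul_inv_cancel, map_one] at this
      exact one_ne_zero this
    generalize dt ρ g = x at *
    subst hp3
    exact zmod3 _ hg hg0
  have huniq : ∀ r r' : G, IsRefl ρ r → IsRefl ρ r' → Fx ρ r = Fx ρ r' → r = r' := by
    intro r r' h1 h2 h3
    apply refl_unique hinj hc h1 h3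
    rw [hsq _ (refl_det hinj hc h1), hsq _ (refl_det hinj hc h2)]
  have hrr : r * r = 1 := by
    have h1 : r = r⁻¹ := by
      apply huniq _ _ hr _ (Fx_inv ρ r).symm
      refine ⟨fun h => hr.1 (inv_eq_one.mp h), ?_⟩
      rw [Fx_inv]
      exact hr.2
    nth_rewrite 2 [h1]
    simp
  haveI : Fact (Nat.Prime 7) := ⟨by norm_num⟩
  obtain ⟨h, hh⟩ := exists_prime_orderOf_dvd_card' (G := G) 7 (by rw [h14]; norm_num)
  have h7 : h ^ 7 = 1 := by rw [← hh, pow_orderOf_eq_one]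
  have hcomm : Commute h r := by
    by_contra hnc
    have hnc2 : ¬ Commute (h ^ 2) r := by
      intro h2
      apply hnc
      have := h2.pow_left 4
      rwa [← pow_mul, show 2 * 4 = 7 + 1 by norm_num, pow_succ, h7, one_mul] at this
    have r1 := refl_conj ρ hr h
    have r2 := refl_conj ρ hr (h ^ 2)
    have m0 : Fx ρ r ∈ HS ρ := hU
    have m1 : Fx ρ (h * r * h⁻¹) ∈ HS ρ := mem_image_of_mem _ (by simpa using r1)
    have m2 : Fx ρ (h ^ 2 * r * (h ^ 2)⁻¹) ∈ HS ρ := mem_image_of_mem _ (by simpa using r2)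
    have n01 : Fx ρ r ≠ Fx ρ (h * r * h⁻¹) := by
      intro e
      have := huniq _ _ hr r1 e
      apply hnc
      change h * r = r * h
      nth_rewrite 2 [this]
      group
    have n02 : Fx ρ r ≠ Fx ρ (h ^ 2 * r * (h ^ 2)⁻¹) := by
      intro e
      have := huniq _ _ hr r2 e
      apply hnc2
      change h ^ 2 * r = r * h ^ 2
      nth_rewrite 2 [this]
      group
    have n12 : Fx ρ (h * r * h⁻¹) ≠ Fx ρ (h ^ 2 * r * (h ^ 2)⁻¹) := by
      intro e
      have := huniq _ _ r1 r2 e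
      apply hnc
      change h * r = r * h
      have e2 : r = h⁻¹ * (h * r * h⁻¹) * h := by group
      rw [this] at e2
      nth_rewrite 2 [e2]
      group
    have : #({Fx ρ r, Fx ρ (h * r * h⁻¹), Fx ρ (h ^ 2 * r * (h ^ 2)⁻¹)} : Finset (Submodule (ZMod p) V)) = 3 :=
      card_eq_three.mpr ⟨_, _, _, n01, n02, n12, rfl⟩
    have h3 : ({Fx ρ r, Fx ρ (h * r * h⁻¹), Fx ρ (h ^ 2 * r * (h ^ 2)⁻¹)} : Finset (Submodule (ZMod p) V)) ⊆ HS ρ := by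
      intro x hx
      simp only [mem_insert, mem_singleton] at hx
      rcases hx with rfl | rfl | rfl <;> assumption
    have := card_le_card h3
    omega
  have hor : orderOf r = 2 := orderOf_eq_prime (by rw [pow_two, hrr]) hr.1
  have hC : Subgroup.centralizer {r} = ⊤ := by
    apply Subgroup.eq_top_of_card_eq
    have d7 : 7 ∣ Nat.card (Subgroup.centralizer {r}) := by
      rw [← hh]
      exact Subgroup.orderOf_dvd_natCard _ (Subgroup.mem_centralizer_singleton_iff.mpr hcomm)
    have d2 : 2 ∣ Nat.card (Subgroup.centralizer {r}) := by
      rw [← hor]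
      exact Subgroup.orderOf_dvd_natCard _ (Subgroup.mem_centralizer_singleton_iff.mpr rfl)
    have d := Subgroup.card_subgroup_dvd_card (Subgroup.centralizer {r})
    rw [h14] at d ⊢
    have d14 : 14 ∣ Nat.card (Subgroup.centralizer {r}) := by omega
    exact Nat.dvd_antisymm d d14
  have hrc : r ∈ Subgroup.center G := by
    rw [Subgroup.mem_center_iff]
    intro g
    have : g ∈ Subgroup.centralizer {r} := by rw [hC]; trivial
    exact Subgroup.mem_centralizer_singleton_iff.mp this
  have d2 : 2 ∣ Nat.card (Subgroup.center G) := by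
    rw [← hor]
    exact Subgroup.orderOf_dvd_natCard _ hrc
  have h3 := Subgroup.card_eq_card_quotient_mul_card_subgroup (Subgroup.center G)
  obtain ⟨c, hcc⟩ := d2
  rw [h14, hcc] at h3
  have h4 : Nat.card (G ⧸ Subgroup.center G) * c = 7 := by linarith
  have h5 : Nat.card (G ⧸ Subgroup.center G) ∣ 7 := ⟨c, h4.symm⟩
  rcases (Nat.dvd_prime (by norm_num)).mp h5 with h6 | h6
  · intro a b
    have : Subgroup.center G = ⊤ := Subgroup.index_eq_one.mp h6
    have hb : b ∈ Subgroup.center G := by rw [this]; trivial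
    exact Subgroup.mem_center_iff.mp hb a
  · exact comm_of_center_quot (by norm_num) h6

lemma HS_ge [Fintype G] [Fintype V] {ρ : G →* (V →ₗ[ZMod p] V)} (hinj : Function.Injective ρ)
    (hc : ¬ p ∣ Nat.card G) (hle : Nat.card G ≤ 2 * p + 9) (hp3 : 3 ≤ p)
    (hna : ¬ ∀ a b : G, a * b = b * a)
    (hno : ∀ v : V, ∃ g, ρ g v = v ∧ g ≠ 1) : p ≤ #(HS ρ) := by
  by_contra hk
  push Not at hk
  have hs : 3 * p - 1 ≤ #(FS ρ) := by
    rcases Nat.eq_zero_or_pos #(HS ρ) with h0 | h0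
    · have := cover_zero hno h0
      have h9 : 3 * p ≤ p ^ 2 := by nlinarith
      omega
    · have h1 := cover_pos hinj hno h0
      obtain ⟨j, hj⟩ : ∃ j, p = #(HS ρ) + 1 + j := ⟨p - #(HS ρ) - 1, by omega⟩
      have : 3 * p ≤ #(FS ρ) + 1 := by
        generalize #(HS ρ) = k at *
        subst hj
        nlinarith [Nat.zero_le (j * k), Nat.zero_le (j * j)]
      omega
  have h1 := FS_le ρ
  have h2 : #{g : G | g ≠ 1 ∧ g * g = 1} + 1 ≤ Nat.card G := by
    have := invol_le (⊥ : Subgroup G) (by simp)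
    simpa using this
  have hab := fun h => hna (invol_abelian (G := G) h)
  have hnp : ¬ (Nat.card G).Prime := fun h => hna (comm_of_prime h rfl)
  have hp11 : p < 11 := by omega
  have hpp := hp.out
  interval_cases p
  · -- 3
    have : Nat.card G = 10 ∨ Nat.card G = 14 := by
      have h3 : 9 ≤ Nat.card G := by omega
      have h4 : Nat.card G ≤ 15 := by omega
      generalize Nat.card G = m at *
      interval_cases m <;> first | omega | (exfalso; revert hnp; norm_num) | (exfalso; revert hc; norm_num)
    rcases this with h | h
    · haveI : Fact (Nat.Prime 5) := ⟨by norm_num⟩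
      obtain ⟨K, hK⟩ := Sylow.exists_subgroup_card_pow_prime (G := G) 5 (n := 1) (by rw [h]; norm_num)
      have := FS_le_prime ρ K (q := 5) (by norm_num) (by simpa using hK)
      omega
    · haveI : Fact (Nat.Prime 7) := ⟨by norm_num⟩
      obtain ⟨K, hK⟩ := Sylow.exists_subgroup_card_pow_prime (G := G) 7 (n := 1) (by rw [h]; norm_num)
      have h8 := FS_le_prime ρ K (q := 7) (by norm_num) (by simpa using hK)
      rcases Nat.eq_zero_or_pos #(HS ρ) with h0 | h0
      · have := cover_zero hno h0
        omega
      · exact hna (fourteen hinj hc rfl h h0 (by omega))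
  · revert hpp; norm_num
  · -- 5
    by_cases h18 : Nat.card G = 18
    · haveI : Fact (Nat.Prime 3) := ⟨by norm_num⟩
      obtain ⟨K, hK⟩ := Sylow.exists_subgroup_card_pow_prime (G := G) 3 (n := 2) (by rw [h18]; norm_num)
      have := invol_le K (by rw [hK]; decide)
      omega
    · by_cases h19 : Nat.card G = 19
      · rw [h19] at hnp
        exact hnp (by norm_num)
      · apply hab
        omega
  · revert hpp; norm_num
  · -- 7
    apply hab
    omega
  · revert hpp; norm_num
  · revert hpp; norm_num
  · revert hpp; norm_num

end
end RegOrb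


namespace RegOrb

lemma omega_bound {d : ℕ} (hd : 7 ≤ d) : 2 * d.primeFactors.card + 5 ≤ d := by
  have h2 : 2 ^ d.primeFactors.card ≤ d := by
    calc 2 ^ d.primeFactors.card = ∏ q ∈ d.primeFactors, 2 := by simp
      _ ≤ ∏ q ∈ d.primeFactors, q := Finset.prod_le_prod' fun q hq =>
          (Nat.prime_of_mem_primeFactors hq).two_le
      _ ≤ d := Nat.le_of_dvd (by omega) (Nat.prod_primeFactors_dvd d)
  rcases Nat.lt_or_ge d 11 with h | h
  · have h7 : (7 : ℕ).primeFactors.card = 1 := by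
      rw [Nat.Prime.primeFactors (by norm_num)]; rfl
    have h8 : (8 : ℕ).primeFactors.card = 1 := by
      rw [show 8 = 2 ^ 3 by norm_num, Nat.primeFactors_prime_pow (by norm_num) (by norm_num)]; rfl
    have h9 : (9 : ℕ).primeFactors.card = 1 := by
      rw [show 9 = 3 ^ 2 by norm_num, Nat.primeFactors_prime_pow (by norm_num) (by norm_num)]; rfl
    have h10 : (10 : ℕ).primeFactors.card ≤ 2 := by
      rw [show 10 = 2 * 5 by norm_num, Nat.primeFactors_mul (by norm_num) (by norm_num),
        Nat.Prime.primeFactors (p := 2) (by norm_num), Nat.Prime.primeFactors (p := 5) (by norm_num)]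
      decide
    interval_cases d <;> omega
  · generalize d.primeFactors.card = w at *
    rcases Nat.lt_or_ge w 4 with h3 | h3
    · omega
    · have : ∀ w, 4 ≤ w → 2 * w + 5 ≤ 2 ^ w := by
        intro w hw
        induction w, hw using Nat.le_induction with
        | base => norm_num
        | succ n hn ih => rw [pow_succ]; omega
      exact (this w h3).trans h2

lemma d_arith {p d n : ℕ} (hp : p.Prime) (hp3 : 3 ≤ p) (hn : 2 ≤ n)
    (h1 : p ≤ d.primeFactors.card * n) (h2 : d * n ≤ 2 * p + 9) (hd : d ∣ p - 1)
    (hdn : ¬ p ∣ d * n) : d = 2 := by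
  rcases Nat.lt_or_ge d 7 with h | h
  · have h3 : (3 : ℕ).primeFactors.card = 1 := by
      rw [Nat.Prime.primeFactors (by norm_num)]; rfl
    have h5 : (5 : ℕ).primeFactors.card = 1 := by
      rw [Nat.Prime.primeFactors (by norm_num)]; rfl
    have h4 : (4 : ℕ).primeFactors.card = 1 := by
      rw [show 4 = 2 ^ 2 by norm_num, Nat.primeFactors_prime_pow (by norm_num) (by norm_num)]; rfl
    have h6 : (6 : ℕ).primeFactors.card ≤ 2 := by
      rw [show 6 = 2 * 3 by norm_num, Nat.primeFactors_mul (by norm_num) (by norm_num),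
        Nat.Prime.primeFactors (p := 2) (by norm_num), Nat.Prime.primeFactors (p := 3) (by norm_num)]
      decide
    interval_cases d
    · simp at h1; omega
    · simp at h1; omega
    · rfl
    · rw [h3] at h1
      exfalso
      have : p = 7 := by
        have : p ≤ 9 := by omega
        interval_cases p <;> first | rfl | omega | (exfalso; revert hp; norm_num)
      subst this
      have : n = 7 := by omega
      subst this
      exact hdn (by norm_num)
    · rw [h4] at h1; omega
    · rw [h5] at h1; omega
    · exfalso
      have h1' : p ≤ 2 * n := h1.trans (Nat.mul_le_mul_right _ h6)
      have : p ≤ 9 := by omega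
      interval_cases p <;> omega
  · exfalso
    have h3 := omega_bound h
    nlinarith

section
open Classical
open Module Finset

variable {p : ℕ} [hp : Fact p.Prime] {V : Type*} [AddCommGroup V] [Module (ZMod p) V]
  {G : Type*} [Group G] (ρ : G →* (V →ₗ[ZMod p] V))

/-- determinant with values in units -/
noncomputable def du : G →* (ZMod p)ˣ := MonoidHom.toHomUnits (dt ρ)

lemma du_coe (g : G) : ((du ρ g : (ZMod p)ˣ) : ZMod p) = dt ρ g := rfl

lemma refl_pow [Finite V] {ρ : G →* (V →ₗ[ZMod p] V)} (hinj : Function.Injective ρ) {r : G}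
    (hr : IsRefl ρ r) {j : ℕ} (hj : r ^ j ≠ 1) : IsRefl ρ (r ^ j) ∧ Fx ρ (r ^ j) = Fx ρ r := by
  have h1 := Fx_pow_le ρ r j
  have h2 : IsRefl ρ (r ^ j) := ⟨hj, hr.2.trans (Nat.add_le_add_right (Submodule.finrank_mono h1) 1)⟩
  refine ⟨h2, ?_⟩
  symm
  apply Submodule.eq_of_le_of_finrank_le h1
  have h3 : finrank (ZMod p) (Fx ρ (r ^ j)) < finrank (ZMod p) V := by
    apply Submodule.finrank_lt
    intro h
    apply hj
    apply eq_one_of_rho hinj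
    intro v
    rw [← mem_Fx, h]
    trivial
  have := hr.2
  omega

lemma HS_card_le [Fintype G] [Fintype V] {ρ : G →* (V →ₗ[ZMod p] V)} (hinj : Function.Injective ρ)
    (hc : ¬ p ∣ Nat.card G) :
    #(HS ρ) ≤ (Nat.card (du ρ).range).primeFactors.card * Nat.card (du ρ).ker := by
  set Q := (Nat.card (du ρ).range).primeFactors with hQ
  have hz : ∀ q : ℕ, ∃ ζ : (ZMod p)ˣ, (∃ g, orderOf (du ρ g) = q) → orderOf ζ = q := by
    intro q
    by_cases h : ∃ g, orderOf (du ρ g) = q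
    · exact ⟨du ρ h.choose, fun _ => h.choose_spec⟩
    · exact ⟨1, fun h' => absurd h' h⟩
  choose ζ hζ using hz
  have key : ∀ U ∈ HS ρ, ∃ g : G, Fx ρ g = U ∧ ∃ q ∈ Q, du ρ g = ζ q := by
    intro U hU
    obtain ⟨r, hr, rfl⟩ := mem_image.mp hU
    simp only [mem_filter_univ] at hr
    have hne : du ρ r ≠ 1 := by
      intro h
      apply refl_det hinj hc hr
      rw [← du_coe, h, Units.val_one]
    have he : orderOf (du ρ r) ≠ 1 := fun h => hne (orderOf_eq_one_iff.mp h)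
    set e := orderOf (du ρ r) with hedef
    have hpos : 0 < e := orderOf_pos _
    have hq := Nat.minFac_prime he
    set q := e.minFac
    have hqe : q ∣ e := Nat.minFac_dvd e
    have ho : orderOf (du ρ (r ^ (e / q))) = q := by
      rw [map_pow]
      exact orderOf_pow_orderOf_div hpos.ne' hqe
    have hζq := hζ q ⟨_, ho⟩
    have hprim : IsPrimitiveRoot (dt ρ (r ^ (e / q))) q := by
      have h := IsPrimitiveRoot.orderOf (dt ρ (r ^ (e / q)))
      rwa [← du_coe, orderOf_units, ho] at h
    haveI : NeZero q := ⟨hq.ne_zero⟩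
    obtain ⟨i, hi, hi2⟩ := hprim.eq_pow_of_pow_eq_one (ξ := ((ζ q : (ZMod p)ˣ) : ZMod p)) (by
      rw [← Units.val_pow_eq_pow_val]
      nth_rewrite 2 [← hζq]
      rw [pow_orderOf_eq_one, Units.val_one])
    rw [← map_pow, ← pow_mul, ← du_coe] at hi2
    have hi3 := Units.ext hi2
    refine ⟨r ^ (e / q * i), ?_, q, ?_, hi3⟩
    · apply (refl_pow hinj hr ?_).2
      intro h
      rw [h, map_one] at hi3
      rw [← hi3, orderOf_one] at hζq
      exact hq.one_lt.ne hζq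
    · rw [hQ, Nat.mem_primeFactors]
      refine ⟨hq, ?_, Nat.card_pos.ne'⟩
      rw [← ho]
      exact Subgroup.orderOf_dvd_natCard _ ⟨_, rfl⟩
  choose! γ hγ1 hγ2 using key
  have h1 : #(HS ρ) ≤ #(Q.biUnion fun q => ({g : G | du ρ g = ζ q} : Finset G)) := by
    apply card_le_card_of_injOn γ
    · intro U hU
      obtain ⟨q, hq, h⟩ := hγ2 U hU
      simp only [coe_biUnion, Set.mem_iUnion]
      exact ⟨q, hq, by simpa using h⟩
    · intro U hU W hW h
      rw [← hγ1 U hU, h, hγ1 W hW]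
  refine h1.trans (card_biUnion_le_card_mul _ _ _ ?_)
  intro q _
  rcases Finset.eq_empty_or_nonempty ({g : G | du ρ g = ζ q} : Finset G) with h | ⟨g, hg⟩
  · rw [h]; simp
  · simp only [mem_filter_univ] at hg
    have : Nat.card (du ρ).ker = #{g : G | g ∈ (du ρ).ker} := by
      rw [Nat.card_eq_fintype_card, Fintype.card_subtype]
    rw [this]
    apply card_le_card_of_injOn (fun x => g⁻¹ * x)
    · intro x hx
      simp only [coe_filter, mem_univ, true_and, Set.mem_setOf_eq] at hx ⊢
      rw [MonoidHom.mem_ker, map_mul, map_inv, hx, hg, inv_mul_cancel]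
    · intro x _ y _ h
      exact mul_left_cancel h

lemma range_two [Fintype G] [Fintype V] {ρ : G →* (V →ₗ[ZMod p] V)} (hinj : Function.Injective ρ)
    (hc : ¬ p ∣ Nat.card G) (hle : Nat.card G ≤ 2 * p + 9) (hp3 : 3 ≤ p)
    (hna : ¬ ∀ a b : G, a * b = b * a) (hk : p ≤ #(HS ρ)) :
    Nat.card (du ρ).range = 2 ∧ Nat.card G = 2 * Nat.card (du ρ).ker ∧
      #(HS ρ) ≤ Nat.card (du ρ).ker := by
  have h1 := HS_card_le hinj hc
  have h2 : Nat.card G = Nat.card (du ρ).range * Nat.card (du ρ).ker := by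
    rw [Subgroup.card_eq_card_quotient_mul_card_subgroup (du ρ).ker]
    congr 1
    exact Nat.card_congr (QuotientGroup.quotientKerEquivRange (du ρ)).toEquiv
  have h3 : 2 ≤ Nat.card (du ρ).ker := by
    by_contra h
    have h4 : 0 < Nat.card (du ρ).ker := Nat.card_pos
    have h5 : (du ρ).ker = ⊥ := Subgroup.card_eq_one.mp (by omega)
    have h6 := (MonoidHom.ker_eq_bot_iff _).mp h5
    apply hna
    intro a b
    apply h6
    rw [map_mul, map_mul, mul_comm]
  have h4 : Nat.card (du ρ).range ∣ p - 1 := by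
    have := Subgroup.card_subgroup_dvd_card (du ρ).range
    rwa [Nat.card_eq_fintype_card (α := (ZMod p)ˣ), ZMod.card_units_eq_totient,
      Nat.totient_prime hp.out] at this
  rw [h2] at hc hle
  have h5 := d_arith hp.out hp3 h3 (hk.trans h1) hle h4 hc
  refine ⟨h5, by rw [h2, h5], ?_⟩
  rw [h5, Nat.Prime.primeFactors (by norm_num)] at h1
  simpa using h1

end
end RegOrb


namespace RegOrb
section
open Classical
open Module Finset

lemma N_abelian {N : Type*} [Group N] [Fintype N] (σ : N →* N) {p : ℕ} (hp : p.Prime) (hp3 : 3 ≤ p)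
    (hc : ¬ p ∣ Nat.card N) (h1 : p + 1 ≤ Nat.card N) (h2 : Nat.card N ≤ p + 4)
    (hI : p ≤ #{n : N | σ n = n⁻¹}) (hex : ¬ (p = 5 ∧ Nat.card N = 8)) :
    ∀ a b : N, a * b = b * a := by
  by_cases h3 : 3 * Nat.card N < 4 * p
  · exact inv_abelian' σ (by omega)
  have hpr : (Nat.card N).Prime → ∀ a b : N, a * b = b * a := fun h => comm_of_prime h rfl
  have hsq : ∀ q : ℕ, q.Prime → Nat.card N = q ^ 2 → ∀ a b : N, a * b = b * a := by
    intro q hq h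
    have := Fact.mk hq
    exact (IsPGroup.isMulCommutative_of_card_eq_prime_sq h).is_comm.comm
  have hp13 : p < 13 := by omega
  interval_cases p
  · -- 3
    rcases (by omega : Nat.card N = 4 ∨ Nat.card N = 5 ∨ Nat.card N = 7) with h | h | h
    · exact hsq 2 (by norm_num) (by omega)
    · exact hpr (by rw [h]; norm_num)
    · exact hpr (by rw [h]; norm_num)
  · exact absurd hp (by norm_num)
  · rcases (by omega : Nat.card N = 7 ∨ Nat.card N = 9) with h | h
    · exact hpr (by rw [h]; norm_num)
    · exact hsq 3 (by norm_num) (by omega)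
  · exact absurd hp (by norm_num)
  · rcases (by omega : Nat.card N = 10 ∨ Nat.card N = 11) with h | h
    · exact ten_abelian h σ hI
    · exact hpr (by rw [h]; norm_num)
  · exact absurd hp (by norm_num)
  · exact absurd hp (by norm_num)
  · exact absurd hp (by norm_num)
  · have h : Nat.card N = 15 := by omega
    apply inv_abelian σ (by omega)
    intro C hC
    apply Subgroup.eq_top_of_card_eq
    obtain ⟨c, hc⟩ := Subgroup.card_subgroup_dvd_card C
    rw [h] at hc hC ⊢
    have h7 : 7 ≤ Nat.card C := by omega
    generalize Nat.card C = m at *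
    have : c < 3 := by nlinarith
    interval_cases c <;> omega
  · exact absurd hp (by norm_num)

lemma N_gen {N : Type*} [Group N] [Fintype N] {p : ℕ} (hp : p.Prime) (hp3 : 3 ≤ p)
    (hc : ¬ p ∣ Nat.card N) (h1 : p + 1 ≤ Nat.card N) (h2 : Nat.card N ≤ p + 4)
    (S : Finset N) (hS : p ≤ #S) (K : Subgroup N) (hK : ∀ n ∈ S, n ∈ K) : K = ⊤ := by
  have h3 : p ≤ Nat.card K := by
    rw [Nat.card_eq_fintype_card, Fintype.card_subtype]
    refine hS.trans (card_le_card ?_)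
    intro n hn
    simpa using hK n hn
  by_cases h4 : Nat.card N < 2 * Nat.card K
  · exact top_of_half K h4
  · have : p = 3 ∨ p = 4 := by omega
    rcases this with rfl | rfl
    · have h7 : Nat.card N = 7 := by omega
      apply Subgroup.eq_top_of_card_eq
      have := Subgroup.card_subgroup_dvd_card K
      rw [h7] at this ⊢
      rcases (Nat.dvd_prime (by norm_num)).mp this with h | h
      · omega
      · exact h
    · exact absurd hp (by norm_num)

variable {p : ℕ} [hp : Fact p.Prime] {V : Type*} [AddCommGroup V] [Module (ZMod p) V]
  {G : Type*} [Group G] (ρ : G →* (V →ₗ[ZMod p] V))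

lemma du_two [Finite G] {ρ : G →* (V →ₗ[ZMod p] V)} (h2 : Nat.card (du ρ).range = 2) {g h : G}
    (hg : g ∉ (du ρ).ker) (hh : h ∉ (du ρ).ker) : du ρ g = du ρ h := by
  obtain ⟨x, y, hxy, hu⟩ := Nat.card_eq_two_iff.mp h2
  have h3 : ∀ z : (du ρ).range, z = x ∨ z = y := by
    intro z
    have : z ∈ ({x, y} : Set _) := by rw [hu]; trivial
    simpa using this
  have hg' : (⟨du ρ g, ⟨g, rfl⟩⟩ : (du ρ).range) ≠ 1 := fun h => hg (congrArg Subtype.val h)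
  have hh' : (⟨du ρ h, ⟨h, rfl⟩⟩ : (du ρ).range) ≠ 1 := fun h' => hh (congrArg Subtype.val h')
  have : (⟨du ρ g, ⟨g, rfl⟩⟩ : (du ρ).range) = ⟨du ρ h, ⟨h, rfl⟩⟩ := by
    rcases h3 1 with h1 | h1 <;> rcases h3 ⟨du ρ g, ⟨g, rfl⟩⟩ with h4 | h4 <;>
    rcases h3 ⟨du ρ h, ⟨h, rfl⟩⟩ with h5 | h5 <;> rw [h4, h5] <;> rw [h4] at hg' <;>
    rw [h5] at hh' <;> rw [h1] at hg' hh' <;> tauto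
  exact congrArg Subtype.val this

lemma struct [Fintype G] [Fintype V] {ρ : G →* (V →ₗ[ZMod p] V)} (hinj : Function.Injective ρ)
    (hc : ¬ p ∣ Nat.card G) (hle : Nat.card G ≤ 2 * p + 9) (hp3 : 3 ≤ p)
    (hna : ¬ ∀ a b : G, a * b = b * a) (hk : p ≤ #(HS ρ)) :
    ∃ (N : Subgroup G) (t : G), N.Normal ∧ IsRefl ρ t ∧ t * t = 1 ∧ t ∉ N ∧
      Nat.card G = 2 * Nat.card N ∧
      p + 1 ≤ Nat.card N ∧ Nat.card N ≤ p + 4 ∧ ¬ p ∣ Nat.card N ∧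
      p ≤ #{n : N | IsRefl ρ (t * n)} ∧ (∀ n : G, IsRefl ρ (t * n) → t * n * t = n⁻¹) ∧
      (∀ g, g ∉ N → t * g ∈ N) := by
  obtain ⟨h2, hcard, hkN⟩ := range_two hinj hc hle hp3 hna hk
  have hX : ∀ r, IsRefl ρ r → r ∉ (du ρ).ker := by
    intro r hr h
    apply refl_det hinj hc hr
    rw [← du_coe, MonoidHom.mem_ker.mp h, Units.val_one]
  have hinvol : ∀ r, IsRefl ρ r → r * r = 1 := by
    intro r hr
    have hr' : IsRefl ρ r⁻¹ := by
      refine ⟨fun h => hr.1 (inv_eq_one.mp h), ?_⟩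
      rw [Fx_inv]
      exact hr.2
    have h1 : r = r⁻¹ := by
      apply refl_unique hinj hc hr (Fx_inv ρ r).symm
      rw [← du_coe, ← du_coe, du_two h2 (hX r hr) (hX _ hr')]
    nth_rewrite 2 [h1]
    simp
  have hXcard : p ≤ #{g : G | IsRefl ρ g} := hk.trans card_image_le
  obtain ⟨t, ht⟩ := card_pos.mp (lt_of_lt_of_le hp.out.pos hXcard)
  simp only [mem_filter_univ] at ht
  have htt := hinvol t ht
  have htinv : t⁻¹ = t := inv_eq_of_mul_eq_one_right htt
  have hcN : ¬ p ∣ Nat.card (du ρ).ker := fun h => hc (h.trans (hcard ▸ Dvd.intro_left 2 rfl))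
  have htg : ∀ g, g ∉ (du ρ).ker → t * g ∈ (du ρ).ker := by
    intro g hg
    rw [MonoidHom.mem_ker, map_mul, du_two h2 hg (hX t ht), ← map_mul, htt, map_one]
  refine ⟨(du ρ).ker, t, inferInstance, ht, htt, hX t ht, hcard, ?_, by omega, hcN, ?_, ?_, htg⟩
  · have : Nat.card (du ρ).ker ≠ p := fun h => hcN (dvd_of_eq h.symm)
    omega
  · refine hXcard.trans ?_
    apply card_le_card_of_injOn (fun g => if h : g ∉ (du ρ).ker then ⟨t * g, htg g h⟩ else 1)
    · intro g hg
      simp only [coe_filter, mem_univ, true_and, Set.mem_setOf_eq] at hg ⊢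
      rw [dif_pos (hX g hg)]
      change IsRefl ρ (t * (t * g))
      rwa [← mul_assoc, htt, one_mul]
    · intro g hg g' hg' h
      simp only [coe_filter, mem_univ, true_and, Set.mem_setOf_eq] at hg hg' h
      rw [dif_pos (hX g hg), dif_pos (hX g' hg')] at h
      exact mul_left_cancel (congrArg Subtype.val h)
  · intro n hn
    have := hinvol _ hn
    rw [eq_inv_iff_mul_eq_one]
    rw [← this]
    group

end
end RegOrb


namespace RegOrb
section
open Classical
open Module Finset

variable {p : ℕ} [hp : Fact p.Prime] {V : Type*} [AddCommGroup V] [Module (ZMod p) V]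
  {G : Type*} [Group G] (ρ : G →* (V →ₗ[ZMod p] V))

lemma two_ne (hp3 : 3 ≤ p) : (2 : ZMod p) ≠ 0 := by
  intro h
  have : ((2 : ℕ) : ZMod p) = 0 := by exact_mod_cast h
  rw [ZMod.natCast_eq_zero_iff] at this
  have := Nat.le_of_dvd (by norm_num) this
  omega

lemma refl_root [Finite V] {ρ : G →* (V →ₗ[ZMod p] V)} (hinj : Function.Injective ρ) {t : G}
    (ht : IsRefl ρ t) (htt : t * t = 1) :
    ∃ (f : V →ₗ[ZMod p] ZMod p) (a : V), (∀ v, ρ t v = v + f v • a) ∧ f a = -2 := by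
  obtain ⟨f, a, hf⟩ := refl_form ρ ht
  refine ⟨f, a, hf, ?_⟩
  obtain ⟨v, hv⟩ : ∃ v, f v • a ≠ 0 := by
    by_contra h
    push Not at h
    apply ht.1
    apply eq_one_of_rho hinj
    intro v
    rw [hf, h, add_zero]
  have h1 : ρ t (ρ t v) = v := by rw [← rho_mul, htt, rho_one]
  rw [hf (ρ t v), hf v, map_add, map_smul, smul_eq_mul] at h1
  have h2 : (2 + f a) • (f v • a) = 0 := by
    linear_combination (norm := module) h1
  rcases smul_eq_zero.mp h2 with h | h
  · linear_combination h
  · exact absurd h hv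

section
variable {ρ} {N : Subgroup G} {t n0 : G} {f : V →ₗ[ZMod p] ZMod p} {a : V}

lemma root_ta (hf : ∀ v, ρ t v = v + f v • a) (hfa : f a = -2) : ρ t a = -a := by
  rw [hf, hfa]
  module

/-- conjugation by the reflection -/
lemma conj_t (htt : t * t = 1) {n : G} (h : t * n * t = n⁻¹) (v : V) :
    ρ t (ρ n v) = ρ n⁻¹ (ρ t v) := by
  rw [← h, ← rho_mul, ← rho_mul, mul_assoc (t * n), htt, mul_one]

lemma G_trace (htt : t * t = 1) (hf : ∀ v, ρ t v = v + f v • a) (hfa : f a = -2)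
    {n : G} (h : t * n * t = n⁻¹) : ρ n a + ρ n⁻¹ a = (- f (ρ n a)) • a := by
  have h1 := conj_t (ρ := ρ) htt h a
  rw [root_ta hf hfa, hf, map_neg] at h1
  linear_combination (norm := module) h1

lemma G_quad (htt : t * t = 1) (hf : ∀ v, ρ t v = v + f v • a) (hfa : f a = -2)
    {n : G} (h : t * n * t = n⁻¹) : ρ n (ρ n a) = (- f (ρ n a)) • ρ n a - a := by
  have h1 := congrArg (ρ n) (G_trace htt hf hfa h)
  rw [map_add, map_smul, rho_rho_inv] at h1
  linear_combination (norm := module) h1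

lemma G_indep [Finite G] (hinj : Function.Injective ρ) (hc : ¬ p ∣ Nat.card G)
    (htt : t * t = 1) (hf : ∀ v, ρ t v = v + f v • a) (hfa : f a = -2)
    {n : G} (h : t * n * t = n⁻¹) (hn : n * n ≠ 1) (μ : ZMod p) : ρ n a ≠ μ • a := by
  intro hμ
  have ha : ρ (n * n) a = a := by
    have h1 := conj_t (ρ := ρ) htt h a
    rw [root_ta hf hfa, hμ, map_smul, root_ta hf hfa, map_neg] at h1
    have h2 := congrArg (ρ n) h1
    rw [map_neg, rho_rho_inv, map_smul, map_neg] at h2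
    have h3 := hμ
    rw [rho_mul, hμ, map_smul]
    linear_combination (norm := module) -h2
  apply hn
  apply eq_one_of_sq hinj hc
  have key : ∀ u, ∃ s : ZMod p, ρ (n * n) u - u = s • a := by
    intro u
    have e : n * n = n * t * n⁻¹ * t := by
      have : n⁻¹ * t = t * n := by
        rw [← h, mul_assoc, htt, mul_one]
      rw [mul_assoc (n * t), this, mul_assoc, ← mul_assoc t, htt, one_mul]
    rw [e, rho_mul, rho_mul, rho_mul, hf, hf u]
    refine ⟨f u + f (ρ n⁻¹ (u + f u • a)) * μ, ?_⟩
    rw [map_add (ρ n), rho_rho_inv, map_smul (ρ n), hμ]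
    module
  intro u
  obtain ⟨s, hs⟩ := key u
  rw [hs, map_smul, ha]

lemma G_disc [Finite G] (hp3 : 3 ≤ p) (hinj : Function.Injective ρ) (hc : ¬ p ∣ Nat.card G)
    (htt : t * t = 1) (hf : ∀ v, ρ t v = v + f v • a) (hfa : f a = -2)
    {n : G} (h : t * n * t = n⁻¹) (hn : n * n ≠ 1) : (f (ρ n a)) ^ 2 - 4 ≠ 0 := by
  intro h4
  have hq := G_quad htt hf hfa h
  set c := f (ρ n a) with hcdef
  have hnn : ρ (n * n) a = a := by
    apply semis ρ hc
    have h3 : ρ n (ρ n (ρ n a)) = -c • ρ n (ρ n a) - ρ n a := by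
      have := congrArg (ρ n) hq
      rwa [map_sub, map_smul] at this
    have h5 : ρ n (ρ n (ρ n (ρ n a))) = -c • ρ n (ρ n (ρ n a)) - ρ n (ρ n a) := by
      rw [h3, map_sub, map_smul, h3]
    simp only [rho_mul, map_sub]
    rw [h5, h3, hq]
    have hc2 : c ^ 2 = 4 := by linear_combination h4
    have e1 : (c ^ 2 - 4) • ρ n a = 0 := by rw [h4, zero_smul]
    have e2 : (c ^ 2 - 4) • a = 0 := by rw [h4, zero_smul]
    linear_combination (norm := module) (-c) • e1 - e2
  rw [rho_mul, hq] at hnn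
  have h2 := two_ne hp3
  have hc0 : c ≠ 0 := by
    intro h0
    rw [h0] at h4
    apply h2
    have : (2 : ZMod p) * 2 = 0 := by linear_combination -h4
    rcases mul_eq_zero.mp this with h | h <;> exact h
  apply G_indep hinj hc htt hf hfa h hn (- (c⁻¹ * 2))
  have h5 : (c⁻¹ * c) • ρ n a = -(c⁻¹ * 2) • a := by
    linear_combination (norm := module) -(c⁻¹ • hnn)
  rwa [inv_mul_cancel₀ hc0, one_smul] at h5

lemma G_mem [Finite G] (hp3 : 3 ≤ p) (hinj : Function.Injective ρ) (hc : ¬ p ∣ Nat.card G)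
    (htt : t * t = 1) (hf : ∀ v, ρ t v = v + f v • a) (hfa : f a = -2)
    {n : G} (h : t * n * t = n⁻¹) (hn : n * n ≠ 1) {m : G} (hm : t * m * t = m⁻¹)
    (hmn : m * n = n * m) : ρ m a ∈ Submodule.span (ZMod p) {a, ρ n a} := by
  have hd := G_disc hp3 hinj hc htt hf hfa h hn
  have h2 := two_ne hp3
  have hn1 := G_trace htt hf hfa h
  have hm1 := G_trace htt hf hfa hm
  set c := f (ρ n a) with hcdef
  set e := f (ρ m a) with hedef
  have hsum : ∀ x : G, x * n = n * x → ρ n (ρ x a) + ρ n⁻¹ (ρ x a) = -c • ρ x a := by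
    intro x hx
    have hx' : n⁻¹ * x = x * n⁻¹ := by
      rw [inv_mul_eq_iff_eq_mul, ← mul_assoc, ← hx, mul_assoc, mul_inv_cancel, mul_one]
    rw [← rho_mul, ← rho_mul, ← hx, hx', rho_mul, rho_mul, ← map_add, hn1, map_smul]
  have hs1 := hsum m hmn
  have hs0 := hn1
  -- u = 2 m a + e a
  set u := (2 : ZMod p) • ρ m a + e • a with hu
  have htu : ρ t u = u := by
    rw [hu, map_add, map_smul, map_smul, root_ta hf hfa, hf, ← hedef]
    module
  have hsu : ρ n u + ρ n⁻¹ u = -c • u := by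
    rw [hu]
    simp only [map_add, map_smul]
    linear_combination (norm := module) (2 : ZMod p) • hs1 + e • hs0
  set w := ρ n u - ρ n⁻¹ u with hw
  have htw : ρ t w = - w := by
    have h' : t * n⁻¹ * t = n⁻¹⁻¹ := by
      have e' : (t * n * t)⁻¹ = n⁻¹⁻¹ := by rw [h]
      rw [← e', mul_inv_rev, mul_inv_rev, inv_eq_of_mul_eq_one_right htt, mul_assoc]
    rw [hw, map_sub, conj_t htt h, conj_t htt h', htu, inv_inv]
    abel
  have hwa : (2 : ZMod p) • w = - f w • a := by
    have := hf w
    rw [htw] at this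
    linear_combination (norm := module) -this
  have hdw : ρ n w - ρ n⁻¹ w = (c ^ 2 - 4) • u := by
    have e1 := congrArg (ρ n) hsu
    have e2 := congrArg (ρ n⁻¹) hsu
    simp only [map_add, map_smul, rho_rho_inv, rho_inv_rho] at e1 e2
    rw [hw]
    simp only [map_sub, rho_rho_inv, rho_inv_rho]
    linear_combination (norm := module) e1 + e2 - c • hsu
  have hmem : u ∈ Submodule.span (ZMod p) {a, ρ n a} := by
    have e3 : (2 * (c ^ 2 - 4)) • u = - f w • ((2 : ZMod p) • ρ n a + c • a) := by
      have e1 := congrArg (ρ n) hwa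
      have e2 := congrArg (ρ n⁻¹) hwa
      simp only [map_smul] at e1 e2
      linear_combination (norm := module) -((2 : ZMod p) • hdw) + e1 - e2 + (f w) • hs0
    have e4 : u = (2 * (c ^ 2 - 4))⁻¹ • (2 * (c ^ 2 - 4)) • u := by
      rw [smul_smul, inv_mul_cancel₀ (mul_ne_zero h2 hd), one_smul]
    rw [e4, e3]
    apply Submodule.smul_mem
    apply Submodule.smul_mem
    apply Submodule.add_mem <;> apply Submodule.smul_mem <;> apply Submodule.subset_span <;> simp
  have e5 : ρ m a = (2 : ZMod p)⁻¹ • (u - e • a) := by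
    rw [hu, add_sub_cancel_right, smul_smul, inv_mul_cancel₀ h2, one_smul]
  rw [e5]
  apply Submodule.smul_mem
  apply Submodule.sub_mem _ hmem
  apply Submodule.smul_mem
  apply Submodule.subset_span
  simp

lemma G_root [Finite G] [Finite V] (hp3 : 3 ≤ p) (hinj : Function.Injective ρ)
    (hc : ¬ p ∣ Nat.card G)
    (htt : t * t = 1) (hf : ∀ v, ρ t v = v + f v • a) (hfa : f a = -2)
    {n : G} (h : t * n * t = n⁻¹) (hn : n * n ≠ 1) {m : G} (hm : t * m * t = m⁻¹)
    (hmn : m * n = n * m) (hr : IsRefl ρ (t * m)) (v : V) :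
    ρ m v - v ∈ Submodule.span (ZMod p) {a, ρ n a} := by
  set W := Submodule.span (ZMod p) {a, ρ n a} with hW
  have h2 := two_ne hp3
  have haW : a ∈ W := Submodule.subset_span (by simp)
  have hnW : ρ n a ∈ W := Submodule.subset_span (by simp)
  have htW : ∀ w ∈ W, ρ t w ∈ W := by
    intro w hw
    rw [hf]
    exact W.add_mem hw (W.smul_mem _ haW)
  obtain ⟨f', b, hb⟩ := refl_form ρ hr
  have hbW : b ∈ W := by
    by_contra hbW
    have hfix : ∀ w ∈ W, ρ (t * m) w ∈ W → ρ (t * m) w = w := by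
      intro w hw h1
      rw [hb] at h1 ⊢
      have h3 : f' w • b ∈ W := by simpa using W.sub_mem h1 hw
      by_cases h0 : f' w = 0
      · rw [h0, zero_smul, add_zero]
      · exact absurd ((W.smul_mem_iff h0).mp h3) hbW
    have hma := G_mem hp3 hinj hc htt hf hfa h hn hm hmn
    have hmn' : t * (m * n) * t = (m * n)⁻¹ := by
      rw [hmn, mul_inv_rev, ← hm, ← h]
      have : t * m * t * (t * n * t) = t * m * (t * t) * n * t := by group
      rw [this, htt, mul_one, ← hmn]
      group
    have hmna := G_mem hp3 hinj hc htt hf hfa h hn hmn' (by rw [hmn, mul_assoc, ← hmn])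
    have e1 := hfix a haW (by rw [rho_mul]; exact htW _ hma)
    have e2 := hfix (ρ n a) hnW (by rw [← rho_mul, mul_assoc, rho_mul]; exact htW _ hmna)
    have e3 : ρ n a = ρ n⁻¹ a := by
      rw [← e2, ← rho_mul, mul_assoc, hmn, rho_mul, rho_mul, conj_t htt h, ← rho_mul ρ t, e1]
    have e4 := G_trace htt hf hfa h
    rw [← e3] at e4
    apply G_indep hinj hc htt hf hfa h hn (-((2 : ZMod p)⁻¹ * f (ρ n a)))
    have h5 : ((2 : ZMod p)⁻¹ * 2) • ρ n a = -((2 : ZMod p)⁻¹ * f (ρ n a)) • a := by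
      linear_combination (norm := module) ((2 : ZMod p)⁻¹) • e4
    rwa [inv_mul_cancel₀ h2, one_smul] at h5
  have e : ρ m v = ρ t (ρ (t * m) v) := by
    rw [← rho_mul, ← mul_assoc, htt, one_mul]
  rw [e, hf, hb]
  have : v + f' v • b + f (v + f' v • b) • a - v = f' v • b + f (v + f' v • b) • a := by abel
  rw [this]
  exact W.add_mem (W.smul_mem _ hbW) (W.smul_mem _ haW)

end
end
end RegOrb


namespace RegOrb
section
open Classical
open Module Finset

variable {p : ℕ} [hp : Fact p.Prime] {V : Type*} [AddCommGroup V] [Module (ZMod p) V]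
  {G : Type*} [Group G] {ρ : G →* (V →ₗ[ZMod p] V)}

lemma G_cyc [Finite G] (hp3 : 3 ≤ p) (hinj : Function.Injective ρ) (hc : ¬ p ∣ Nat.card G)
    {N : Subgroup G} {t n : G} {f : V →ₗ[ZMod p] ZMod p} {a : V}
    (htt : t * t = 1) (hf : ∀ v, ρ t v = v + f v • a) (hfa : f a = -2)
    (hnN : n ∈ N) (hn : n * n ≠ 1) (hinv : ∀ m ∈ N, t * m * t = m⁻¹)
    (hab : ∀ m ∈ N, ∀ m' ∈ N, m * m' = m' * m)
    (hW : ∀ m ∈ N, ∀ v, ρ m v - v ∈ Submodule.span (ZMod p) {a, ρ n a})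
    (hN : p ≤ Nat.card N) : ∃ g ∈ N, orderOf g = Nat.card N ∧ Nat.card N = p + 1 := by
  let L := AlgebraicClosure (ZMod p)
  haveI : CharP L p := charP_of_injective_algebraMap (algebraMap (ZMod p) L).injective p
  let ι := algebraMap (ZMod p) L
  have h := hinv n hnN
  have hd := G_disc hp3 hinj hc htt hf hfa h hn
  have hq := G_quad htt hf hfa h
  set c := f (ρ n a) with hcdef
  -- the eigenvalue
  obtain ⟨l, hl⟩ : ∃ l : L, l * l + ι c * l + 1 = 0 := by
    obtain ⟨l, hl⟩ := IsAlgClosed.exists_root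
      (Polynomial.C 1 * Polynomial.X ^ 2 + Polynomial.C (ι c) * Polynomial.X + Polynomial.C 1)
      (by rw [Polynomial.degree_quadratic one_ne_zero]; norm_num)
    refine ⟨l, ?_⟩
    simpa [Polynomial.IsRoot, pow_two] using hl
  -- the eigenfunctional, scaled by the eigenvalue
  let ψ : V → L := fun v => l * ι (f (ρ n v)) - ι (f v)
  have ψadd : ∀ v w, ψ (v + w) = ψ v + ψ w := by
    intro v w
    simp only [ψ, map_add]
    ring
  have ψsmul : ∀ (s : ZMod p) v, ψ (s • v) = ι s * ψ v := by
    intro s v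
    simp only [ψ, map_smul, smul_eq_mul, map_mul]
    ring
  have hψa : ψ a ≠ 0 := by
    intro h0
    have h1 : l * ι c + ι 2 = 0 := by
      have : ψ a = l * ι c - ι (-2) := by simp only [ψ, hfa]; rfl
      rw [this, map_neg] at h0
      linear_combination h0
    have e2 : ι 2 = 2 := map_ofNat ι 2
    rw [e2] at h1
    have h2 : l * l = 1 := by linear_combination hl - h1
    apply hd
    apply (algebraMap (ZMod p) L).injective
    rw [map_sub, map_pow, map_ofNat, map_zero]
    change ι c ^ 2 - 4 = 0
    linear_combination (l * ι c - 2) * h1 - (ι c) ^ 2 * h2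
  have ψn : ∀ m ∈ N, ψ (ρ n (ρ m a)) = l * ψ (ρ m a) := by
    intro m hm
    have e : ρ n (ρ n (ρ m a)) = -c • ρ n (ρ m a) - ρ m a := by
      have e1 := congrArg (ρ m) hq
      rw [map_sub, map_smul] at e1
      have e2 : ∀ v, ρ m (ρ n v) = ρ n (ρ m v) := by
        intro v
        rw [← rho_mul, hab m hm n hnN, rho_mul]
      rwa [e2, e2] at e1
    simp only [ψ]
    rw [e]
    simp only [map_sub, map_smul, smul_eq_mul, map_mul, map_neg]
    linear_combination (-ι (f (ρ n (ρ m a)))) * hl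
  have ψm : ∀ m ∈ N, ∀ w ∈ Submodule.span (ZMod p) {a, ρ n a},
      ψ (ρ m w) * ψ a = ψ (ρ m a) * ψ w := by
    intro m hm w hw
    obtain ⟨α, β, rfl⟩ := Submodule.mem_span_pair.mp hw
    have e1 := ψn m hm
    have e2 := ψn 1 N.one_mem
    rw [rho_one] at e2
    rw [map_add, map_smul, map_smul, ψadd, ψadd, ψsmul, ψsmul, ψsmul, ψsmul,
      ← rho_mul ρ m n, hab m hm n hnN, rho_mul, e1, e2]
    ring
  have haW : a ∈ Submodule.span (ZMod p) {a, ρ n a} := Submodule.subset_span (by simp)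
  have hmW : ∀ m ∈ N, ρ m a ∈ Submodule.span (ZMod p) {a, ρ n a} := by
    intro m hm
    have := Submodule.add_mem _ (hW m hm a) haW
    rwa [sub_add_cancel] at this
  let φ : N →* L :=
    { toFun := fun m => ψ (ρ m a) / ψ a
      map_one' := by
        change ψ (ρ 1 a) / ψ a = 1
        rw [rho_one, div_self hψa]
      map_mul' := by
        intro m m'
        change ψ (ρ (m * m') a) / ψ a = ψ (ρ m a) / ψ a * (ψ (ρ m' a) / ψ a)
        rw [rho_mul]
        have := ψm m m.2 _ (hmW m' m'.2)
        rw [div_mul_div_comm, div_eq_div_iff hψa (mul_ne_zero hψa hψa)]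
        linear_combination ψ a * this }
  have φdef : ∀ m : N, φ m = ψ (ρ m a) / ψ a := fun _ => rfl
  have φtr : ∀ m : N, φ m + φ m⁻¹ = -ι (f (ρ m a)) := by
    intro m
    have e := congrArg ψ (G_trace htt hf hfa (hinv m m.2))
    rw [ψadd, ψsmul, map_neg] at e
    rw [φdef, φdef, ← add_div, div_eq_iff hψa]
    exact e
  have φone : ∀ m : N, φ m * φ m⁻¹ = 1 := by
    intro m
    rw [← map_mul, mul_inv_cancel, map_one]
  have φinj : Function.Injective φ := by
    rw [injective_iff_map_eq_one]
    intro m hm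
    have e1 := φtr m
    have e2 := φone m
    rw [hm] at e1 e2
    rw [one_mul] at e2
    rw [e2] at e1
    have e3 : f (ρ m a) = -2 := by
      apply (algebraMap (ZMod p) L).injective
      rw [map_neg, map_ofNat]
      change ι (f (ρ m a)) = -2
      linear_combination e1
    have e4 := G_quad htt hf hfa (hinv m m.2)
    rw [e3] at e4
    have e5 : ρ m a = a := by
      apply semis ρ hc
      rw [map_sub, e4]
      module
    apply Subtype.ext
    apply eq_one_of_sq hinj hc
    intro v
    obtain ⟨α, β, hv⟩ := Submodule.mem_span_pair.mp (hW m m.2 v)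
    rw [← hv, map_add, map_smul, map_smul, e5, ← rho_mul ρ (m : G) n, hab m m.2 n hnN, rho_mul, e5]
  haveI : IsCyclic N := isCyclic_of_subgroup_isDomain φ φinj
  obtain ⟨g, hg⟩ := IsCyclic.exists_ofOrder_eq_natCard (α := N)
  refine ⟨g, g.2, by rw [Subgroup.orderOf_coe, hg], ?_⟩
  have e1 := φtr g
  have e2 := φone g
  have hquad : φ g * φ g + ι (f (ρ g a)) * φ g + 1 = 0 := by
    linear_combination φ g * e1 - e2
  set x := φ g with hx
  have hfrob : x ^ p * x ^ p + ι (f (ρ g a)) * x ^ p + 1 = 0 := by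
    have := congrArg (frobenius L p) hquad
    simp only [map_add, map_mul, map_one, map_zero, frobenius_def] at this
    rwa [← map_pow ι, ZMod.pow_card] at this
  have hprod : (x ^ p - x) * (x ^ (p + 1) - 1) = 0 := by
    rw [pow_succ]
    linear_combination x * hfrob - x ^ p * hquad
  rcases mul_eq_zero.mp hprod with h1 | h1
  · exfalso
    have h2 : φ (g ^ p) = φ g := by rw [map_pow, ← hx]; linear_combination h1
    have h3 := φinj h2
    obtain ⟨j, rfl⟩ : ∃ j, p = j + 1 := ⟨p - 1, by omega⟩
    rw [pow_succ, mul_eq_right] at h3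
    have := Nat.le_of_dvd (by omega) (orderOf_dvd_of_pow_eq_one h3)
    omega
  · have h2 : φ (g ^ (p + 1)) = φ 1 := by rw [map_pow, ← hx, map_one]; linear_combination h1
    have h3 := orderOf_dvd_of_pow_eq_one (φinj h2)
    rw [hg] at h3
    obtain ⟨j, hj⟩ := h3
    have hj2 : j < 2 := by nlinarith
    interval_cases j <;> omega

lemma G_dihedral [Fintype G] [Fintype V] (hp3 : 3 ≤ p) (hinj : Function.Injective ρ)
    (hc : ¬ p ∣ Nat.card G) (hna : ¬ ∀ a b : G, a * b = b * a)
    {N : Subgroup G} {t : G} (ht : IsRefl ρ t) (htt : t * t = 1) (htN : t ∉ N)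
    (hcard : Nat.card G = 2 * Nat.card N) (h1 : p + 1 ≤ Nat.card N) (h2 : Nat.card N ≤ p + 4)
    (hcN : ¬ p ∣ Nat.card N) (hS : p ≤ #{n : N | IsRefl ρ (t * n)})
    (hSinv : ∀ n : G, IsRefl ρ (t * n) → t * n * t = n⁻¹) (htg : ∀ g, g ∉ N → t * g ∈ N)
    (hab : ∀ a b : N, a * b = b * a) : Nonempty (G ≃* DihedralGroup (p + 1)) := by
  have hab' : ∀ m ∈ N, ∀ m' ∈ N, m * m' = m' * m := fun m hm m' hm' =>
    congrArg Subtype.val (hab ⟨m, hm⟩ ⟨m', hm'⟩)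
  have hinv : ∀ m ∈ N, t * m * t = m⁻¹ := by
    let K : Subgroup N :=
      { carrier := {m | t * (m : G) * t = (m : G)⁻¹}
        one_mem' := by
          change t * (1 : G) * t = 1⁻¹
          rw [mul_one, htt, inv_one]
        mul_mem' := by
          intro x y hx hy
          change t * ((x : G) * y) * t = ((x : G) * y)⁻¹
          change t * (x : G) * t = (x : G)⁻¹ at hx
          change t * (y : G) * t = (y : G)⁻¹ at hy
          rw [hab' x x.2 y y.2, mul_inv_rev, ← hx, ← hy, hab' y y.2 x x.2]
          have : t * (x : G) * t * (t * (y : G) * t) = t * (x : G) * (t * t) * (y : G) * t := by group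
          rw [this, htt]
          group
        inv_mem' := by
          intro x hx
          change t * (x : G)⁻¹ * t = (x : G)⁻¹⁻¹
          change t * (x : G) * t = (x : G)⁻¹ at hx
          have e' : (t * (x : G) * t)⁻¹ = (x : G)⁻¹⁻¹ := by rw [hx]
          rw [← e', mul_inv_rev, mul_inv_rev, inv_eq_of_mul_eq_one_right htt, mul_assoc] }
    have hK : K = ⊤ := N_gen hp.out hp3 hcN h1 h2 _ hS K (by
      intro n hn
      simp only [mem_filter_univ] at hn
      exact hSinv n hn)
    intro m hm
    have : (⟨m, hm⟩ : N) ∈ K := by rw [hK]; trivial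
    exact this
  obtain ⟨n, hnN, hn⟩ : ∃ n ∈ N, n * n ≠ 1 := by
    by_contra hno
    push Not at hno
    have htc : ∀ m ∈ N, t * m = m * t := by
      intro m hm
      have e := hinv m hm
      rw [inv_eq_of_mul_eq_one_right (hno m hm)] at e
      nth_rewrite 2 [← e]
      rw [mul_assoc, htt, mul_one]
    have hcN' : ∀ g, ∀ m ∈ N, g * m = m * g := by
      intro g m hm
      by_cases hg : g ∈ N
      · exact hab' g hg m hm
      · have e : g = t * (t * g) := by rw [← mul_assoc, htt, one_mul]
        rw [e, mul_assoc, hab' _ (htg g hg) m hm, ← mul_assoc, htc m hm, mul_assoc]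
    have htc' : ∀ g, t * g = g * t := by
      intro g
      by_cases hg : g ∈ N
      · exact htc g hg
      · have e : g = t * (t * g) := by rw [← mul_assoc, htt, one_mul]
        nth_rewrite 1 [e]
        rw [htc _ (htg g hg), ← mul_assoc t, ← mul_assoc t, htt, one_mul]
    apply hna
    intro g g'
    by_cases hg : g' ∈ N
    · exact hcN' g g' hg
    · have e : g' = t * (t * g') := by rw [← mul_assoc, htt, one_mul]
      calc g * g' = g * (t * (t * g')) := by rw [← e]
        _ = (t * g) * (t * g') := by rw [htc' g, mul_assoc]
        _ = t * (t * g') * g := by rw [mul_assoc, hcN' g _ (htg g' hg)]; simp only [mul_assoc]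
        _ = g' * g := by rw [← e]
  obtain ⟨f, a, hf, hfa⟩ := refl_root hinj ht htt
  have hW : ∀ m ∈ N, ∀ v, ρ m v - v ∈ Submodule.span (ZMod p) {a, ρ n a} := by
    let K : Subgroup N :=
      { carrier := {m | ∀ v, ρ m v - v ∈ Submodule.span (ZMod p) {a, ρ n a}}
        one_mem' := by
          intro v
          change ρ (1 : G) v - v ∈ _
          rw [rho_one, sub_self]
          exact Submodule.zero_mem _
        mul_mem' := by
          intro x y hx hy v
          change ρ ((x : G) * y) v - v ∈ _
          have e : ρ ((x : G) * y) v - v = (ρ x (ρ y v) - ρ y v) + (ρ y v - v) := by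
            rw [rho_mul]; abel
          rw [e]
          exact Submodule.add_mem _ (hx _) (hy _)
        inv_mem' := by
          intro x hx v
          change ρ (x : G)⁻¹ v - v ∈ _
          have e : ρ (x : G)⁻¹ v - v = - (ρ x (ρ (x : G)⁻¹ v) - ρ (x : G)⁻¹ v) := by
            rw [rho_rho_inv]; abel
          rw [e]
          exact Submodule.neg_mem _ (hx _) }
    have hK : K = ⊤ := N_gen hp.out hp3 hcN h1 h2 _ hS K (by
      intro m hm
      simp only [mem_filter_univ] at hm
      intro v
      exact G_root hp3 hinj hc htt hf hfa (hinv n hnN) hn (hinv m m.2) (hab' m m.2 n hnN) hm v)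
    intro m hm
    have : (⟨m, hm⟩ : N) ∈ K := by rw [hK]; trivial
    exact this
  obtain ⟨g, hgN, hgo, hNp⟩ := G_cyc hp3 hinj hc htt hf hfa hnN hn hinv hab' hW (by omega)
  refine dihedral_of (p + 1) (by rw [hcard, hNp]) g t (by rw [hgo, hNp]) htt ?_ (hinv g hgN)
  intro h
  exact htN ((Subgroup.zpowers_le.mpr hgN) h)

end
end RegOrb


namespace RegOrb
section
open Classical
open Module Finset

lemma eight_struct {M : Type*} [Group M] [Finite M] (h8 : Nat.card M = 8)
    (hna : ¬ ∀ a b : M, a * b = b * a) :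
    ∃ z : M, z ≠ 1 ∧ z * z = 1 ∧ (∀ x, x * z = z * x) ∧ (∀ x, x * x = 1 ∨ x * x = z) ∧
      (∀ x y, x * y = y * x ∨ x * y = z * (y * x)) ∧
      (∀ w, (∀ x, x * w = w * x) → w = 1 ∨ w = z) := by
  haveI : Fact (Nat.Prime 2) := ⟨by norm_num⟩
  have hP : IsPGroup 2 M := IsPGroup.of_card (n := 3) (by rw [h8]; norm_num)
  haveI : Nontrivial M := by
    rw [← Finite.one_lt_card_iff_nontrivial, h8]; norm_num
  have hnt := hP.center_nontrivial
  have hc2 : Nat.card (Subgroup.center M) = 2 ∧ Nat.card (M ⧸ Subgroup.center M) = 4 := by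
    have h1 : 1 < Nat.card (Subgroup.center M) := Finite.one_lt_card_iff_nontrivial.mpr hnt
    have h3 := Subgroup.card_eq_card_quotient_mul_card_subgroup (Subgroup.center M)
    rw [h8] at h3
    have h4 : Nat.card (M ⧸ Subgroup.center M) ≠ 2 := fun h =>
      hna (comm_of_center_quot (by norm_num) h)
    have h5 : Nat.card (M ⧸ Subgroup.center M) ≠ 1 := by
      intro h
      apply hna
      intro a b
      have : Subgroup.center M = ⊤ := Subgroup.index_eq_one.mp h
      have hb : b ∈ Subgroup.center M := by rw [this]; trivial
      exact Subgroup.mem_center_iff.mp hb a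
    have h6 : Nat.card (M ⧸ Subgroup.center M) ≤ 4 := by nlinarith
    generalize Nat.card (M ⧸ Subgroup.center M) = k at *
    interval_cases k <;> omega
  obtain ⟨hc2, hq4⟩ := hc2
  obtain ⟨z, hz1, hz⟩ : ∃ z : Subgroup.center M, z ≠ 1 ∧ ∀ w : Subgroup.center M, w = 1 ∨ w = z := by
    obtain ⟨x, y, hxy, hu⟩ := Nat.card_eq_two_iff.mp hc2
    have h3 : ∀ w : Subgroup.center M, w = x ∨ w = y := by
      intro w
      have : w ∈ ({x, y} : Set _) := by rw [hu]; trivial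
      simpa using this
    rcases h3 1 with h | h
    · exact ⟨y, fun h' => hxy (h.symm.trans h'.symm), fun w => by rw [h]; exact h3 w⟩
    · exact ⟨x, fun h' => hxy (h'.trans h), fun w => by rw [h]; exact (h3 w).symm⟩
  have hz' : ∀ w ∈ Subgroup.center M, w = 1 ∨ w = (z : M) := by
    intro w hw
    rcases hz ⟨w, hw⟩ with h | h
    · exact Or.inl (congrArg Subtype.val h)
    · exact Or.inr (congrArg Subtype.val h)
  have hzne : (z : M) ≠ 1 := fun h => hz1 (Subtype.ext h)
  have hzc : ∀ x : M, x * z = z * x := fun x => Subgroup.mem_center_iff.mp z.2 x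
  refine ⟨z, hzne, ?_, hzc, ?_, ?_, ?_⟩
  · rcases hz' (z * z) (Subgroup.mul_mem _ z.2 z.2) with h | h
    · exact h
    · exact absurd (mul_eq_left.mp h) hzne
  · intro x
    apply hz'
    have hd : orderOf (QuotientGroup.mk x : M ⧸ Subgroup.center M) ∣ 4 := by
      rw [← hq4]; exact orderOf_dvd_natCard _
    have hne : orderOf (QuotientGroup.mk x : M ⧸ Subgroup.center M) ≠ 4 := by
      intro h
      apply hna
      haveI : IsCyclic (M ⧸ Subgroup.center M) := isCyclic_of_orderOf_eq_card _ (h.trans hq4.symm)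
      exact (MonoidHom.isMulCommutative_of_isCyclic_of_ker_le_center
        (QuotientGroup.mk' (Subgroup.center M)) (by simp)).is_comm.comm
    have hd2 : orderOf (QuotientGroup.mk x : M ⧸ Subgroup.center M) ∣ 2 := by
      have hle := Nat.le_of_dvd (by norm_num) hd
      generalize orderOf (QuotientGroup.mk x : M ⧸ Subgroup.center M) = k at *
      interval_cases k <;> omega
    have := orderOf_dvd_iff_pow_eq_one.mp hd2
    rw [← QuotientGroup.mk_pow, QuotientGroup.eq_one_iff, pow_two] at this
    exact this
  · intro x y
    have hcm : ∀ a b : M ⧸ Subgroup.center M, a * b = b * a :=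
      (IsPGroup.isMulCommutative_of_card_eq_prime_sq (p := 2) (by rw [hq4]; norm_num)).is_comm.comm
    have : x * y * (y * x)⁻¹ ∈ Subgroup.center M := by
      rw [← QuotientGroup.eq_one_iff, QuotientGroup.mk_mul, QuotientGroup.mk_inv, QuotientGroup.mk_mul,
        QuotientGroup.mk_mul, hcm (QuotientGroup.mk x), mul_inv_cancel]
    rcases hz' _ this with h | h
    · exact Or.inl (mul_inv_eq_one.mp h)
    · exact Or.inr (mul_inv_eq_iff_eq_mul.mp h)
  · intro w hw
    exact hz' w (Subgroup.mem_center_iff.mpr hw)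

lemma eight_gen {M : Type*} [Group M] [Finite M] (h8 : Nat.card M = 8) (K : Subgroup M)
    {i j : M} (hi : i ∈ K) (hj : j ∈ K) (hij : i * j ≠ j * i) : K = ⊤ := by
  apply Subgroup.eq_top_of_card_eq
  have hd := Subgroup.card_subgroup_dvd_card K
  rw [h8] at hd ⊢
  have hK : ¬ ∀ a b : K, a * b = b * a := fun h => hij (congrArg Subtype.val (h ⟨i, hi⟩ ⟨j, hj⟩))
  have h2 : Nat.card K ≠ 2 := fun h => hK (comm_of_prime (by norm_num) h)
  have h1 : Nat.card K ≠ 1 := by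
    intro h
    have := Subgroup.card_eq_one.mp h
    rw [this, Subgroup.mem_bot] at hi hj
    apply hij
    rw [hi, hj]
  have h4 : Nat.card K ≠ 4 := by
    intro h
    haveI : Fact (Nat.Prime 2) := ⟨by norm_num⟩
    exact hK (IsPGroup.isMulCommutative_of_card_eq_prime_sq (p := 2) (by rw [h]; norm_num)).is_comm.comm
  have hle := Nat.le_of_dvd (by norm_num) hd
  generalize Nat.card K = k at *
  interval_cases k <;> omega

lemma eight_pair {M : Type*} [Group M] [Fintype M] (h8 : Nat.card M = 8)
    (hna : ¬ ∀ a b : M, a * b = b * a) (S : Finset M) (hS : 5 ≤ #S) :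
    ∃ i ∈ S, ∃ j ∈ S, i * j ≠ j * i := by
  by_contra hno
  push Not at hno
  have htop : ∀ K : Subgroup M, (∀ x ∈ S, x ∈ K) → K = ⊤ := by
    intro K hK
    apply top_of_half
    have h3 : 5 ≤ Nat.card K := by
      rw [Nat.card_eq_fintype_card, Fintype.card_subtype]
      refine hS.trans (card_le_card ?_)
      intro n hn
      simpa using hK n hn
    omega
  have h1 : ∀ x ∈ S, x ∈ Subgroup.center M := by
    intro x hx
    have := htop (Subgroup.centralizer {x}) (fun y hy =>
      Subgroup.mem_centralizer_singleton_iff.mpr (hno y hy x hx))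
    rw [Subgroup.mem_center_iff]
    intro g
    have hg : g ∈ Subgroup.centralizer {x} := by rw [this]; trivial
    exact Subgroup.mem_centralizer_singleton_iff.mp hg
  have h2 := htop _ h1
  apply hna
  intro a b
  have hb : b ∈ Subgroup.center M := by rw [h2]; trivial
  exact Subgroup.mem_center_iff.mp hb a

lemma word_u {G : Type*} [Group G] {t i j z : G} (htt : t * t = 1) (hzz : z * z = 1)
    (htz : t * z = z * t) (hiz : i * z = z * i) (hjz : j * z = z * j)
    (hij : j * i = z * (i * j)) (hi : t * i * t = i⁻¹) (hj : t * j * t = j⁻¹)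
    (hi2 : i * i = 1 ∨ i * i = z) (hj2 : j * j = 1 ∨ j * j = z) :
    ∃ n, (n = 1 ∨ n = i ∨ n = j ∨ n = i * j) ∧ (t * n) * t = t * (t * n) ∧
      (t * n) * i = i * (t * n) ∧ (t * n) * j = j * (t * n) ∧
      ((t * n) * (t * n) = 1 ∨ (t * n) * (t * n) = z) := by
  have aux : ∀ a b c : G, a * b = c → ∀ w, a * (b * w) = c * w := by
    intro a b c h w
    rw [← mul_assoc, h]
  have htt' := aux _ _ _ htt
  have hzz' := aux _ _ _ hzz
  have htz' := aux _ _ _ htz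
  have hiz' := aux _ _ _ hiz
  have hjz' := aux _ _ _ hjz
  have hij' := aux _ _ _ hij
  have hcomm1 : ∀ x : G, x * x = 1 → t * x * t = x⁻¹ → x * t = t * x := by
    intro x hx h
    rw [inv_eq_of_mul_eq_one_right hx] at h
    nth_rewrite 1 [← h]
    rw [mul_assoc, htt, mul_one]
  have hcomm2 : ∀ x : G, x * z = z * x → x * x = z → t * x * t = x⁻¹ → x * t = z * (t * x) := by
    intro x hxz hx h
    have : x⁻¹ = z * x := by
      rw [inv_eq_iff_mul_eq_one, ← mul_assoc, hxz, mul_assoc, hx, hzz]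
    rw [this] at h
    have e : t * x = z * x * t := by
      rw [← h, mul_assoc, htt, mul_one]
    rw [e, mul_assoc, ← mul_assoc, hzz, one_mul]
  rcases hi2 with hi2 | hi2 <;> rcases hj2 with hj2 | hj2
  · have hit := hcomm1 i hi2 hi
    have hjt := hcomm1 j hj2 hj
    refine ⟨1, Or.inl rfl, ?_, ?_, ?_, Or.inl ?_⟩ <;> rw [mul_one]
    · exact hit.symm
    · exact hjt.symm
    · exact htt
  · have hit := hcomm1 i hi2 hi
    have hjt := hcomm2 j hjz hj2 hj
    have hit' := aux _ _ _ hit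
    have hjt' := aux _ _ _ hjt
    have hi2' := aux _ _ _ hi2
    have hj2' := aux _ _ _ hj2
    refine ⟨i, Or.inr (Or.inl rfl), ?_, ?_, ?_, Or.inl ?_⟩ <;>
    simp only [mul_assoc, htt, htt', hzz, hzz', htz, htz', hiz, hiz', hjz, hjz', hij, hij', hit, hit',
      hjt, hjt', hi2, hi2', hj2, hj2', one_mul, mul_one]
  · have hit := hcomm2 i hiz hi2 hi
    have hjt := hcomm1 j hj2 hj
    have hit' := aux _ _ _ hit
    have hjt' := aux _ _ _ hjt
    have hi2' := aux _ _ _ hi2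
    have hj2' := aux _ _ _ hj2
    refine ⟨j, Or.inr (Or.inr (Or.inl rfl)), ?_, ?_, ?_, Or.inl ?_⟩ <;>
    simp only [mul_assoc, htt, htt', hzz, hzz', htz, htz', hiz, hiz', hjz, hjz', hij, hij', hit, hit',
      hjt, hjt', hi2, hi2', hj2, hj2', one_mul, mul_one]
  · have hit := hcomm2 i hiz hi2 hi
    have hjt := hcomm2 j hjz hj2 hj
    have hit' := aux _ _ _ hit
    have hjt' := aux _ _ _ hjt
    have hi2' := aux _ _ _ hi2
    have hj2' := aux _ _ _ hj2
    refine ⟨i * j, Or.inr (Or.inr (Or.inr rfl)), ?_, ?_, ?_, Or.inr ?_⟩ <;>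
    simp only [mul_assoc, htt, htt', hzz, hzz', htz, htz', hiz, hiz', hjz, hjz', hij, hij', hit, hit',
      hjt, hjt', hi2, hi2', hj2, hj2', one_mul, mul_one]

end
end RegOrb


namespace RegOrb
section
open Classical
open Module Finset

variable {p : ℕ} [hp : Fact p.Prime] {V : Type*} [AddCommGroup V] [Module (ZMod p) V]
  {G : Type*} [Group G] {ρ : G →* (V →ₗ[ZMod p] V)}

lemma card_lt_sub [Finite V] {U A : Submodule (ZMod p) V} (h : U < A) :
    Nat.card U * p ≤ Nat.card A := by
  have h1 := Submodule.finrank_lt_finrank_of_lt h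
  rw [Module.natCard_eq_pow_finrank (K := ZMod p) (V := U),
    Module.natCard_eq_pow_finrank (K := ZMod p) (V := A), Nat.card_zmod, ← pow_succ]
  exact Nat.pow_le_pow_right hp.out.pos h1

/-- the elementary-abelian-center case: there is a regular orbit -/
lemma H_regular [Fintype G] [Fintype V] (hp5 : p = 5) (hinj : Function.Injective ρ)
    {N : Subgroup G} (h8 : Nat.card N = 8) (hna : ¬ ∀ a b : N, a * b = b * a) {z u : G}
    (hzN : z ∈ N) (hz1 : z ≠ 1) (hzz : z * z = 1) (hzc : ∀ g, g * z = z * g)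
    (hsq : ∀ n ∈ N, n * n = 1 ∨ n * n = z)
    (hcm : ∀ n ∈ N, n ≠ 1 → n ≠ z → ∃ y ∈ N, y * n = z * (n * y))
    (huN : u ∉ N) (huu : u * u = 1) (huc : ∀ g, g * u = u * g)
    (hindex : ∀ g, g ∉ N → u * g ∈ N) (x : V) (hx0 : x ≠ 0) (hux : ρ u x = x) (hzx : ρ z x = -x) :
    ∃ v : V, ∀ g, ρ g v = v → g = 1 := by
  have h2 : (2 : ZMod p) ≠ 0 := two_ne (by omega)
  have hneg : ∀ v : V, v = -v → v = 0 := by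
    intro v hv
    have : (2 : ZMod p) • v = 0 := by linear_combination (norm := module) hv
    exact (smul_eq_zero.mp this).resolve_left h2
  have comm : ∀ g h : G, g * h = h * g → ∀ v, ρ g (ρ h v) = ρ h (ρ g v) := by
    intro g h e v
    rw [← rho_mul, e, rho_mul]
  let A : Submodule (ZMod p) V := Fx ρ u ⊓ LinearMap.ker (ρ z + 1)
  have hA : ∀ v, v ∈ A ↔ ρ u v = v ∧ ρ z v = -v := by
    intro v
    simp only [A, Submodule.mem_inf, mem_Fx, LinearMap.mem_ker, LinearMap.add_apply]
    change _ ∧ ρ z v + v = 0 ↔ _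
    rw [add_eq_zero_iff_eq_neg]
  have hAinv : ∀ g v, v ∈ A → ρ g v ∈ A := by
    intro g v hv
    rw [hA] at hv ⊢
    rw [comm u g (huc g).symm, comm z g (hzc g).symm, hv.1, hv.2, map_neg]
    exact ⟨rfl, rfl⟩
  have hxA : x ∈ A := (hA x).mpr ⟨hux, hzx⟩
  have hfix : ∀ n ∈ N, n ≠ 1 → Fx ρ n ⊓ A < A := by
    intro n hn hn1
    refine lt_of_le_of_ne inf_le_right ?_
    intro hall
    have hall' : ∀ v ∈ A, ρ n v = v := by
      intro v hv
      rw [← hall] at hv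
      exact (mem_Fx ρ).mp hv.1
    by_cases hnz : n = z
    · have := hall' x hxA
      rw [hnz, hzx] at this
      exact hx0 (hneg x this.symm)
    · obtain ⟨y, hy, hyn⟩ := hcm n hn hn1 hnz
      have e1 : ρ (y * n) x = ρ y x := by rw [rho_mul, hall' x hxA]
      have hyA := hAinv y x hxA
      rw [hyn, rho_mul, rho_mul, hall' _ hyA, ((hA _).mp hyA).2] at e1
      have e2 := hneg _ e1.symm
      apply hx0
      have := rho_inv_rho ρ y x
      rw [e2, map_zero] at this
      exact this.symm
  -- choose a vector in A regular for N
  obtain ⟨w, hwA, hw0, hwreg⟩ : ∃ w ∈ A, w ≠ 0 ∧ ∀ n ∈ N, n * n = 1 → ρ n w = w → n = 1 := by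
    by_contra hno
    push Not at hno
    set I : Finset N := {n : N | n ≠ 1 ∧ n * n = 1} with hI
    have hIle : #I ≤ 5 := by
      by_contra h
      have h' : 3 * 8 < 4 * (#I + 1) := by omega
      refine hna (invol_abelian ?_)
      rw [h8]
      convert h' using 4
      rw [hI]
      ext
      simp
    have hcov : ({v : V | v ∈ A ∧ v ≠ 0} : Finset V) ⊆
        I.biUnion (fun n => {v : V | v ∈ Fx ρ n ⊓ A ∧ v ≠ 0}) := by
      intro v hv
      simp only [mem_filter_univ] at hv
      obtain ⟨n, hn, hnn, hnv, hn1⟩ := hno v hv.1 hv.2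
      simp only [mem_biUnion, mem_filter_univ]
      refine ⟨⟨n, hn⟩, ?_, ⟨(mem_Fx ρ).mpr hnv, hv.1⟩, hv.2⟩
      rw [hI, mem_filter_univ]
      exact ⟨fun h => hn1 (congrArg Subtype.val h), Subtype.ext hnn⟩
    have hnz : ∀ U : Submodule (ZMod p) V, #{v : V | v ∈ U ∧ v ≠ 0} + 1 = Nat.card U := by
      intro U
      rw [Nat.card_eq_fintype_card, Fintype.card_subtype]
      have : ({v : V | v ∈ U} : Finset V) = insert 0 ({v : V | v ∈ U ∧ v ≠ 0} : Finset V) := by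
        ext v
        simp only [mem_filter_univ, mem_insert]
        constructor
        · intro h
          by_cases h0 : v = 0
          · exact Or.inl h0
          · exact Or.inr ⟨h, h0⟩
        · rintro (rfl | h)
          · exact U.zero_mem
          · exact h.1
      rw [this, card_insert_of_notMem (by simp)]
    obtain ⟨k, hk⟩ : ∃ k, Nat.card A = 5 * k ∧ 1 ≤ k := by
      have hAne : (⊥ : Submodule (ZMod p) V) < A := by
        rw [bot_lt_iff_ne_bot]
        intro h
        rw [h] at hxA
        exact hx0 hxA
      have h1 := Submodule.finrank_lt_finrank_of_lt hAne
      rw [finrank_bot] at h1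
      obtain ⟨j, hj⟩ : ∃ j, finrank (ZMod p) A = j + 1 := ⟨finrank (ZMod p) A - 1, by omega⟩
      refine ⟨5 ^ j, ?_, Nat.one_le_pow _ _ (by norm_num)⟩
      rw [Module.natCard_eq_pow_finrank (K := ZMod p) (V := A), Nat.card_zmod, hj, hp5, pow_succ']
    have h1 := card_le_card hcov
    have h3 : #(I.biUnion (fun n => ({v : V | v ∈ Fx ρ n ⊓ A ∧ v ≠ 0} : Finset V))) ≤ #I * (k - 1) := by
      apply card_biUnion_le_card_mul
      intro n hn
      rw [hI, mem_filter_univ] at hn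
      have h4 := hnz (Fx ρ n ⊓ A)
      have h5 := card_lt_sub (hfix n n.2 (fun h => hn.1 (Subtype.ext h)))
      rw [hk.1] at h5
      have h6 : Nat.card ↥(Fx ρ ↑n ⊓ A) * 5 ≤ 5 * k := by
        rwa [← hp5] at h5 ⊢
      omega
    have h4 := hnz A
    have h5 : #I * (k - 1) ≤ 5 * (k - 1) := Nat.mul_le_mul_right _ hIle
    omega
  have hwN : ∀ n ∈ N, ρ n w = w → n = 1 := by
    intro n hn h
    rcases hsq n hn with h' | h'
    · exact hwreg n hn h' h
    · exfalso
      have e : ρ (n * n) w = w := by rw [rho_mul, h, h]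
      rw [h', ((hA w).mp hwA).2] at e
      exact hw0 (hneg w e.symm)
  have hu1 : u ≠ 1 := fun h => huN (h ▸ N.one_mem)
  obtain ⟨y, hy⟩ : ∃ y, ρ u y ≠ y := by
    by_contra h
    push Not at h
    exact hu1 (eq_one_of_rho hinj h)
  set l := y - ρ u y with hl
  have hl0 : l ≠ 0 := fun h => hy (sub_eq_zero.mp h).symm
  have hul : ρ u l = -l := by
    rw [hl, map_sub, ← rho_mul, huu, rho_one]
    abel
  have huw := ((hA w).mp hwA).1
  refine ⟨w + l, ?_⟩
  intro g hg
  have e1 := congrArg (ρ u) hg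
  rw [← rho_mul, ← huc, rho_mul, map_add, huw, hul, map_add, map_neg] at e1
  rw [map_add] at hg
  have hgw : ρ g w = w := by
    have : (2 : ZMod p) • (ρ g w - w) = 0 := by linear_combination (norm := module) hg + e1
    exact sub_eq_zero.mp ((smul_eq_zero.mp this).resolve_left h2)
  have hgl : ρ g l = l := by
    rw [hgw] at hg
    exact add_left_cancel hg
  by_cases hgN : g ∈ N
  · exact hwN g hgN hgw
  · exfalso
    have e2 := hwN (u * g) (hindex g hgN) (by rw [rho_mul, hgw, huw])
    have e3 : g = u := by
      rw [← inv_eq_of_mul_eq_one_right e2, inv_eq_of_mul_eq_one_right huu]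
    rw [e3, hul] at hgl
    exact hl0 (hneg l hgl.symm)

lemma H_main [Fintype G] [Fintype V] (hp5 : p = 5) (hinj : Function.Injective ρ)
    (hno : ∀ v : V, ∃ g, ρ g v = v ∧ g ≠ 1)
    {N : Subgroup G} (hN : N.Normal) (h8 : Nat.card N = 8) (hna : ¬ ∀ a b : N, a * b = b * a) {t : G}
    (htt : t * t = 1) (htN : t ∉ N) (hcard : Nat.card G = 2 * Nat.card N)
    (hS : 5 ≤ #{n : N | t * n * t = (n : G)⁻¹}) (htg : ∀ g, g ∉ N → t * g ∈ N) :
    Nat.card G = 16 ∧ (¬ ∀ a b : G, a * b = b * a) ∧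
      IsCyclic (Subgroup.center G) ∧ Nat.card (Subgroup.center G) = 4 ∧
      Monoid.exponent G = 4 := by
  have h2 : (2 : ZMod p) ≠ 0 := two_ne (by omega)
  obtain ⟨z, hz1, hzz, hzc, hsq, hcm, hcen⟩ := eight_struct h8 hna
  obtain ⟨i, hi, j, hj, hij⟩ := eight_pair h8 hna _ hS
  simp only [mem_filter_univ] at hi hj
  have htinv : t⁻¹ = t := inv_eq_of_mul_eq_one_right htt
  -- z commutes with t
  have htz : t * (z : G) = z * t := by
    have hmem : t * (z : G) * t⁻¹ ∈ N := hN.conj_mem z z.2 t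
    have hc : ∀ y : N, y * ⟨t * (z : G) * t⁻¹, hmem⟩ = ⟨t * (z : G) * t⁻¹, hmem⟩ * y := by
      intro y
      have hy : t⁻¹ * (y : G) * t ∈ N := by simpa using hN.conj_mem y y.2 t⁻¹
      have e := congrArg Subtype.val (hzc ⟨_, hy⟩)
      change t⁻¹ * (y : G) * t * z = z * (t⁻¹ * (y : G) * t) at e
      apply Subtype.ext
      change (y : G) * (t * (z : G) * t⁻¹) = t * (z : G) * t⁻¹ * y
      calc (y : G) * (t * (z : G) * t⁻¹) = t * (t⁻¹ * (y : G) * t * z) * t⁻¹ := by group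
        _ = t * (z * (t⁻¹ * (y : G) * t)) * t⁻¹ := by rw [e]
        _ = t * (z : G) * t⁻¹ * y := by group
    rcases hcen _ hc with h | h
    · exfalso
      have h' : t * (z : G) * t⁻¹ = 1 := congrArg Subtype.val h
      exact hz1 (Subtype.ext (conj_eq_one_iff.mp h'))
    · have h' : t * (z : G) * t⁻¹ = z := congrArg Subtype.val h
      exact mul_inv_eq_iff_eq_mul.mp h'
  have hcomb : ∀ s : G, (∀ n ∈ N, n * s = s * n) → t * s = s * t → ∀ g, g * s = s * g := by
    intro s h1 h3 g
    by_cases hg : g ∈ N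
    · exact h1 g hg
    · have e : g = t * (t * g) := by rw [← mul_assoc, htt, one_mul]
      calc g * s = t * ((t * g) * s) := by rw [← mul_assoc, ← e]
        _ = t * s * (t * g) := by rw [h1 _ (htg g hg), mul_assoc]
        _ = s * (t * (t * g)) := by rw [h3, mul_assoc]
        _ = s * g := by rw [← e]
  have hzN : ∀ n ∈ N, n * (z : G) = z * n := fun n hn => congrArg Subtype.val (hzc ⟨n, hn⟩)
  have hzG := hcomb z hzN htz
  have hji : (j : G) * i = z * (i * j) := by
    rcases hcm j i with h | h
    · exact absurd h.symm hij
    · exact congrArg Subtype.val h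
  have hsqG : ∀ n ∈ N, n * n = 1 ∨ n * n = (z : G) := by
    intro n hn
    rcases hsq ⟨n, hn⟩ with h | h
    · exact Or.inl (congrArg Subtype.val h)
    · exact Or.inr (congrArg Subtype.val h)
  obtain ⟨n, hn, hut, hui, huj, huu⟩ := word_u htt (congrArg Subtype.val hzz) htz (hzN i i.2)
    (hzN j j.2) hji hi hj (hsqG i i.2) (hsqG j j.2)
  have hnN : n ∈ N := by
    rcases hn with rfl | rfl | rfl | rfl
    · exact N.one_mem
    · exact i.2
    · exact j.2
    · exact N.mul_mem i.2 j.2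
  set u := t * n with hu
  have huN : u ∉ N := by
    intro h
    apply htN
    have := N.mul_mem h (N.inv_mem hnN)
    rwa [hu, mul_inv_cancel_right] at this
  have huc : ∀ g, g * u = u * g := by
    apply hcomb u _ hut.symm
    have hK : (Subgroup.centralizer {u}).subgroupOf N = ⊤ := by
      apply eight_gen h8 _ (i := i) (j := j) _ _ hij
      · rw [Subgroup.mem_subgroupOf, Subgroup.mem_centralizer_singleton_iff]
        exact hui.symm
      · rw [Subgroup.mem_subgroupOf, Subgroup.mem_centralizer_singleton_iff]
        exact huj.symm
    intro m hm
    have : (⟨m, hm⟩ : N) ∈ (Subgroup.centralizer {u}).subgroupOf N := by rw [hK]; trivial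
    rw [Subgroup.mem_subgroupOf, Subgroup.mem_centralizer_singleton_iff] at this
    exact this
  have hindex : ∀ s, s ∉ N → ∀ g, g ∉ N → s⁻¹ * g ∈ N := by
    intro s hs g hg
    have := N.mul_mem (N.inv_mem (htg s hs)) (htg g hg)
    rwa [mul_inv_rev, mul_assoc, inv_mul_cancel_left] at this
  have hzG1 : (z : G) ≠ 1 := fun h => hz1 (Subtype.ext h)
  have hzzG : (z : G) * z = 1 := congrArg Subtype.val hzz
  have hnaG : ¬ ∀ a b : G, a * b = b * a := fun h => hij (Subtype.ext (h i j))
  rcases huu with huu | huu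
  · exfalso
    have hreg : ∀ s : G, s ∉ N → s * s = 1 → (∀ g, g * s = s * g) → ∀ x : V, x ≠ 0 → ρ s x = x →
        ρ (z : G) x = -x → False := by
      intro s hsN hss hsc x hx0 hsx hzx
      obtain ⟨v, hv⟩ := H_regular hp5 hinj h8 hna z.2 hzG1 hzzG hzG hsqG (by
        intro m hm hm1 hmz
        by_contra hnone
        push Not at hnone
        have : ∀ y : N, y * ⟨m, hm⟩ = ⟨m, hm⟩ * y := by
          intro y
          rcases hcm y ⟨m, hm⟩ with h | h
          · exact h
          · exact absurd (congrArg Subtype.val h) (hnone y y.2)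
        rcases hcen _ this with h | h
        · exact hm1 (congrArg Subtype.val h)
        · exact hmz (congrArg Subtype.val h)) hsN hss hsc (by
        intro g hg
        have := hindex s hsN g hg
        rwa [inv_eq_of_mul_eq_one_right hss] at this) x hx0 hsx hzx
      obtain ⟨g, hg, hg1⟩ := hno v
      exact hg1 (hv g hg)
    -- a vector negated by z
    obtain ⟨y, hy⟩ : ∃ y, ρ (z : G) y ≠ y := by
      by_contra h
      push Not at h
      exact hzG1 (eq_one_of_rho hinj h)
    set x := y - ρ (z : G) y with hx
    have hx0 : x ≠ 0 := fun h => hy (sub_eq_zero.mp h).symm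
    have hzx : ρ (z : G) x = -x := by
      rw [hx, map_sub, ← rho_mul, hzzG, rho_one]
      abel
    have hzu : ∀ v, ρ (z : G) (ρ u v) = ρ u (ρ (z : G) v) := by
      intro v
      rw [← rho_mul, huc, rho_mul]
    by_cases hplus : x + ρ u x = 0
    · have hux : ρ u x = -x := by rw [add_comm] at hplus; exact eq_neg_of_add_eq_zero_left hplus
      refine hreg (u * z) ?_ ?_ ?_ x hx0 ?_ hzx
      · intro h
        apply huN
        have := N.mul_mem h (N.inv_mem z.2)
        rwa [mul_inv_cancel_right] at this
      · calc u * (z : G) * (u * z) = u * (z * u) * z := by group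
          _ = (u * u) * (z * z) := by rw [huc]; group
          _ = 1 := by rw [huu, hzzG, one_mul]
      · intro g
        calc g * (u * z) = (g * u) * z := (mul_assoc _ _ _).symm
          _ = u * (g * z) := by rw [huc g]; exact mul_assoc _ _ _
          _ = u * z * g := by rw [hzG g]; exact (mul_assoc _ _ _).symm
      · rw [rho_mul, hzx, map_neg, hux, neg_neg]
    · refine hreg u huN huu huc _ hplus ?_ ?_
      · rw [map_add, ← rho_mul, huu, rho_one, add_comm]
      · rw [map_add, hzu, hzx, map_neg]
        abel
  · have ho : orderOf u = 4 := by
      have : orderOf u = 2 ^ (1 + 1) := by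
        haveI : Fact (Nat.Prime 2) := ⟨by norm_num⟩
        apply orderOf_eq_prime_pow
        · rw [pow_one, pow_two, huu]; exact hzG1
        · rw [pow_succ, pow_one, pow_mul, pow_two, pow_two, huu, hzzG]
      rw [this]; norm_num
    have hucen : u ∈ Subgroup.center G := Subgroup.mem_center_iff.mpr huc
    have h16 : Nat.card G = 16 := by omega
    have hZ4 : Nat.card (Subgroup.center G) = 4 := by
      have d4 : 4 ∣ Nat.card (Subgroup.center G) := by
        rw [← ho]
        exact Subgroup.orderOf_dvd_natCard _ hucen
      have h3 := Subgroup.card_eq_card_quotient_mul_card_subgroup (Subgroup.center G)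
      have q2 : Nat.card (G ⧸ Subgroup.center G) ≠ 2 := fun h =>
        hnaG (comm_of_center_quot (by norm_num) h)
      have q1 : Nat.card (G ⧸ Subgroup.center G) ≠ 1 := by
        intro h
        apply hnaG
        intro a b
        have : Subgroup.center G = ⊤ := Subgroup.index_eq_one.mp h
        have hb : b ∈ Subgroup.center G := by rw [this]; trivial
        exact Subgroup.mem_center_iff.mp hb a
      obtain ⟨c, hc⟩ := d4
      rw [h16, hc] at h3
      have h5 : Nat.card (G ⧸ Subgroup.center G) * c = 4 := by linarith
      rw [hc]
      have hc0 : 0 < c := by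
        rcases Nat.eq_zero_or_pos c with h | h
        · rw [h] at h5; omega
        · exact h
      have hq : Nat.card (G ⧸ Subgroup.center G) ≤ 4 := by nlinarith
      generalize Nat.card (G ⧸ Subgroup.center G) = k at *
      interval_cases k <;> omega
    refine ⟨h16, hnaG, ?_, hZ4, ?_⟩
    · apply isCyclic_of_orderOf_eq_card (⟨u, hucen⟩ : Subgroup.center G)
      rw [hZ4, ← ho, Subgroup.orderOf_mk]
    · apply Nat.dvd_antisymm
      · apply Monoid.exponent_dvd_of_forall_pow_eq_one
        have hN4 : ∀ m ∈ N, m ^ 4 = 1 := by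
          intro m hm
          rw [show 4 = 2 * 2 by norm_num, pow_mul, pow_two, pow_two]
          rcases hsqG m hm with h | h
          · rw [h, one_mul]
          · rw [h, hzzG]
        intro g
        by_cases hg : g ∈ N
        · exact hN4 g hg
        · have e : g = u * (u⁻¹ * g) := by rw [mul_inv_cancel_left]
          have hcu : Commute u (u⁻¹ * g) := (huc _).symm
          rw [e, hcu.mul_pow, hN4 _ (hindex u huN g hg), mul_one, ← ho, pow_orderOf_eq_one]
      · rw [← ho]
        exact Monoid.order_dvd_exponent u

end
end RegOrb

namespace RegOrb
section
open Classical
open Module Finset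
variable {p : ℕ} [hp : Fact p.Prime] {V : Type*} [AddCommGroup V] [Module (ZMod p) V]
  {G : Type*} [Group G]

/-- the linear case -/
lemma linear_main [Fintype G] [Fintype V] {ρ : G →* (V →ₗ[ZMod p] V)}
    (hinj : Function.Injective ρ)
    (hc : ¬ p ∣ Nat.card G) (hle : Nat.card G ≤ 2 * p + 9) :
    (∃ v : V, ∀ g, ρ g v = v → g = 1) ∨ Nonempty (G ≃* DihedralGroup (p + 1)) ∨
    (p = 5 ∧ Nat.card G = 16 ∧ (¬ ∀ a b : G, a * b = b * a) ∧
      IsCyclic (Subgroup.center G) ∧ Nat.card (Subgroup.center G) = 4 ∧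
      Monoid.exponent G = 4) := by
  by_cases hab : ∀ a b : G, a * b = b * a
  · exact Or.inl (abelian_reg hinj hc hab)
  by_cases hreg : ∃ v : V, ∀ g, ρ g v = v → g = 1
  · exact Or.inl hreg
  right
  push Not at hreg
  have hp3 : 3 ≤ p := by
    by_contra h
    have h2 : p = 2 := by have := hp.out.two_le; omega
    apply hab
    have hpos : 0 < Nat.card G := Nat.card_pos
    have hcase : (Nat.card G).Prime ∨ Nat.card G = 1 ∨ Nat.card G = 3 ^ 2 := by
      rw [h2] at hc hle
      generalize Nat.card G = m at *
      interval_cases m <;> first | omega | (left; norm_num)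
    rcases hcase with h | h | h
    · exact comm_of_prime h rfl
    · have := (Nat.card_eq_one_iff_unique.mp h).1
      exact fun a b => Subsingleton.elim _ _
    · haveI : Fact (Nat.Prime 3) := ⟨by norm_num⟩
      exact (IsPGroup.isMulCommutative_of_card_eq_prime_sq h).is_comm.comm
  have hk := HS_ge hinj hc hle hp3 hab hreg
  obtain ⟨N, t, hN, ht, htt, htN, hcard, h1, h2, hcN, hS, hSinv, htg⟩ :=
    struct hinj hc hle hp3 hab hk
  by_cases hNab : ∀ a b : N, a * b = b * a
  · left
    exact G_dihedral hp3 hinj hc hab ht htt htN hcard h1 h2 hcN hS hSinv htg hNab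
  right
  have htinv : t⁻¹ = t := inv_eq_of_mul_eq_one_left htt
  have hS' : p ≤ #{n : N | t * n * t = (n : G)⁻¹} := by
    refine hS.trans (card_le_card ?_)
    intro n hn
    rw [mem_filter_univ] at hn ⊢
    exact hSinv _ hn
  have hex : p = 5 ∧ Nat.card N = 8 := by
    by_contra hex
    apply hNab
    refine N_abelian (MulAut.conjNormal t : N ≃* N).toMonoidHom hp.out hp3 hcN h1 h2 ?_ hex
    refine hS'.trans (le_of_eq ?_)
    congr 1
    ext n
    simp only [mem_filter_univ]
    rw [Subtype.ext_iff]
    simp [MulAut.conjNormal_apply, htinv]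
  refine ⟨hex.1, ?_⟩
  refine H_main hex.1 hinj hreg hN hex.2 hNab htt htN hcard ?_ htg
  have := hex.1
  omega

end
end RegOrb

namespace RegOrb
section
open Classical

/-- every subgroup of the quotient by a maximal normal subgroup is trivial or everything -/
lemma coatom_quot {P : Type*} [Group P] {M : Subgroup P} [M.Normal] (hM : IsCoatom M)
    (H : Subgroup (P ⧸ M)) : H = ⊥ ∨ H = ⊤ := by
  have hle : M ≤ H.comap (QuotientGroup.mk' M) := by
    intro x hx
    rw [Subgroup.mem_comap, QuotientGroup.mk'_apply, (QuotientGroup.eq_one_iff x).mpr hx]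
    exact H.one_mem
  rcases hM.le_iff.mp hle with h | h
  · right
    rw [eq_top_iff]
    intro q _
    obtain ⟨x, rfl⟩ := QuotientGroup.mk'_surjective M q
    have : x ∈ H.comap (QuotientGroup.mk' M) := by rw [h]; trivial
    exact this
  · left
    rw [eq_bot_iff]
    intro q hq
    obtain ⟨x, rfl⟩ := QuotientGroup.mk'_surjective M q
    have : x ∈ H.comap (QuotientGroup.mk' M) := hq
    rw [h] at this
    exact (QuotientGroup.eq_one_iff x).mpr this

lemma simple_quot {Q : Type*} [Group Q] [Finite Q] {p : ℕ} [hp : Fact p.Prime] (hQ : IsPGroup p Q)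
    (hs : ∀ H : Subgroup Q, H = ⊥ ∨ H = ⊤) :
    (∀ a b : Q, a * b = b * a) ∧ ∀ a : Q, a ^ p = 1 := by
  constructor
  · intro a b
    rcases hs (Subgroup.zpowers a) with h | h
    · rw [Subgroup.zpowers_eq_bot] at h
      simp [h]
    · have : b ∈ Subgroup.zpowers a := by rw [h]; trivial
      obtain ⟨k, rfl⟩ := this
      exact ((Commute.refl a).zpow_right k).eq
  · intro a
    by_cases ha : a = 1
    · simp [ha]
    rcases hs (Subgroup.zpowers (a ^ p)) with h | h
    · rwa [Subgroup.zpowers_eq_bot] at h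
    exfalso
    have hord : p ∣ orderOf a := by
      obtain ⟨k, hk⟩ := IsPGroup.iff_orderOf.mp hQ a
      rcases k with _ | k
      · rw [pow_zero, orderOf_eq_one_iff] at hk
        exact absurd hk ha
      · rw [hk, pow_succ]
        exact dvd_mul_left _ _
    have e1 : orderOf (a ^ p) = Nat.card Q := by
      rw [← Nat.card_zpowers, h, Nat.card_congr Subgroup.topEquiv.toEquiv]
    have e2 : orderOf (a ^ p) = orderOf a / p := by
      rw [orderOf_pow, Nat.gcd_eq_right hord]
    have e3 : orderOf a ∣ Nat.card Q := orderOf_dvd_natCard a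
    have e4 : 0 < orderOf a := orderOf_pos a
    have e5 : orderOf a / p < orderOf a := Nat.div_lt_self e4 hp.out.one_lt
    have e6 := Nat.le_of_dvd Nat.card_pos e3
    have e7 : orderOf (a ^ p) ∣ orderOf a := orderOf_pow_dvd p
    have := Nat.le_of_dvd e4 e7
    omega

lemma mem_frattini_iff {P : Type*} [Group P] (x : P) :
    x ∈ frattini P ↔ ∀ M : Subgroup P, IsCoatom M → x ∈ M := by
  simp [frattini, Order.radical, Subgroup.mem_iInf]

lemma frat_quot {P : Type*} [Group P] [Finite P] {p : ℕ} [hp : Fact p.Prime] (hP : IsPGroup p P) :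
    (∀ a b : P ⧸ frattini P, a * b = b * a) ∧ ∀ a : P ⧸ frattini P, a ^ p = 1 := by
  haveI : Group.IsNilpotent P := hP.isNilpotent
  have key : ∀ M : Subgroup P, IsCoatom M →
      (∀ a b : P, (a * b)⁻¹ * (b * a) ∈ M) ∧ ∀ a : P, a ^ p ∈ M := by
    intro M hM
    haveI : M.Normal := Subgroup.NormalizerCondition.normal_of_coatom _
      Group.normalizerCondition_of_isNilpotent hM
    obtain ⟨h1, h2⟩ := simple_quot (hP.to_quotient M) (coatom_quot hM)
    constructor
    · intro a b
      rw [← QuotientGroup.eq]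
      exact h1 a b
    · intro a
      rw [← QuotientGroup.eq_one_iff]
      exact h2 a
  constructor
  · intro a b
    obtain ⟨a, rfl⟩ := QuotientGroup.mk_surjective a
    obtain ⟨b, rfl⟩ := QuotientGroup.mk_surjective b
    rw [← QuotientGroup.mk_mul, ← QuotientGroup.mk_mul, QuotientGroup.eq, mem_frattini_iff]
    exact fun M hM => (key M hM).1 a b
  · intro a
    obtain ⟨a, rfl⟩ := QuotientGroup.mk_surjective a
    rw [← QuotientGroup.mk_pow, QuotientGroup.eq_one_iff, mem_frattini_iff]
    exact fun M hM => (key M hM).2 a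

lemma frat_map {P : Type*} [Group P] (g : MulAut P) :
    frattini P ≤ (frattini P).comap (g : P ≃* P).toMonoidHom :=
  ((Subgroup.characteristic_iff_comap_eq.mp (frattini_characteristic)) g).ge

/-- a coprime automorphism of prime order acting trivially on the Frattini quotient is trivial -/
lemma frat_faithful {P : Type*} [Group P] [Finite P] {p : ℕ} [hp : Fact p.Prime]
    (hP : IsPGroup p P) (g : MulAut P) (hg : ∀ x : P, x⁻¹ * g x ∈ frattini P) {q : ℕ}
    (hq : q.Prime) (hqp : q ≠ p) (hgq : orderOf g = q) : False := by
  haveI : Fact q.Prime := ⟨hq⟩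
  have hg' : ∀ h ∈ Subgroup.zpowers g, ∀ x : P, x⁻¹ * h x ∈ frattini P := by
    let K : Subgroup (MulAut P) :=
      { carrier := {h | ∀ x : P, x⁻¹ * h x ∈ frattini P}
        one_mem' := fun x => by simp
        mul_mem' := fun {a b} ha hb x => by
          have := (frattini P).mul_mem (hb x) (ha (b x))
          rw [MulAut.mul_apply]
          convert this using 1
          group
        inv_mem' := fun {a} ha x => by
          have := (frattini P).inv_mem (ha (a⁻¹ x))
          rw [MulAut.apply_inv_self] at this
          convert this using 1
          group }
    have : Subgroup.zpowers g ≤ K := by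
      rw [Subgroup.zpowers_le]
      exact hg
    exact fun h hh => this hh
  have hfix : ∀ x : P, ∃ f ∈ frattini P, g (x * f) = x * f := by
    intro x
    let C : Type _ := {y : P // x⁻¹ * y ∈ frattini P}
    letI act : MulAction (Subgroup.zpowers g) C :=
      { smul := fun h y => ⟨(h : MulAut P) y.1, by
          have := (frattini P).mul_mem y.2 (hg' h h.2 y.1)
          rw [mul_assoc, mul_inv_cancel_left] at this
          exact this⟩
        one_smul := fun y => rfl
        mul_smul := fun a b y => rfl }
    have hcard : Nat.card C = Nat.card (frattini P) :=
      Nat.card_congr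
        { toFun := fun y => ⟨x⁻¹ * y.1, y.2⟩
          invFun := fun f => ⟨x * f.1, by rw [inv_mul_cancel_left]; exact f.2⟩
          left_inv := fun y => Subtype.ext (by simp)
          right_inv := fun f => Subtype.ext (by simp) }
    obtain ⟨k, hk⟩ := IsPGroup.iff_card.mp (hP.to_subgroup (frattini P))
    have hzp : IsPGroup q (Subgroup.zpowers g) :=
      IsPGroup.of_card (n := 1) (by rw [Nat.card_zpowers, hgq, pow_one])
    have hnd : ¬ q ∣ Nat.card C := by
      rw [hcard, hk]
      intro h
      exact hqp ((Nat.prime_dvd_prime_iff_eq hq hp.out).mp (hq.dvd_of_dvd_pow h))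
    haveI : Finite C := Subtype.finite
    obtain ⟨y, hy⟩ := hzp.nonempty_fixed_point_of_prime_not_dvd_card C hnd
    refine ⟨x⁻¹ * y.1, y.2, ?_⟩
    rw [mul_inv_cancel_left]
    exact congrArg Subtype.val (hy ⟨g, Subgroup.mem_zpowers g⟩)
  let F : Subgroup P :=
    { carrier := {x | g x = x}
      one_mem' := map_one g
      mul_mem' := fun {a b} ha hb => by
        change g (a * b) = a * b
        rw [map_mul]
        exact congrArg₂ _ ha hb
      inv_mem' := fun {a} ha => by
        change g a⁻¹ = a⁻¹
        rw [map_inv]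
        exact congrArg _ ha }
  have htop : F ⊔ frattini P = ⊤ := by
    rw [eq_top_iff]
    intro x _
    obtain ⟨f, hf, hx⟩ := hfix x
    have h1 : x * f ∈ F ⊔ frattini P := (le_sup_left : F ≤ F ⊔ frattini P) hx
    have h2 : f ∈ F ⊔ frattini P := (le_sup_right : frattini P ≤ F ⊔ frattini P) hf
    have := Subgroup.mul_mem _ h1 (Subgroup.inv_mem _ h2)
    rwa [mul_inv_cancel_right] at this
  have hF := frattini_nongenerating htop
  have : g = 1 := by
    ext x
    have : x ∈ F := by rw [hF]; trivial
    exact this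
  rw [this, orderOf_one] at hgq
  exact hq.one_lt.ne hgq

lemma exists_rho {p : ℕ} {V : Type*} [AddCommGroup V] [Module (ZMod p) V] {G : Type*} [Group G]
    (f : G → (V →ₗ[ZMod p] V)) (h1 : ∀ v, f 1 v = v) (hm : ∀ a b v, f (a * b) v = f a (f b v)) :
    ∃ ρ : G →* (V →ₗ[ZMod p] V), ∀ g, ρ g = f g :=
  ⟨{ toFun := f
     map_one' := LinearMap.ext h1
     map_mul' := fun a b => LinearMap.ext (hm a b) }, fun _ => rfl⟩

lemma reduction_aux {p : ℕ} [hp : Fact p.Prime] {P : Type*} [Group P] [Finite P]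
    (hP : IsPGroup p P) (G : Subgroup (MulAut P)) (hcop : ¬ p ∣ Nat.card G)
    (hle : Nat.card G ≤ 2 * p + 9) {V : Type*} [AddCommGroup V] [Module (ZMod p) V]
    (π : P → V) (hπ : Function.Surjective π) (q : MulAut P → (V →+ V))
    (hq : ∀ g x, q g (π x) = π (g x))
    (hker : ∀ x y, π x = π y → x⁻¹ * y ∈ frattini P) :
    (∃ x : P, ∀ g ∈ G, g x = x → g = 1) ∨
    Nonempty (G ≃* DihedralGroup (p + 1)) ∨
    (p = 5 ∧ Nat.card G = 16 ∧ (¬ ∀ a b : G, a * b = b * a) ∧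
      IsCyclic (Subgroup.center G) ∧ Nat.card (Subgroup.center G) = 4 ∧
      Monoid.exponent G = 4) := by
  haveI : Finite (MulAut P) := Finite.of_injective (fun g => (g : P → P)) DFunLike.coe_injective
  letI : Fintype G := Fintype.ofFinite _
  haveI : Finite V := Finite.of_surjective π hπ
  letI : Fintype V := Fintype.ofFinite _
  obtain ⟨ρ, hρ0⟩ := exists_rho (p := p) (G := G) (fun g => (q g).toZModLinearMap p) (by
    intro v
    obtain ⟨x, rfl⟩ := hπ v
    exact hq 1 x) (by
    intro a b v
    obtain ⟨x, rfl⟩ := hπ v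
    change q (a * b) (π x) = q a (q b (π x))
    rw [hq, hq, hq]
    rfl)
  have hρ : ∀ (g : G) (x : P), ρ g (π x) = π ((g : MulAut P) x) := by
    intro g x
    rw [hρ0]
    exact hq g x
  have hinj : Function.Injective ρ := by
    rw [← MonoidHom.ker_eq_bot_iff]
    by_contra hne
    have hnt : Nontrivial ρ.ker := (Subgroup.nontrivial_iff_ne_bot _).mpr hne
    have hc1 : Nat.card ρ.ker ≠ 1 := (Finite.one_lt_card_iff_nontrivial.mpr hnt).ne'
    obtain ⟨r, hr, hrd⟩ := Nat.exists_prime_and_dvd hc1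
    haveI : Fact r.Prime := ⟨hr⟩
    obtain ⟨g, hg⟩ := exists_prime_orderOf_dvd_card' r hrd
    have hrp : r ≠ p := by
      rintro rfl
      exact hcop (hrd.trans (Subgroup.card_subgroup_dvd_card _))
    refine frat_faithful hP ((g : G) : MulAut P) ?_ hr hrp ?_
    · intro x
      apply hker
      have h3 : ρ (g : G) = 1 := g.2
      have h4 := hρ g x
      rw [h3] at h4
      exact h4
    · rw [Subgroup.orderOf_coe, Subgroup.orderOf_coe, hg]
  rcases linear_main hinj hcop hle with ⟨v, hv⟩ | h
  · left
    obtain ⟨x, rfl⟩ := hπ v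
    refine ⟨x, fun g hg hgx => ?_⟩
    have := hv ⟨g, hg⟩ (by rw [hρ]; simp only [hgx])
    exact congrArg Subtype.val this
  · exact Or.inr h

theorem reduction {p : ℕ} [hp : Fact p.Prime] {P : Type*} [Group P] [Finite P]
    (hP : IsPGroup p P) (G : Subgroup (MulAut P)) (hcop : ¬ p ∣ Nat.card G)
    (hle : Nat.card G ≤ 2 * p + 9) :
    (∃ x : P, ∀ g ∈ G, g x = x → g = 1) ∨
    Nonempty (G ≃* DihedralGroup (p + 1)) ∨
    (p = 5 ∧ Nat.card G = 16 ∧ (¬ ∀ a b : G, a * b = b * a) ∧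
      IsCyclic (Subgroup.center G) ∧ Nat.card (Subgroup.center G) = 4 ∧
      Monoid.exponent G = 4) := by
  obtain ⟨h1, h2⟩ := frat_quot hP
  letI : CommGroup (P ⧸ frattini P) := { mul_comm := h1 }
  let q : MulAut P → (P ⧸ frattini P →* P ⧸ frattini P) := fun g =>
    QuotientGroup.map (frattini P) (frattini P) (g : P ≃* P).toMonoidHom (frat_map g)
  letI : Module (ZMod p) (Additive (P ⧸ frattini P)) :=
    AddCommGroup.zmodModule (fun x => h2 x.toMul)
  exact reduction_aux (V := Additive (P ⧸ frattini P)) hP G hcop hle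
    (fun x => Additive.ofMul (x : P ⧸ frattini P))
    (fun v => QuotientGroup.mk_surjective v.toMul) (fun g => MonoidHom.toAdditive (q g))
    (fun g x => rfl) (fun x y h => QuotientGroup.eq.mp h)

end
end RegOrb

/-- Main theorem: if `G` is a `p'`-automorphism group of a finite `p`-group `P` with
`|G| ≤ 2p + 9`, then either `G` has a regular orbit on `P`, or `G ≅ D_{2p+2}`,
or `p = 5` and `G ≅ D₈ ∗ C₄` (the unique nonabelian group of order 16 with cyclic
center of order 4 and exponent 4). -/
theorem regular_orbit_of_le_two_mul_add_nine
    (p : ℕ) (hp : p.Prime) (P : Type*) [Group P] [Finite P] (hP : IsPGroup p P)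
    (G : Subgroup (MulAut P)) (hcop : ¬ p ∣ Nat.card G)
    (hle : Nat.card G ≤ 2 * p + 9) :
    (∃ x : P, ∀ g ∈ G, g x = x → g = 1) ∨
    Nonempty (G ≃* DihedralGroup (p + 1)) ∨
    (p = 5 ∧ Nat.card G = 16 ∧ (¬ ∀ a b : G, a * b = b * a) ∧
      IsCyclic (Subgroup.center G) ∧ Nat.card (Subgroup.center G) = 4 ∧
      Monoid.exponent G = 4) := by
  haveI : Fact p.Prime := ⟨hp⟩
  exact RegOrb.reduction hP G hcop hle
end

section
/- For every odd prime p there exists a faithful action of the dihedral group D_{2p+2} of order 2p + 2 on an elementary abelian group P of order p² (a 2-dimensional vector space over F_p, acting by linear automorphisms) such that D_{2p+2} has no regular orbit on P, i.e. every point of P has nontrivial stabilizer. -/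
theorem exists_char_aux (p : ℕ) [Fact p.Prime] :
    ∃ c : ZMod (p + 1) → GaloisField p 2,
      (∀ i j, c (i + j) = c i * c j) ∧ (∀ i, c i = 1 ↔ i = 0) ∧ (∀ i, c i ^ p = c (-i)) ∧
      (∀ x : GaloisField p 2, x ≠ 0 → ∃ i, c i * x = x ^ p) ∧
      (∃ x : GaloisField p 2, x ^ p ≠ x) := by
  have hp : 2 ≤ p := (Fact.out : p.Prime).two_le
  obtain ⟨g, hg⟩ := IsCyclic.exists_generator (α := (GaloisField p 2)ˣ)
  have hcard : Nat.card (GaloisField p 2)ˣ = (p - 1) * (p + 1) := by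
    rw [Nat.card_units, GaloisField.card p 2 (by norm_num)]
    obtain ⟨k, rfl⟩ : ∃ k, p = k + 1 := ⟨p - 1, by omega⟩
    simp only [Nat.add_sub_cancel]
    rw [Nat.sub_eq_iff_eq_add (Nat.one_le_pow _ _ (by omega))]
    ring
  have hog : orderOf g = (p - 1) * (p + 1) := by
    rw [orderOf_eq_card_of_forall_mem_zpowers hg, hcard]
  have hz : orderOf (g ^ (p - 1)) = p + 1 := by
    rw [orderOf_pow_of_dvd (by omega) (by rw [hog]; exact Dvd.intro _ rfl), hog]
    exact Nat.mul_div_cancel_left _ (by omega)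
  have hpp : p - 1 + 1 = p := by omega
  generalize hζ : g ^ (p - 1) = z at hz
  have hz1 : z ^ (p + 1) = 1 := orderOf_dvd_iff_pow_eq_one.1 (by rw [hz])
  have hcast : ∀ k : ℕ, z ^ ((k : ZMod (p + 1)).val) = z ^ k := by
    intro k
    rw [pow_eq_pow_iff_modEq, hz, ZMod.val_natCast]
    exact Nat.mod_modEq _ _
  have hadd : ∀ i j : ZMod (p + 1), z ^ (i + j).val = z ^ i.val * z ^ j.val := by
    intro i j
    rw [← pow_add, ← hcast (i.val + j.val)]
    simp
  have hone : ∀ i : ZMod (p + 1), z ^ i.val = 1 ↔ i = 0 := by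
    intro i
    rw [← orderOf_dvd_iff_pow_eq_one, hz]
    constructor
    · intro h
      have := Nat.eq_zero_of_dvd_of_lt h (ZMod.val_lt i)
      exact (ZMod.val_eq_zero i).1 this
    · rintro rfl; simp
  refine ⟨fun i => ((z ^ i.val : (GaloisField p 2)ˣ) : GaloisField p 2), ?_, ?_, ?_, ?_, ?_⟩
  · intro i j
    beta_reduce
    rw [hadd, Units.val_mul]
  · intro i
    rw [← hone i, Units.val_eq_one]
  · intro i
    rw [← Units.val_pow_eq_pow_val, Units.val_inj]
    apply mul_right_cancel (b := z ^ i.val)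
    rw [← pow_succ, ← hadd, neg_add_cancel, ← pow_mul, mul_comm, pow_mul, hz1]
    simp
  · intro x hx
    obtain ⟨k, hk⟩ := (Submonoid.mem_powers_iff _ _).1
      ((mem_powers_iff_mem_zpowers).2 (hg (Units.mk0 x hx)))
    refine ⟨(k : ZMod (p + 1)), ?_⟩
    have hx' : x = ((g ^ k : (GaloisField p 2)ˣ) : GaloisField p 2) := by rw [hk]; rfl
    beta_reduce
    rw [hcast, hx', ← Units.val_mul, ← Units.val_pow_eq_pow_val, Units.val_inj, ← hζ]
    rw [← pow_mul, ← pow_mul, ← pow_add]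
    congr 1
    calc (p - 1) * k + k = k * (p - 1 + 1) := by ring
      _ = k * p := by rw [hpp]
  · refine ⟨g, fun h => ?_⟩
    rw [← Units.val_pow_eq_pow_val, Units.val_inj] at h
    have h0 : g ^ p = z * g := by rw [← hζ, ← pow_succ, hpp]
    rw [h0] at h
    have h1 : z = 1 := by simpa using h
    rw [h1, orderOf_one] at hz
    omega

/-- For every odd prime `p` the dihedral group `D_{2p+2}` of order `2p + 2` acts
faithfully by linear automorphisms on a 2-dimensional vector space over `F_p`
(an elementary abelian group of order `p²`) without a regular orbit: every point
has nontrivial stabilizer. -/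
theorem dihedral_faithful_action_without_regular_orbit
    (p : ℕ) [Fact p.Prime] (hodd : Odd p) :
    ∃ φ : DihedralGroup (p + 1) →* ((Fin 2 → ZMod p) ≃ₗ[ZMod p] (Fin 2 → ZMod p)),
      Function.Injective φ ∧
      ∀ v : Fin 2 → ZMod p, ∃ g : DihedralGroup (p + 1), g ≠ 1 ∧ φ g v = v := by
  obtain ⟨c, hadd, hone, hpow, hex, y, hy⟩ := exists_char_aux p
  have hc0 : c 0 = 1 := (hone 0).2 rfl
  let σ : GaloisField p 2 →ₗ[ZMod p] GaloisField p 2 :=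
    (FiniteField.frobeniusAlgHom (ZMod p) (GaloisField p 2)).toLinearMap
  have hσ : ∀ x, σ x = x ^ p := fun x => by
    simp [σ, FiniteField.coe_frobeniusAlgHom, ZMod.card]
  have hfin : Module.finrank (ZMod p) (GaloisField p 2) = 2 := GaloisField.finrank p (by norm_num)
  have hpp : ∀ x : GaloisField p 2, (x ^ p) ^ p = x := fun x => by
    have := Fintype.ofFinite (GaloisField p 2)
    have h := FiniteField.pow_card x
    rw [← Nat.card_eq_fintype_card, GaloisField.card p 2 (by norm_num)] at h
    rw [← pow_mul, ← sq, h]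
  let a : DihedralGroup (p + 1) → Module.End (ZMod p) (GaloisField p 2) := fun g =>
    match g with
    | .r i => LinearMap.mulLeft (ZMod p) (c i)
    | .sr i => LinearMap.mulLeft (ZMod p) (c (-i)) ∘ₗ σ
  have har : ∀ i x, a (.r i) x = c i * x := fun i x => rfl
  have hasr : ∀ i x, a (.sr i) x = c (-i) * x ^ p := fun i x => by
    rw [← hσ]; rfl
  let A : DihedralGroup (p + 1) →* Module.End (ZMod p) (GaloisField p 2) :=
    { toFun := a
      map_one' := by
        ext x
        rw [DihedralGroup.one_def, har, hc0]; simp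
      map_mul' := by
        rintro (i | i) (j | j) <;> refine LinearMap.ext fun x => ?_ <;>
          rw [Module.End.mul_apply]
        · rw [DihedralGroup.r_mul_r, har, har, har, hadd, mul_assoc]
        · rw [DihedralGroup.r_mul_sr, hasr, har, hasr, ← mul_assoc, ← hadd]
          congr 2; ring
        · rw [DihedralGroup.sr_mul_r, hasr, har, hasr, mul_pow, hpow, ← mul_assoc, ← hadd]
          congr 2; ring
        · rw [DihedralGroup.sr_mul_sr, hasr, har, hasr, mul_pow, hpow, hpp, ← mul_assoc, ← hadd]
          congr 2; ring }
  have hA : ∀ g x, A g x = a g x := fun g x => rfl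
  let e : GaloisField p 2 ≃ₗ[ZMod p] (Fin 2 → ZMod p) :=
    LinearEquiv.ofFinrankEq _ _ (by rw [hfin]; simp)
  let B : DihedralGroup (p + 1) →* Module.End (ZMod p) (Fin 2 → ZMod p) :=
    { toFun := fun g => e.conj (A g)
      map_one' := by ext; simp
      map_mul' := fun g h => by ext; simp [LinearEquiv.conj_apply] }
  let φ := (LinearMap.GeneralLinearGroup.generalLinearEquiv (ZMod p)
    (Fin 2 → ZMod p)).toMonoidHom.comp B.toHomUnits
  have hφ : ∀ g v, φ g v = e (a g (e.symm v)) := fun g v => rfl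
  refine ⟨φ, ?_, ?_⟩
  · rw [injective_iff_map_eq_one]
    intro g hg
    have key : ∀ x, a g x = x := fun x => by
      have := hφ g (e x)
      rw [hg] at this
      simpa using this.symm
    rcases g with i | i
    · have h1 := key 1
      rw [har, mul_one, hone] at h1
      rw [h1, DihedralGroup.one_def]
    · have h1 := key 1
      rw [hasr, one_pow, mul_one] at h1
      have h2 := key y
      rw [hasr, h1, one_mul] at h2
      exact absurd h2 hy
  · intro v
    by_cases hv : e.symm v = 0
    · refine ⟨.sr 0, by rw [DihedralGroup.one_def]; exact fun h => DihedralGroup.noConfusion rfl (heq_of_eq h), ?_⟩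
      have : v = 0 := by simpa using hv
      rw [this, map_zero]
    · obtain ⟨i, hi⟩ := hex _ hv
      refine ⟨.sr i, by rw [DihedralGroup.one_def]; exact fun h => DihedralGroup.noConfusion rfl (heq_of_eq h), ?_⟩
      rw [hφ, hasr, ← hi, ← mul_assoc, ← hadd, neg_add_cancel, hc0, one_mul, e.apply_symm_apply]
end

section
/- Let F be a finite field with q elements, let V be a finite-dimensional vector space over F, and let G be a nontrivial finite subgroup of GL(V). If G has no regular orbit on V (i.e. every v ∈ V has nontrivial stabilizer in G), then the number of subgroups of G of prime order is at least q + 1. -/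
/-- The fixed space of a subgroup of a linear group. -/
def fixedSpaceOf {F V : Type*} [Field F] [AddCommGroup V] [Module F V]
    {G : Subgroup (LinearMap.GeneralLinearGroup F V)} (M : Subgroup G) : Submodule F V where
  carrier := {v | ∀ g ∈ M, ((g : LinearMap.GeneralLinearGroup F V) : V →ₗ[F] V) v = v}
  add_mem' := by
    intro a b ha hb g hg
    rw [map_add, ha g hg, hb g hg]
  zero_mem' := by
    intro g _
    exact map_zero _
  smul_mem' := by
    intro c x hx g hg
    rw [map_smul, hx g hg]

/-- `q` proper subspaces do not cover a finite vector space. -/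
lemma card_cover_bound {F V ι : Type*} [Field F] [Fintype F] [AddCommGroup V] [Module F V]
    [FiniteDimensional F V] [Finite ι] (W : ι → Submodule F V) (hW : ∀ i, W i ≠ ⊤)
    (hc : ∀ v, ∃ i, v ∈ W i) : Fintype.card F + 1 ≤ Nat.card ι := by
  classical
  have := Fintype.ofFinite ι
  have : Finite V := Module.finite_of_finite F
  have := Fintype.ofFinite V
  have hq : 1 < Fintype.card F := Fintype.one_lt_card
  obtain ⟨i0, -⟩ := hc 0
  have hlt : ∀ i, Module.finrank F (W i) < Module.finrank F V := fun i =>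
    Submodule.finrank_lt (hW i)
  obtain ⟨d, hd⟩ : ∃ d, Module.finrank F V = d + 1 :=
    Nat.exists_eq_succ_of_ne_zero (by have := hlt i0; omega)
  have hV : Fintype.card V = Fintype.card F ^ (d + 1) := by
    rw [← hd]; exact Module.card_eq_pow_finrank
  have hWc : ∀ i, Fintype.card (W i) ≤ Fintype.card F ^ d := by
    intro i
    rw [Module.card_eq_pow_finrank (K := F)]
    exact Nat.pow_le_pow_right (by omega) (by have := hlt i; omega)
  have hsub : (Finset.univ : Finset V).erase 0 ⊆
      Finset.univ.biUnion (fun i => (Finset.univ.filter (· ∈ W i)).erase 0) := by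
    intro v hv
    obtain ⟨i, hi⟩ := hc v
    simp only [Finset.mem_biUnion, Finset.mem_erase, Finset.mem_filter, Finset.mem_univ,
      true_and, and_true] at hv ⊢
    exact ⟨i, hv, hi⟩
  have h1 := (Finset.card_le_card hsub).trans Finset.card_biUnion_le
  have h2 : ∑ i : ι, ((Finset.univ.filter (· ∈ W i)).erase 0).card
      ≤ ∑ _i : ι, (Fintype.card F ^ d - 1) := by
    refine Finset.sum_le_sum fun i _ => ?_
    rw [Finset.card_erase_of_mem (by simp), ← Fintype.card_subtype]
    exact Nat.sub_le_sub_right (hWc i) 1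
  have h3 := h1.trans h2
  rw [Finset.card_erase_of_mem (by simp), Finset.card_univ, hV, Finset.sum_const,
    Finset.card_univ, smul_eq_mul] at h3
  rw [Nat.card_eq_fintype_card]
  by_contra hcon
  have h4 : Fintype.card ι ≤ Fintype.card F := by omega
  have h5 := h3.trans (Nat.mul_le_mul_right _ h4)
  have hpos : 0 < Fintype.card F ^ d := by positivity
  have hge : Fintype.card F ≤ Fintype.card F * Fintype.card F ^ d := Nat.le_mul_of_pos_right _ hpos
  rw [Nat.mul_sub, mul_one, pow_succ'] at h5
  omega

/-- If a nontrivial finite subgroup `G` of `GL(V)`, `V` a finite-dimensional vector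
space over a finite field `F` with `q` elements, has no regular orbit on `V`, then
`G` has at least `q + 1` subgroups of prime order (minimal subgroups). -/
theorem card_minimal_subgroups_of_no_regular_orbit
    (F : Type*) [Field F] [Fintype F]
    (V : Type*) [AddCommGroup V] [Module F V] [FiniteDimensional F V]
    (G : Subgroup (LinearMap.GeneralLinearGroup F V)) (hG : G ≠ ⊥)
    (hno : ∀ v : V, ∃ g ∈ G, g ≠ 1 ∧ (g : V →ₗ[F] V) v = v) :
    Fintype.card F + 1 ≤ Nat.card {M : Subgroup G // (Nat.card M).Prime} := by
  classical
  have : Finite V := Module.finite_of_finite F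
  have : Finite (V →ₗ[F] V) := Finite.of_injective _ DFunLike.coe_injective
  have : Finite (LinearMap.GeneralLinearGroup F V) := Finite.of_injective _ Units.val_injective
  refine card_cover_bound
    (fun M : {M : Subgroup G // (Nat.card M).Prime} => fixedSpaceOf M.1) ?_ ?_
  · rintro ⟨M, hM⟩ htop
    have hne : M ≠ ⊥ := by
      rintro rfl
      rw [Subgroup.card_bot] at hM
      exact Nat.not_prime_one hM
    apply hne
    rw [Subgroup.eq_bot_iff_forall]
    intro g hg
    apply Subtype.ext
    apply Units.ext
    apply LinearMap.ext
    intro v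
    have hv : v ∈ fixedSpaceOf M := by
      change fixedSpaceOf M = ⊤ at htop
      rw [htop]; trivial
    exact hv g hg
  · intro v
    obtain ⟨g, hg, hg1, hgv⟩ := hno v
    let S := MulAction.stabilizer G v
    have hgS : (⟨g, hg⟩ : G) ∈ S := hgv
    have hS : Nat.card S ≠ 1 := by
      rw [Ne, Subgroup.card_eq_one, Subgroup.eq_bot_iff_forall]
      intro h
      exact hg1 (congrArg Subtype.val (h _ hgS))
    obtain ⟨p, hp, hdvd⟩ := Nat.exists_prime_and_dvd hS
    have := Fact.mk hp
    obtain ⟨x, hx⟩ := exists_prime_orderOf_dvd_card' p hdvd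
    refine ⟨⟨Subgroup.zpowers (x : G), ?_⟩, ?_⟩
    · rw [Nat.card_zpowers, Subgroup.orderOf_coe, hx]; exact hp
    · intro h hh
      have hle : Subgroup.zpowers (x : G) ≤ S := by
        rw [Subgroup.zpowers_le]; exact x.2
      exact hle hh
end

section
/- Let p be a prime and let N be a finite subgroup of SL(n, F_p) with p ∤ |N| and |N| ≤ p². Then N has a regular orbit on the natural module F_p^n, i.e. there exists v ∈ F_p^n with trivial stabilizer in N. -/
/-- If `g - 1` has range in a line, `det g = 1`, `g ^ m = 1`, `p ∤ m`, then `g = 1`. -/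
lemma eq_one_of_vecMulVec {p n : ℕ} [Fact p.Prime] (A : Matrix (Fin n) (Fin n) (ZMod p))
    (u w : Fin n → ZMod p) (hA : A = 1 + Matrix.vecMulVec u w) (hdet : A.det = 1)
    (m : ℕ) (hm : ¬ p ∣ m) (hpow : A ^ m = 1) : A = 1 := by
  have h0 : w ⬝ᵥ u = 0 := by
    have h1 := Matrix.det_one_add_replicateCol_mul_replicateRow (ι := Unit) u w
    rw [← Matrix.vecMulVec_eq, ← hA, hdet] at h1
    simpa using h1
  have hsq : Matrix.vecMulVec u w * Matrix.vecMulVec u w = 0 := by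
    rw [Matrix.vecMulVec_mul_vecMulVec, h0]
    ext i j
    simp [Matrix.vecMulVec]
  have hk : ∀ k : ℕ, A ^ k = 1 + k • Matrix.vecMulVec u w := by
    intro k
    induction k with
    | zero => simp
    | succ k ih =>
      rw [pow_succ, ih, hA, mul_add, mul_one, add_mul, one_mul, smul_mul_assoc, hsq, succ_nsmul,
        smul_zero, add_zero, add_assoc]
  have h2 := hk m
  rw [hpow] at h2
  have h3 : m • Matrix.vecMulVec u w = 0 := by simpa using h2
  have h4 : (m : ZMod p) ≠ 0 := by
    rwa [Ne, ZMod.natCast_eq_zero_iff]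
  have h5 : Matrix.vecMulVec u w = 0 := by
    rw [← Nat.cast_smul_eq_nsmul (ZMod p)] at h3
    exact (smul_eq_zero.mp h3).resolve_left h4
  rw [hA, h5, add_zero]

lemma two_le_finrank_range {p n : ℕ} [Fact p.Prime] (A : Matrix (Fin n) (Fin n) (ZMod p))
    (hdet : A.det = 1) (m : ℕ) (hm : ¬ p ∣ m) (hpow : A ^ m = 1) (hA : A ≠ 1) :
    2 ≤ Module.finrank (ZMod p) (LinearMap.range (Matrix.mulVecLin (A - 1))) := by
  by_contra hlt
  have hle : Module.finrank (ZMod p) (LinearMap.range (Matrix.mulVecLin (A - 1))) ≤ 1 := by omega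
  obtain ⟨u, hu⟩ := finrank_le_one_iff.mp hle
  have hc : ∀ j : Fin n, ∃ c : ZMod p, c • (u : Fin n → ZMod p) = (A - 1).col j := by
    intro j
    obtain ⟨c, hc⟩ := hu ⟨Matrix.mulVecLin (A - 1) (Pi.single j 1), LinearMap.mem_range_self _ _⟩
    refine ⟨c, ?_⟩
    have := congrArg Subtype.val hc
    rw [← Matrix.mulVec_single_one]
    exact this
  choose w hw using hc
  apply hA
  refine eq_one_of_vecMulVec A u w ?_ hdet m hm hpow
  rw [← sub_eq_iff_eq_add']
  ext i j
  have := congrFun (hw j) i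
  simp only [Pi.smul_apply, smul_eq_mul, Matrix.col_apply] at this
  rw [← this, Matrix.vecMulVec_apply, mul_comm]

lemma card_fixed_le {p n : ℕ} [Fact p.Prime] (A : Matrix (Fin n) (Fin n) (ZMod p))
    (hdet : A.det = 1) (m : ℕ) (hm : ¬ p ∣ m) (hpow : A ^ m = 1) (hA : A ≠ 1) :
    p ^ 2 * Nat.card {v : Fin n → ZMod p // A.mulVec v = v} ≤ p ^ n := by
  have h2 := two_le_finrank_range A hdet m hm hpow hA
  have hrn := LinearMap.finrank_range_add_finrank_ker (Matrix.mulVecLin (A - 1))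
  rw [Module.finrank_fin_fun] at hrn
  have hcard : Nat.card {v : Fin n → ZMod p // A.mulVec v = v} =
      Nat.card (LinearMap.ker (Matrix.mulVecLin (A - 1))) := by
    refine Nat.card_congr (Equiv.subtypeEquivRight fun v => ?_)
    rw [LinearMap.mem_ker, Matrix.mulVecLin_apply, Matrix.sub_mulVec, Matrix.one_mulVec,
      sub_eq_zero]
  have hp : 0 < p := (Fact.out : p.Prime).pos
  rw [hcard, Module.natCard_eq_pow_finrank (K := ZMod p), Nat.card_zmod, ← pow_add]
  exact Nat.pow_le_pow_right hp (by omega)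

/-- A finite subgroup `N ≤ SL(n, F_p)` with `p ∤ |N|` and `|N| ≤ p²` has a regular
orbit on the natural module `F_p^n`. -/
theorem regular_orbit_of_sl_subgroup
    (p n : ℕ) [Fact p.Prime]
    (N : Subgroup (Matrix.SpecialLinearGroup (Fin n) (ZMod p)))
    (hcop : ¬ p ∣ Nat.card N) (hle : Nat.card N ≤ p ^ 2) :
    ∃ v : Fin n → ZMod p, ∀ g ∈ N,
      Matrix.mulVec (g : Matrix (Fin n) (Fin n) (ZMod p)) v = v → g = 1 := by
  classical
  by_contra! hcon
  have hp : 0 < p := (Fact.out : p.Prime).pos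
  have : Fintype N := Fintype.ofFinite N
  let F : N → Finset (Fin n → ZMod p) := fun g =>
    Finset.univ.filter fun v => Matrix.mulVec (g.1 : Matrix (Fin n) (Fin n) (ZMod p)) v = v
  have hF : ∀ g ∈ (Finset.univ : Finset N).erase 1, p ^ 2 * (F g).card ≤ p ^ n := by
    intro g hg
    have h1 := card_fixed_le (g.1 : Matrix (Fin n) (Fin n) (ZMod p)) g.1.2 (Nat.card N) hcop
      (by
        have h : g ^ Nat.card N = 1 := pow_card_eq_one'
        have h' := congrArg (fun x : N =>
          (x.1 : Matrix (Fin n) (Fin n) (ZMod p))) h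
        simp only [SubmonoidClass.coe_pow, Matrix.SpecialLinearGroup.coe_pow, OneMemClass.coe_one,
          Matrix.SpecialLinearGroup.coe_one] at h'
        exact h')
      (by
        intro h
        apply (Finset.mem_erase.mp hg).1
        apply Subtype.ext
        apply Subtype.ext
        simpa using h)
    rwa [Nat.card_eq_fintype_card, Fintype.card_subtype] at h1
  have hcover : (Finset.univ : Finset (Fin n → ZMod p)) ⊆
      ((Finset.univ : Finset N).erase 1).biUnion F := by
    intro v _
    obtain ⟨g, hg, hv, hne⟩ := hcon v
    refine Finset.mem_biUnion.mpr ⟨⟨g, hg⟩, ?_, ?_⟩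
    · simpa [Subtype.ext_iff] using hne
    · simpa [F] using hv
  have hV : (Finset.univ : Finset (Fin n → ZMod p)).card = p ^ n := by
    simp [ZMod.card]
  have h1 := (Finset.card_le_card hcover).trans Finset.card_biUnion_le
  rw [hV] at h1
  have h2 : p ^ 2 * p ^ n ≤ (Nat.card N - 1) * p ^ n := by
    calc p ^ 2 * p ^ n ≤ p ^ 2 * ∑ g ∈ (Finset.univ : Finset N).erase 1, (F g).card :=
          Nat.mul_le_mul_left _ h1
      _ = ∑ g ∈ (Finset.univ : Finset N).erase 1, p ^ 2 * (F g).card := Finset.mul_sum _ _ _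
      _ ≤ ((Finset.univ : Finset N).erase 1).card • p ^ n := Finset.sum_le_card_nsmul _ _ _ hF
      _ = (Nat.card N - 1) * p ^ n := by
          rw [Finset.card_erase_of_mem (Finset.mem_univ _), Finset.card_univ,
            Nat.card_eq_fintype_card, smul_eq_mul]
  have h3 := Nat.le_of_mul_le_mul_right h2 (pow_pos hp n)
  have h4 : 0 < p ^ 2 := pow_pos hp 2
  omega
end

section
/- Let k be a field and let A be a finite abelian subgroup of SL(2, k) whose order is not divisible by the characteristic of k. Then A is cyclic. -/
open Matrix in
lemma aux_common {K : Type*} [Field K] [IsAlgClosed K] {ι : Type*}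
    (ρ : ι → Matrix (Fin 2) (Fin 2) K) (hc : ∀ a b, ρ a * ρ b = ρ b * ρ a) :
    ∃ v : Fin 2 → K, v ≠ 0 ∧ ∀ a, ∃ c : K, ρ a *ᵥ v = c • v := by
  by_cases h : ∀ a, ∃ c : K, ρ a = c • (1 : Matrix (Fin 2) (Fin 2) K)
  · refine ⟨fun _ => 1, fun h0 => one_ne_zero (congrFun h0 0), fun a => ?_⟩
    obtain ⟨c, hc⟩ := h a
    exact ⟨c, by rw [hc, smul_mulVec, one_mulVec]⟩
  · push Not at h
    obtain ⟨a, ha⟩ := h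
    obtain ⟨μ, hμ⟩ := Module.End.exists_eigenvalue (Matrix.toLin' (ρ a))
    obtain ⟨v, hv⟩ := hμ.exists_hasEigenvector
    have hv1 : ρ a *ᵥ v = μ • v := by simpa using hv.apply_eq_smul
    have hv0 : v ≠ 0 := hv.2
    refine ⟨v, hv0, fun b => ?_⟩
    have hw : ρ a *ᵥ (ρ b *ᵥ v) = μ • (ρ b *ᵥ v) := by
      rw [mulVec_mulVec, hc, ← mulVec_mulVec, hv1, mulVec_smul]
    generalize ρ b *ᵥ v = w at hw
    have e1 := congrFun hv1 0
    have e2 := congrFun hv1 1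
    have e3 := congrFun hw 0
    have e4 := congrFun hw 1
    simp only [mulVec, dotProduct, Fin.sum_univ_two, Pi.smul_apply, smul_eq_mul] at e1 e2 e3 e4
    have hD : v 0 * w 1 - v 1 * w 0 = 0 := by
      by_contra hD
      apply ha μ
      have h00 : ρ a 0 0 = μ := by
        apply mul_right_cancel₀ hD; linear_combination w 1 * e1 - v 1 * e3
      have h01 : ρ a 0 1 = 0 := by
        apply mul_right_cancel₀ hD; linear_combination v 0 * e3 - w 0 * e1
      have h10 : ρ a 1 0 = 0 := by
        apply mul_right_cancel₀ hD; linear_combination w 1 * e2 - v 1 * e4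
      have h11 : ρ a 1 1 = μ := by
        apply mul_right_cancel₀ hD; linear_combination v 0 * e4 - w 0 * e2
      ext i j
      fin_cases i <;> fin_cases j <;> simp [h00, h01, h10, h11]
    by_cases h0 : v 0 = 0
    · have h1 : v 1 ≠ 0 := by
        intro h1; apply hv0; ext i; fin_cases i <;> simp [h0, h1]
      refine ⟨w 1 / v 1, ?_⟩
      ext i
      fin_cases i
      · simp; field_simp; linear_combination -hD
      · simp; field_simp
    · refine ⟨w 0 / v 0, ?_⟩
      ext i
      fin_cases i
      · simp; field_simp
      · simp; field_simp; linear_combination hD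

open Matrix in
lemma aux_unip {K : Type*} [Field K] (M : Matrix (Fin 2) (Fin 2) K) (hdet : M.det = 1)
    (v : Fin 2 → K) (hv : v ≠ 0) (hM : M *ᵥ v = v) (n : ℕ) (hn : (n : K) ≠ 0)
    (hp : M ^ n = 1) : M = 1 := by
  have hd : (M - 1).det = 0 := by
    apply exists_mulVec_eq_zero_iff.1
    exact ⟨v, hv, by rw [sub_mulVec, hM, one_mulVec, sub_self]⟩
  rw [det_fin_two] at hdet hd
  simp at hd
  have hsq : (M - 1) * (M - 1) = 0 := by
    ext i j
    fin_cases i <;> fin_cases j <;> simp [mul_apply, Fin.sum_univ_two]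
    · linear_combination (M 0 0 - 1) * (hdet - hd) - hd
    · linear_combination (M 0 1) * (hdet - hd)
    · linear_combination (M 1 0) * (hdet - hd)
    · linear_combination (M 1 1 - 1) * (hdet - hd) - hd
  have key : ∀ m : ℕ, M ^ m = 1 + (m : K) • (M - 1) := by
    intro m
    induction m with
    | zero => simp
    | succ m ih =>
      have : M ^ (m + 1) = (1 + (m : K) • (M - 1)) * (1 + (M - 1)) := by
        rw [pow_succ, ih]; simp
      rw [this, mul_add, add_mul _ _ (M - 1), smul_mul_assoc, hsq]
      push_cast
      rw [add_smul]; simp; abel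
  have := key n
  rw [hp] at this
  have h2 : (n : K) • (M - 1) = 0 := by simpa using this
  exact sub_eq_zero.1 ((smul_eq_zero.1 h2).resolve_left hn)

/-- A finite abelian subgroup of `SL(2, k)` whose order is not divisible by the
characteristic of the field `k` is cyclic. -/
theorem abelian_sl2_subgroup_isCyclic
    (k : Type*) [Field k]
    (A : Subgroup (Matrix.SpecialLinearGroup (Fin 2) k)) [Finite A]
    (hab : ∀ a b : A, a * b = b * a)
    (hcop : ¬ ringChar k ∣ Nat.card A) :
    IsCyclic A := by
  let K := AlgebraicClosure k
  let F : A →* Matrix.SpecialLinearGroup (Fin 2) K :=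
    (Matrix.SpecialLinearGroup.map (algebraMap k K)).comp A.subtype
  let ρ : A → Matrix (Fin 2) (Fin 2) K := fun a => (F a : Matrix (Fin 2) (Fin 2) K)
  have ρmul : ∀ a b, ρ (a * b) = ρ a * ρ b := fun a b => by simp [ρ]
  have ρone : ρ 1 = 1 := by simp [ρ]
  have ρpow : ∀ a (n : ℕ), ρ (a ^ n) = ρ a ^ n := fun a n => by simp [ρ]
  have ρinj : ∀ a, ρ a = 1 → a = 1 := by
    intro a ha
    apply Subtype.ext
    apply Subtype.ext
    apply Matrix.map_injective (algebraMap k K).injective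
    change ρ a = ρ 1
    rw [ha, ρone]
  obtain ⟨v, hv, hc⟩ := aux_common ρ (fun a b => by rw [← ρmul, ← ρmul, hab])
  choose f hf using hc
  have cancel : ∀ c d : K, c • v = d • v → c = d := fun c d h => smul_left_injective K hv h
  let φ : A →* K :=
    { toFun := f
      map_one' := by
        apply cancel
        rw [← hf, ρone, Matrix.one_mulVec, one_smul]
      map_mul' := fun a b => by
        apply cancel
        rw [← hf, ρmul, ← Matrix.mulVec_mulVec, hf, Matrix.mulVec_smul, hf, smul_smul, mul_comm] }
  let : CommGroup A := { (inferInstance : Group A) with mul_comm := hab }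
  refine isCyclic_of_injective_ringHom φ ?_
  have hker : ∀ a, φ a = 1 → a = 1 := by
    intro a ha
    apply ρinj
    refine aux_unip (ρ a) (F a).2 v hv ?_ (Nat.card A) ?_ ?_
    · rw [hf]
      change φ a • v = v
      rw [ha, one_smul]
    · intro h
      apply hcop
      apply (ringChar.spec k _).1
      apply (algebraMap k K).injective
      simpa using h
    · rw [← ρpow, pow_card_eq_one', ρone]
  intro a b hab'
  have : φ (a * b⁻¹) = 1 := by
    rw [map_mul, hab', ← map_mul, mul_inv_cancel, map_one]
  exact mul_inv_eq_one.1 (hker _ this)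
end

section
/- There exists a subgroup G of GL(2, F_5) of order 16 that is nonabelian with cyclic center of order 4 and exponent 4 (so G is isomorphic to the central product D_8 ∗ C_4), such that G has no regular orbit on F_5², i.e. every vector in F_5² has nontrivial stabilizer in G. -/
namespace CentralProd

/-- Index set for the sixteen elements. -/
abbrev T := Fin 4 × Fin 2 × Fin 2

/-- The matrix `2^i D^j S^k` with `D = diag(1,-1)` and `S` the swap. -/
def mat (t : T) : Matrix (Fin 2) (Fin 2) (ZMod 5) :=
  if t.2.2 = 0 then !![2 ^ t.1.val, 0; 0, 2 ^ t.1.val * (-1) ^ t.2.1.val]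
  else !![0, 2 ^ t.1.val; 2 ^ t.1.val * (-1) ^ t.2.1.val, 0]

theorem mat_mul : ∀ a b : T, ∃ c : T, mat a * mat b = mat c := by decide +kernel

theorem mat_inv : ∀ a : T, ∃ b : T, mat a * mat b = 1 ∧ mat b * mat a = 1 := by decide +kernel

theorem mat_inj : ∀ a b : T, mat a = mat b → a = b := by decide +kernel

theorem mat_pow : ∀ a : T, mat a ^ 4 = 1 := by decide +kernel

theorem mat_center : ∀ a : T, (∀ b : T, mat a * mat b = mat b * mat a) →
    ∃ i : Fin 4, mat a = mat (1, 0, 0) ^ i.val := by decide +kernel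

theorem mat_z : ∀ b : T, mat (1, 0, 0) * mat b = mat b * mat (1, 0, 0) := by decide +kernel

theorem mat_fix : ∀ x y : ZMod 5, ∃ a : T, mat a ≠ 1 ∧ Matrix.mulVec (mat a) ![x, y] = ![x, y] := by
  decide +kernel

/-- The group. -/
def G : Subgroup (GL (Fin 2) (ZMod 5)) where
  carrier := {g | ∃ t, (g : Matrix (Fin 2) (Fin 2) (ZMod 5)) = mat t}
  one_mem' := ⟨(0, 0, 0), by decide +kernel⟩
  mul_mem' := by
    rintro a b ⟨s, hs⟩ ⟨t, ht⟩
    obtain ⟨c, hc⟩ := mat_mul s t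
    exact ⟨c, by rw [Units.val_mul, hs, ht, hc]⟩
  inv_mem' := by
    rintro a ⟨s, hs⟩
    obtain ⟨c, hc, -⟩ := mat_inv s
    exact ⟨c, Units.inv_eq_of_mul_eq_one_right (by rw [hs, hc])⟩

theorem exists_elt (t : T) : ∃ g : G, ((g : GL (Fin 2) (ZMod 5)) : Matrix (Fin 2) (Fin 2) (ZMod 5)) = mat t := by
  obtain ⟨b, h1, h2⟩ := mat_inv t
  exact ⟨⟨⟨mat t, mat b, h1, h2⟩, t, rfl⟩, rfl⟩

/-- The elements of the group. -/
noncomputable def elt (t : T) : G := (exists_elt t).choose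

theorem elt_val (t : T) : ((elt t : GL (Fin 2) (ZMod 5)) : Matrix (Fin 2) (Fin 2) (ZMod 5)) = mat t :=
  (exists_elt t).choose_spec

theorem ext' {a b : G} (h : ((a : GL (Fin 2) (ZMod 5)) : Matrix (Fin 2) (Fin 2) (ZMod 5)) =
    ((b : GL (Fin 2) (ZMod 5)) : Matrix (Fin 2) (Fin 2) (ZMod 5))) : a = b :=
  Subtype.ext (Units.ext h)

theorem elt_bij : Function.Bijective elt := by
  constructor
  · intro a b h
    apply mat_inj
    rw [← elt_val, ← elt_val, h]
  · rintro ⟨g, t, ht⟩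
    exact ⟨t, ext' (by rw [elt_val, ht])⟩

theorem elt_comm_iff (a b : T) : elt a * elt b = elt b * elt a ↔ mat a * mat b = mat b * mat a := by
  constructor
  · intro h
    have := congrArg (fun g : G => ((g : GL (Fin 2) (ZMod 5)) : Matrix (Fin 2) (Fin 2) (ZMod 5))) h
    simpa [elt_val] using this
  · intro h
    apply ext'
    simpa [elt_val] using h

theorem pow_four (g : G) : g ^ 4 = 1 := by
  obtain ⟨t, rfl⟩ := elt_bij.2 g
  apply ext'
  simpa [elt_val] using mat_pow t

theorem order_z : orderOf (elt (1, 0, 0)) = 4 := by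
  have : Fact (Nat.Prime 2) := ⟨Nat.prime_two⟩
  refine orderOf_eq_prime_pow (p := 2) (n := 1) ?_ (pow_four _)
  intro h
  have := congrArg (fun g : G => ((g : GL (Fin 2) (ZMod 5)) : Matrix (Fin 2) (Fin 2) (ZMod 5))) h
  simp only [Subgroup.coe_pow, Units.val_pow_eq_pow_val, elt_val, Subgroup.coe_one,
    Units.val_one] at this
  revert this
  decide +kernel

theorem center_eq : Subgroup.center G = Subgroup.zpowers (elt (1, 0, 0)) := by
  apply le_antisymm
  · intro g hg
    obtain ⟨t, rfl⟩ := elt_bij.2 g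
    rw [Subgroup.mem_center_iff] at hg
    obtain ⟨i, hi⟩ := mat_center t fun b => ((elt_comm_iff b t).1 (hg (elt b))).symm
    refine ⟨(i.val : ℤ), ext' ?_⟩
    simpa [elt_val] using hi.symm
  · rw [Subgroup.zpowers_le, Subgroup.mem_center_iff]
    intro g
    obtain ⟨t, rfl⟩ := elt_bij.2 g
    exact ((elt_comm_iff _ _).2 (mat_z t)).symm

end CentralProd

open CentralProd in
/-- There is a subgroup `G ≤ GL(2, F_5)` of order 16, nonabelian with cyclic center
of order 4 and exponent 4 (hence `G ≅ D₈ ∗ C₄`), having no regular orbit on `F_5²`: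
every vector has nontrivial stabilizer in `G`. -/
theorem central_product_d8_c4_in_gl2_f5_no_regular_orbit :
    ∃ G : Subgroup (GL (Fin 2) (ZMod 5)),
      Nat.card G = 16 ∧ (¬ ∀ a b : G, a * b = b * a) ∧
      IsCyclic (Subgroup.center G) ∧ Nat.card (Subgroup.center G) = 4 ∧
      Monoid.exponent G = 4 ∧
      ∀ v : Fin 2 → ZMod 5, ∃ g ∈ G, g ≠ 1 ∧
        Matrix.mulVec (g : Matrix (Fin 2) (Fin 2) (ZMod 5)) v = v := by
  refine ⟨CentralProd.G, ?_, ?_, ?_, ?_, ?_, ?_⟩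
  · rw [← Nat.card_congr (Equiv.ofBijective _ elt_bij)]
    simp
  · intro h
    have := (elt_comm_iff (0, 1, 0) (0, 0, 1)).1 (h _ _)
    revert this
    decide +kernel
  · rw [center_eq]
    infer_instance
  · rw [center_eq, Nat.card_zpowers, order_z]
  · apply Nat.dvd_antisymm
    · exact Monoid.exponent_dvd_of_forall_pow_eq_one pow_four
    · rw [← order_z]
      exact Monoid.order_dvd_exponent _
  · intro v
    obtain ⟨a, h1, h2⟩ := mat_fix (v 0) (v 1)
    have hv : v = ![v 0, v 1] := by
      ext i
      fin_cases i <;> rfl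
    refine ⟨elt a, (elt a).2, ?_, ?_⟩
    · intro h
      apply h1
      rw [← elt_val, h, Units.val_one]
    · rw [elt_val, hv]
      exact h2
end
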